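/- arXiv:math/0509527 — 3 statements merged into one kernel-verified Lean document; each statement's English description precedes it below -/
import Mathlib

section
/- Let Γ be a finitely generated group that is quasi-isometric to ℤⁿ (with its standard word metric). Then Γ has a finite index subgroup isomorphic to ℤⁿ. -/
open scoped BigOperators

noncomputable section

/-- Word length with respect to a generating set `S`. -/
def wordLength {G : Type*} [Group G] (S : Set G) (g : G) : ℕ :=
  sInf {n : ℕ | ∃ l : List G, l.length = n ∧ (∀ x ∈ l, x ∈ S) ∧ l.prod = g}

/-- The word metric on a group with generating set `S`. -/
def wordDist {G : Type*} [Group G] (S : Set G) (g h : G) : ℝ :=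
  (wordLength S (g⁻¹ * h) : ℝ)

/-- The ℓ¹ metric on `ℤⁿ` (the word metric of the standard generating set). -/
def zDist {n : ℕ} (x y : Fin n → ℤ) : ℝ :=
  ∑ i, |((x i : ℝ) - (y i : ℝ))|

/-!
A quasi-isometry `f : Γ → ℤⁿ` gives `Γ` volume growth comparable to `rⁿ`, so `Γ` is doubling and
carries an invariant mean. Averaging over `x` the inner products of the displacements
`f (x * g) - f x` produces an orthogonal representation of `Γ` on a Hilbert space, with a cocycle
`b` such that `‖b g‖` is comparable to the length of `g`. Subtracting from `b` its projection onto
the closure of the coboundaries makes it harmonic while keeping linear growth. By Kleiner's theorem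
the harmonic functions of linear growth form a finite-dimensional space (Poincaré and Caccioppoli
inequalities force the Gram determinant of a large family to shrink faster than doubling allows),
so `b` lives in a Euclidean space and `Γ` acts on it properly by isometries.

By Bieberbach's argument, commutators of isometries with small rotational part contract; hence some
finite-index subgroup acts through a nilpotent group, and the first cohomology of a nilpotent group
in a representation without invariant vectors vanishes. What remains of `b` is a homomorphism to a
vector space with finite kernel, so the subgroup has finitely many commutators and is virtually
`ℤᵐ`. Comparing growth gives `m = n`.
-/

section WordLength

variable {G : Type*} [Group G] {S : Set G}

theorem wordLength_prod_le {l : List G} (hl : ∀ x ∈ l, x ∈ S) : wordLength S l.prod ≤ l.length :=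
  Nat.sInf_le ⟨l, rfl, hl, rfl⟩

theorem wordLength_one : wordLength S (1 : G) = 0 :=
  Nat.le_zero.1 (wordLength_prod_le (l := []) (by simp))

theorem wordLength_le_one {s : G} (hs : s ∈ S) : wordLength S s ≤ 1 := by
  simpa using wordLength_prod_le (S := S) (l := [s]) (by simpa using hs)

/-- `S` is closed under inversion and generates the group. -/
structure IsSymmGenerating (S : Set G) : Prop where
  inv_eq : S⁻¹ = S
  closure_eq_top : Subgroup.closure S = ⊤

namespace IsSymmGenerating

variable (hS : IsSymmGenerating S)
include hS

theorem inv_mem {s : G} (hs : s ∈ S) : s⁻¹ ∈ S := by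
  rwa [← Set.mem_inv, hS.inv_eq]

theorem submonoid_closure_eq_top : Submonoid.closure S = ⊤ := by
  simpa [hS.inv_eq, hS.closure_eq_top] using (Subgroup.closure_toSubmonoid S).symm

theorem exists_length_eq_wordLength (g : G) :
    ∃ l : List G, l.length = wordLength S g ∧ (∀ x ∈ l, x ∈ S) ∧ l.prod = g := by
  obtain ⟨l, hl, hg⟩ :=
    Submonoid.exists_list_of_mem_closure (hS.submonoid_closure_eq_top ▸ Submonoid.mem_top g)
  exact Nat.sInf_mem
    (s := {n | ∃ l : List G, l.length = n ∧ (∀ x ∈ l, x ∈ S) ∧ l.prod = g}) ⟨_, l, rfl, hl, hg⟩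

theorem wordLength_mul_le (g h : G) : wordLength S (g * h) ≤ wordLength S g + wordLength S h := by
  obtain ⟨l, hl, hlS, rfl⟩ := hS.exists_length_eq_wordLength g
  obtain ⟨m, hm, hmS, rfl⟩ := hS.exists_length_eq_wordLength h
  rw [← hl, ← hm, ← List.prod_append, ← List.length_append]
  exact wordLength_prod_le fun x hx => (List.mem_append.1 hx).elim (hlS x) (hmS x)

theorem wordLength_inv_le (g : G) : wordLength S g⁻¹ ≤ wordLength S g := by
  obtain ⟨l, hl, hlS, rfl⟩ := hS.exists_length_eq_wordLength g
  rw [← hl, List.prod_inv_reverse]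
  refine (wordLength_prod_le fun x hx => ?_).trans (by simp)
  obtain ⟨a, ha, rfl⟩ := List.mem_map.1 (List.mem_reverse.1 hx)
  exact hS.inv_mem (hlS a ha)

theorem wordLength_inv (g : G) : wordLength S g⁻¹ = wordLength S g :=
  (hS.wordLength_inv_le g).antisymm (by simpa using hS.wordLength_inv_le g⁻¹)

end IsSymmGenerating

end WordLength

section WordBall

open scoped Pointwise

variable {G : Type*} [Group G] {S : Finset G}

open Classical in
/-- The ball of radius `r` about `1` in the word metric, as the set of products of `r` factors
in `S ∪ {1}`. -/
def wordBall (S : Finset G) (r : ℕ) : Finset G :=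
  insert 1 S ^ r

theorem mem_wordBall_zero {g : G} : g ∈ wordBall S 0 ↔ g = 1 := by
  classical
  rw [wordBall, pow_zero, Finset.mem_one]

theorem mem_wordBall_succ {g : G} {r : ℕ} :
    g ∈ wordBall S (r + 1) ↔ ∃ x ∈ wordBall S r, g = x ∨ ∃ s ∈ S, g = x * s := by
  classical
  simp only [wordBall, pow_succ, Finset.mem_mul, Finset.mem_insert]
  aesop

theorem wordBall_mono : Monotone (wordBall S) := fun _ _ h => by
  classical
  exact Finset.pow_subset_pow_right (Finset.mem_insert_self 1 S) h

theorem mul_mem_wordBall {x s : G} {r : ℕ} (hx : x ∈ wordBall S r) (hs : s ∈ S) :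
    x * s ∈ wordBall S (r + 1) :=
  mem_wordBall_succ.2 ⟨x, hx, Or.inr ⟨s, hs, rfl⟩⟩

theorem one_mem_wordBall (r : ℕ) : (1 : G) ∈ wordBall S r :=
  wordBall_mono (Nat.zero_le r) (mem_wordBall_zero.2 rfl)

theorem card_wordBall_pos (r : ℕ) : 0 < (wordBall S r).card :=
  Finset.card_pos.2 ⟨1, one_mem_wordBall r⟩

theorem list_prod_mem_wordBall {l : List G} (hl : ∀ x ∈ l, x ∈ S) :
    l.prod ∈ wordBall S l.length := by
  induction l using List.reverseRecOn with
  | nil => exact one_mem_wordBall 0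
  | append_singleton l s ih =>
    rw [List.prod_append, List.prod_singleton, List.length_append, List.length_singleton]
    exact mul_mem_wordBall (ih fun x hx => hl x (by simp [hx])) (hl s (by simp))

theorem IsSymmGenerating.mem_wordBall (hS : IsSymmGenerating (S : Set G)) {g : G} {r : ℕ} :
    g ∈ wordBall S r ↔ wordLength S g ≤ r := by
  refine ⟨fun hg => ?_, fun hg => ?_⟩
  · induction r generalizing g with
    | zero =>
      obtain rfl := mem_wordBall_zero.1 hg
      exact wordLength_one.le
    | succ r ih =>
      obtain ⟨x, hx, rfl | ⟨s, hs, rfl⟩⟩ := mem_wordBall_succ.1 hg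
      · exact (ih hx).trans r.le_succ
      · exact (hS.wordLength_mul_le x s).trans (add_le_add (ih hx) (wordLength_le_one hs))
  · obtain ⟨l, hl, hlS, rfl⟩ := hS.exists_length_eq_wordLength g
    exact wordBall_mono (hl ▸ hg) (list_prod_mem_wordBall hlS)

theorem mul_mem_wordBall_add {x y : G} {r t : ℕ} (hx : x ∈ wordBall S r) (hy : y ∈ wordBall S t) :
    x * y ∈ wordBall S (r + t) := by
  classical
  rw [wordBall, pow_add]
  exact Finset.mul_mem_mul hx hy

theorem IsSymmGenerating.inv_mem_wordBall (hS : IsSymmGenerating (S : Set G)) {x : G} {r : ℕ}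
    (hx : x ∈ wordBall S r) : x⁻¹ ∈ wordBall S r := by
  rwa [hS.mem_wordBall, hS.wordLength_inv, ← hS.mem_wordBall]

end WordBall

section Growth

variable {G : Type*} [Group G] {S : Finset G} {d e : ℕ}

/-- Word balls of radius `r` have `O(r ^ d)` elements. -/
def HasGrowthAtMost (S : Finset G) (d : ℕ) : Prop :=
  ∃ P : ℕ, ∀ r, (wordBall S r).card ≤ P * (r + 1) ^ d

/-- Word balls of radius `r` have at least a constant times `r ^ d` elements. -/
def HasGrowthAtLeast (S : Finset G) (d : ℕ) : Prop :=
  ∃ Q : ℕ, ∀ r, (r + 1) ^ d ≤ Q * (wordBall S r).card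

/-- Doubling the radius of a word ball multiplies its cardinality by at most `K`. -/
def IsDoubling (S : Finset G) (K : ℕ) : Prop :=
  ∀ r, (wordBall S (2 * r)).card ≤ K * (wordBall S r).card

theorem hasGrowthAtLeast_of_affine_radius {Q A B : ℕ}
    (h : ∀ t, (t + 1) ^ d ≤ Q * (wordBall S (A * t + B)).card) : HasGrowthAtLeast S d := by
  set w := A + B + 1 with hw
  refine ⟨w ^ d * (Q + 1), fun r => ?_⟩
  have hr : r + 1 ≤ w * (r / w + 1) := Nat.lt_mul_div_succ r (by omega)
  suffices key : (r / w + 1) ^ d ≤ (Q + 1) * (wordBall S r).card by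
    calc (r + 1) ^ d ≤ (w * (r / w + 1)) ^ d := by gcongr
      _ = w ^ d * (r / w + 1) ^ d := mul_pow ..
      _ ≤ w ^ d * ((Q + 1) * (wordBall S r).card) := by gcongr
      _ = _ := (mul_assoc ..).symm
  rcases Nat.eq_zero_or_pos (r / w) with h0 | hpos
  · rw [h0, zero_add, one_pow]
    exact Nat.mul_pos Q.succ_pos (card_wordBall_pos r)
  · have hradius : A * (r / w) + B ≤ r := by
      have := Nat.mul_div_le r w
      nlinarith
    calc (r / w + 1) ^ d ≤ Q * (wordBall S (A * (r / w) + B)).card := h _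
      _ ≤ (Q + 1) * (wordBall S r).card := by
        gcongr
        · exact Q.le_succ
        · exact wordBall_mono hradius

theorem HasGrowthAtLeast.le_of_hasGrowthAtMost (hd : HasGrowthAtLeast S d)
    (he : HasGrowthAtMost S e) : d ≤ e := by
  obtain ⟨Q, hQ⟩ := hd
  obtain ⟨P, hP⟩ := he
  by_contra! hlt
  set r := Q * P
  have hpow : (r + 1) ^ (e + 1) ≤ r * (r + 1) ^ e :=
    calc (r + 1) ^ (e + 1) ≤ (r + 1) ^ d := Nat.pow_le_pow_right r.succ_pos hlt
      _ ≤ Q * (P * (r + 1) ^ e) := (hQ r).trans (by gcongr; exact hP r)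
      _ = r * (r + 1) ^ e := (mul_assoc ..).symm
  rw [pow_succ'] at hpow
  exact absurd (Nat.le_of_mul_le_mul_right hpow (by positivity)) (by omega)

theorem HasGrowthAtMost.exists_isDoubling (hmost : HasGrowthAtMost S d)
    (hleast : HasGrowthAtLeast S d) : ∃ K : ℕ, IsDoubling S K := by
  obtain ⟨P, hP⟩ := hmost
  obtain ⟨Q, hQ⟩ := hleast
  refine ⟨P * 2 ^ d * Q, fun r => ?_⟩
  calc (wordBall S (2 * r)).card ≤ P * (2 * r + 1) ^ d := hP _
    _ ≤ P * (2 * (r + 1)) ^ d := by gcongr; omega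
    _ = P * 2 ^ d * (r + 1) ^ d := by rw [mul_pow, mul_assoc]
    _ ≤ P * 2 ^ d * (Q * (wordBall S r).card) := by gcongr; exact hQ r
    _ = _ := (mul_assoc ..).symm

theorem IsDoubling.one_le {K : ℕ} (hK : IsDoubling S K) : 1 ≤ K :=
  Nat.pos_of_mul_pos_right ((card_wordBall_pos (2 * 0)).trans_le (hK 0))

theorem IsDoubling.card_wordBall_two_pow_mul_le {K : ℕ} (hK : IsDoubling S K) (k r : ℕ) :
    (wordBall S (2 ^ k * r)).card ≤ K ^ k * (wordBall S r).card := by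
  induction k with
  | zero => simp
  | succ k ih =>
    calc (wordBall S (2 ^ (k + 1) * r)).card = (wordBall S (2 * (2 ^ k * r))).card := by ring_nf
      _ ≤ K * (K ^ k * (wordBall S r).card) := (hK _).trans (by gcongr)
      _ = _ := by ring

end Growth

section IntegerLattice

variable {n : ℕ}

/-- The `ℓ¹` distance `zDist`, as a natural number. -/
def zDistNat (x y : Fin n → ℤ) : ℕ :=
  ∑ i, (x i - y i).natAbs

theorem zDist_eq_zDistNat (x y : Fin n → ℤ) : zDist x y = zDistNat x y := by
  simp [zDist, zDistNat, Nat.cast_natAbs]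

theorem zDistNat_self (x : Fin n → ℤ) : zDistNat x x = 0 := by
  simp [zDistNat]

theorem natAbs_sub_le_zDistNat (x y : Fin n → ℤ) (i : Fin n) : (x i - y i).natAbs ≤ zDistNat x y :=
  Finset.single_le_sum (f := fun i => (x i - y i).natAbs) (fun _ _ => Nat.zero_le _)
    (Finset.mem_univ i)

theorem zDistNat_comm (x y : Fin n → ℤ) : zDistNat x y = zDistNat y x :=
  Finset.sum_congr rfl fun _ _ => by omega

theorem zDistNat_triangle (x y z : Fin n → ℤ) : zDistNat x z ≤ zDistNat x y + zDistNat y z := by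
  rw [zDistNat, zDistNat, zDistNat, ← Finset.sum_add_distrib]
  exact Finset.sum_le_sum fun i _ => by omega

/-- The points of `ℤⁿ` at sup-distance at most `t` from `z`. -/
def intBox (z : Fin n → ℤ) (t : ℕ) : Finset (Fin n → ℤ) :=
  Finset.Icc (z - t) (z + t)

theorem mem_intBox {z w : Fin n → ℤ} {t : ℕ} : w ∈ intBox z t ↔ ∀ i, (w i - z i).natAbs ≤ t := by
  simp only [intBox, Finset.mem_Icc, Pi.le_def, ← forall_and, Pi.sub_apply, Pi.add_apply,
    Pi.natCast_apply]
  exact forall_congr' fun i => by omega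

theorem card_intBox (z : Fin n → ℤ) (t : ℕ) : (intBox z t).card = (2 * t + 1) ^ n := by
  have hcoord (i : Fin n) : (z i + t + 1 - (z i - t)).toNat = 2 * t + 1 := by omega
  simp [intBox, Pi.card_Icc, hcoord]

theorem zDistNat_le_of_mem_intBox {z w : Fin n → ℤ} {t : ℕ} (hw : w ∈ intBox z t) :
    zDistNat w z ≤ n * t := by
  simpa [zDistNat] using Finset.sum_le_sum fun i (_ : i ∈ Finset.univ) => mem_intBox.1 hw i

end IntegerLattice

section QuasiIsometry

variable {G : Type*} [Group G] {S : Finset G} {n : ℕ} {f : G → Fin n → ℤ} {c C : ℕ}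

/-- `f` is a quasi-isometry from the word metric of `S` to the `ℓ¹` metric of `ℤⁿ`. The constants
are natural numbers, and the lower bound is solved for the word length, to avoid division. -/
structure IsQuasiIsometry (S : Finset G) (f : G → Fin n → ℤ) (c C : ℕ) : Prop where
  wordLength_le : ∀ x y, wordLength S (x⁻¹ * y) ≤ c * (zDistNat (f x) (f y) + C)
  zDistNat_le : ∀ x y, zDistNat (f x) (f y) ≤ c * wordLength S (x⁻¹ * y) + C
  coarsely_surjective : ∀ z, ∃ x, zDistNat (f x) z ≤ C

theorem isQuasiIsometry_of_real {c C : ℝ} (hc : 0 < c)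
    (hlower : ∀ x y : G, (1 / c) * wordDist (S : Set G) x y - C ≤ zDist (f x) (f y))
    (hupper : ∀ x y : G, zDist (f x) (f y) ≤ c * wordDist (S : Set G) x y + C)
    (hdense : ∀ z : Fin n → ℤ, ∃ x : G, zDist (f x) z ≤ C) : IsQuasiIsometry S f ⌈c⌉₊ ⌈C⌉₊ := by
  have hc' : c ≤ ⌈c⌉₊ := Nat.le_ceil c
  have hC' : C ≤ ⌈C⌉₊ := Nat.le_ceil C
  simp only [zDist_eq_zDistNat, wordDist] at hlower hupper hdense
  refine ⟨fun x y => ?_, fun x y => ?_, fun z => (hdense z).imp fun x hx => ?_⟩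
  · have hxy : (1 / c) * wordLength S (x⁻¹ * y) ≤ zDistNat (f x) (f y) + (⌈C⌉₊ : ℝ) := by
      linarith [hlower x y]
    rw [one_div, inv_mul_le_iff₀ hc] at hxy
    exact_mod_cast hxy.trans (mul_le_mul_of_nonneg_right hc' (by positivity))
  · have hxy : (zDistNat (f x) (f y) : ℝ) ≤ ⌈c⌉₊ * wordLength S (x⁻¹ * y) + ⌈C⌉₊ :=
      (hupper x y).trans (by gcongr)
    exact_mod_cast hxy
  · exact_mod_cast hx.trans hC'

namespace IsQuasiIsometry

variable (hf : IsQuasiIsometry S f c C)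
include hf

theorem card_fiber_le (hS : IsSymmGenerating (S : Set G)) (B : Finset G) (z : Fin n → ℤ) :
    (B.filter fun x => f x = z).card ≤ (wordBall S (c * C)).card := by
  rcases (B.filter fun x => f x = z).eq_empty_or_nonempty with hempty | ⟨x₀, hx₀⟩
  · simp [hempty]
  refine Finset.card_le_card_of_injOn (x₀⁻¹ * ·) (fun x hx => ?_) (mul_right_injective _).injOn
  have hlen := hf.wordLength_le x₀ x
  rw [(Finset.mem_filter.1 hx).2, (Finset.mem_filter.1 hx₀).2, zDistNat_self, zero_add] at hlen
  exact hS.mem_wordBall.2 hlen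

theorem hasGrowthAtMost (hS : IsSymmGenerating (S : Set G)) : HasGrowthAtMost S n := by
  refine ⟨(wordBall S (c * C)).card * (2 * (c + C) + 1) ^ n, fun r => ?_⟩
  have hmaps : ∀ x ∈ wordBall S r, f x ∈ intBox (f 1) (c * r + C) := fun x hx => by
    refine mem_intBox.2 fun i => (natAbs_sub_le_zDistNat ..).trans ((hf.zDistNat_le x 1).trans ?_)
    rw [mul_one, hS.wordLength_inv]
    gcongr
    exact hS.mem_wordBall.1 hx
  calc (wordBall S r).card ≤ (wordBall S (c * C)).card * (intBox (f 1) (c * r + C)).card :=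
        Finset.card_le_mul_card_image_of_maps_to hmaps _ fun z _ => hf.card_fiber_le hS _ z
    _ ≤ (wordBall S (c * C)).card * ((2 * (c + C) + 1) * (r + 1)) ^ n := by
        rw [card_intBox]
        gcongr
        nlinarith [Nat.zero_le (C * r)]
    _ = _ := by rw [mul_pow, mul_assoc]

theorem hasGrowthAtLeast (hS : IsSymmGenerating (S : Set G)) : HasGrowthAtLeast S n := by
  classical
  choose x hx using hf.coarsely_surjective
  have hmaps (t : ℕ) : ∀ z ∈ intBox (f 1) t, x z ∈ wordBall S (c * n * t + c * (2 * C)) := by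
    refine fun z hz => hS.mem_wordBall.2 ?_
    have hdist : zDistNat (f 1) (f (x z)) ≤ n * t + C := by
      refine (zDistNat_triangle _ z _).trans (add_le_add ?_ ?_)
      · exact zDistNat_comm (f 1) z ▸ zDistNat_le_of_mem_intBox hz
      · exact zDistNat_comm z (f (x z)) ▸ hx z
    calc wordLength S (x z) ≤ c * (zDistNat (f 1) (f (x z)) + C) := by
          simpa using hf.wordLength_le 1 (x z)
      _ ≤ c * (n * t + C + C) := by gcongr
      _ = _ := by ring
  have hfiber (B : Finset (Fin n → ℤ)) (g : G) :
      (B.filter fun z => x z = g).card ≤ (2 * C + 1) ^ n := by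
    rw [← card_intBox (f g) C]
    refine Finset.card_le_card fun z hz => mem_intBox.2 fun i => ?_
    have := (natAbs_sub_le_zDistNat (f (x z)) z i).trans (hx z)
    rw [(Finset.mem_filter.1 hz).2] at this
    omega
  refine hasGrowthAtLeast_of_affine_radius (Q := (2 * C + 1) ^ n)
    (A := c * n) (B := c * (2 * C)) fun t => ?_
  calc (t + 1) ^ n ≤ (2 * t + 1) ^ n := by gcongr; omega
    _ = (intBox (f 1) t).card := (card_intBox ..).symm
    _ ≤ _ := Finset.card_le_mul_card_image_of_maps_to (hmaps t) _ fun g _ => hfiber _ g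

end IsQuasiIsometry

end QuasiIsometry

section HarmonicFunctions

variable {G : Type*} [Group G] {S : Finset G} {u : G → ℝ} {r : ℕ}

/-- `u` is harmonic on the Cayley graph of `S`, whose edges are right multiplications by `S`. -/
def IsHarmonic (S : Finset G) (u : G → ℝ) : Prop :=
  ∀ x, ∑ s ∈ S, (u (x * s) - u x) = 0

/-- The Dirichlet energy of `u` over the edges starting in the ball of radius `r`. -/
def energy (S : Finset G) (u : G → ℝ) (r : ℕ) : ℝ :=
  ∑ x ∈ wordBall S r, ∑ s ∈ S, (u (x * s) - u x) ^ 2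

/-- The squared `ℓ²` norm of `u` on the ball of radius `r`. -/
def sqNorm (S : Finset G) (u : G → ℝ) (r : ℕ) : ℝ :=
  ∑ x ∈ wordBall S r, u x ^ 2

theorem energy_mono (u : G → ℝ) : Monotone (energy S u) := fun _ _ h =>
  Finset.sum_le_sum_of_subset_of_nonneg (wordBall_mono h) fun _ _ _ => by positivity

theorem energy_nonneg (u : G → ℝ) (r : ℕ) : 0 ≤ energy S u r := by
  unfold energy
  positivity

theorem sqNorm_mono (u : G → ℝ) : Monotone (sqNorm S u) := fun _ _ h =>
  Finset.sum_le_sum_of_subset_of_nonneg (wordBall_mono h) fun _ _ _ => sq_nonneg _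

theorem sum_add_sq_le_add_sq_mul {ι : Type*} (t : Finset ι) (a b : ι → ℝ) {p q E : ℝ} (hp : 0 ≤ p)
    (hq : 0 ≤ q) (hE : 0 ≤ E) (ha : ∑ i ∈ t, a i ^ 2 ≤ p ^ 2 * E)
    (hb : ∑ i ∈ t, b i ^ 2 ≤ q ^ 2 * E) : ∑ i ∈ t, (a i + b i) ^ 2 ≤ (p + q) ^ 2 * E := by
  have hab : ∑ i ∈ t, a i * b i ≤ p * q * E := by
    refine le_of_sq_le_sq ?_ (by positivity)
    calc (∑ i ∈ t, a i * b i) ^ 2 ≤ (∑ i ∈ t, a i ^ 2) * ∑ i ∈ t, b i ^ 2 :=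
          Finset.sum_mul_sq_le_sq_mul_sq ..
      _ ≤ (p ^ 2 * E) * (q ^ 2 * E) := by gcongr
      _ = (p * q * E) ^ 2 := by ring
  have hexpand : ∑ i ∈ t, (a i + b i) ^ 2 =
      ∑ i ∈ t, a i ^ 2 + 2 * ∑ i ∈ t, a i * b i + ∑ i ∈ t, b i ^ 2 := by
    rw [Finset.mul_sum, ← Finset.sum_add_distrib, ← Finset.sum_add_distrib]
    exact Finset.sum_congr rfl fun _ _ => by ring
  linarith

theorem sum_sq_sub_mul_le_energy (u : G → ℝ) {k : ℕ} {g s : G} (hg : g ∈ wordBall S k)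
    (hs : s ∈ S) : ∑ x ∈ wordBall S r, (u (x * g * s) - u (x * g)) ^ 2 ≤ energy S u (r + k) := by
  classical
  calc ∑ x ∈ wordBall S r, (u (x * g * s) - u (x * g)) ^ 2
      ≤ ∑ x ∈ wordBall S r, ∑ s ∈ S, (u (x * g * s) - u (x * g)) ^ 2 :=
        Finset.sum_le_sum fun x _ => Finset.single_le_sum
          (f := fun s => (u (x * g * s) - u (x * g)) ^ 2) (fun _ _ => sq_nonneg _) hs
    _ = ∑ y ∈ (wordBall S r).image (· * g), ∑ s ∈ S, (u (y * s) - u y) ^ 2 :=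
        (Finset.sum_image (f := fun y => ∑ s ∈ S, (u (y * s) - u y) ^ 2)
          (mul_left_injective g).injOn).symm
    _ ≤ energy S u (r + k) :=
        Finset.sum_le_sum_of_subset_of_nonneg
          (Finset.image_subset_iff.2 fun _ hx => mul_mem_wordBall_add hx hg)
          fun _ _ _ => by positivity

theorem sum_sq_sub_le_sq_mul_energy (u : G → ℝ) {k : ℕ} {g : G} (hg : g ∈ wordBall S k) :
    ∑ x ∈ wordBall S r, (u (x * g) - u x) ^ 2 ≤ k ^ 2 * energy S u (r + k) := by
  induction k generalizing g with
  | zero =>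
    obtain rfl := mem_wordBall_zero.1 hg
    simp
  | succ k ih =>
    have hmono : energy S u (r + k) ≤ energy S u (r + (k + 1)) := energy_mono u (by omega)
    obtain ⟨h, hh, rfl | ⟨s, hs, rfl⟩⟩ := mem_wordBall_succ.1 hg
    · refine (ih hh).trans ?_
      have := energy_nonneg (S := S) u (r + k)
      gcongr
      exact k.le_succ
    · have hlast := (sum_sq_sub_mul_le_energy u hh hs).trans hmono
      have hinit := (ih hh).trans (mul_le_mul_of_nonneg_left hmono (sq_nonneg _))
      have := sum_add_sq_le_add_sq_mul (wordBall S r) (fun x => u (x * h) - u x)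
        (fun x => u (x * h * s) - u (x * h)) (Nat.cast_nonneg k) zero_le_one (energy_nonneg u _)
        hinit (by simpa using hlast)
      simpa [mul_assoc] using this

theorem sum_sum_sq_sub {ι : Type*} (t : Finset ι) (a : ι → ℝ) (h0 : ∑ i ∈ t, a i = 0) :
    ∑ i ∈ t, ∑ j ∈ t, (a j - a i) ^ 2 = 2 * t.card * ∑ i ∈ t, a i ^ 2 := by
  have hinner (i : ι) : ∑ j ∈ t, (a j - a i) ^ 2 = ∑ j ∈ t, a j ^ 2 + t.card * a i ^ 2 := by
    simp only [sub_sq, Finset.sum_add_distrib, Finset.sum_sub_distrib, ← Finset.sum_mul,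
      ← Finset.mul_sum, h0, Finset.sum_const, nsmul_eq_mul]
    ring
  simp only [hinner, Finset.sum_add_distrib, Finset.sum_const, nsmul_eq_mul, ← Finset.mul_sum]
  ring

theorem sqNorm_le_energy_of_sum_eq_zero (hS : IsSymmGenerating (S : Set G)) {K : ℕ}
    (hK : IsDoubling S K) (u : G → ℝ) (r : ℕ) (h0 : ∑ x ∈ wordBall S r, u x = 0) :
    sqNorm S u r ≤ 2 * K * r ^ 2 * energy S u (3 * r) := by
  classical
  set B := wordBall S r
  have hpairs : ∑ x ∈ B, ∑ y ∈ B, (u y - u x) ^ 2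
      ≤ ∑ x ∈ B, ∑ g ∈ wordBall S (2 * r), (u (x * g) - u x) ^ 2 := by
    refine Finset.sum_le_sum fun x hx => ?_
    calc ∑ y ∈ B, (u y - u x) ^ 2 = ∑ g ∈ B.image (x⁻¹ * ·), (u (x * g) - u x) ^ 2 := by
          rw [Finset.sum_image (mul_right_injective x⁻¹).injOn]
          simp only [mul_inv_cancel_left]
      _ ≤ _ := by
          refine Finset.sum_le_sum_of_subset_of_nonneg (Finset.image_subset_iff.2 fun y hy => ?_)
            fun _ _ _ => sq_nonneg _
          exact two_mul r ▸ mul_mem_wordBall_add (hS.inv_mem_wordBall hx) hy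
  have htranslates : ∑ x ∈ B, ∑ g ∈ wordBall S (2 * r), (u (x * g) - u x) ^ 2
      ≤ (wordBall S (2 * r)).card * ((2 * r) ^ 2 * energy S u (3 * r)) := by
    rw [Finset.sum_comm, ← nsmul_eq_mul, ← Finset.sum_const]
    refine Finset.sum_le_sum fun g hg => ?_
    simpa [show r + 2 * r = 3 * r by ring] using sum_sq_sub_le_sq_mul_energy (r := r) u hg
  have hpos : (0 : ℝ) < 2 * B.card := by exact_mod_cast Nat.mul_pos two_pos (card_wordBall_pos r)
  refine le_of_mul_le_mul_left ?_ hpos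
  have hE := energy_nonneg (S := S) u (3 * r)
  calc 2 * B.card * sqNorm S u r = ∑ x ∈ B, ∑ y ∈ B, (u y - u x) ^ 2 :=
        (sum_sum_sq_sub B u h0).symm
    _ ≤ (wordBall S (2 * r)).card * ((2 * r) ^ 2 * energy S u (3 * r)) := hpairs.trans htranslates
    _ ≤ (K * B.card) * ((2 * r) ^ 2 * energy S u (3 * r)) := by
        gcongr
        exact_mod_cast hK r
    _ = 2 * B.card * (2 * K * r ^ 2 * energy S u (3 * r)) := by ring

end HarmonicFunctions

section Caccioppoli

variable {G : Type*} [Group G] {S : Finset G} {u : G → ℝ} {r : ℕ}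

open Classical in
/-- The oriented edges `(x, x * s)` of the Cayley graph with both ends in the ball of radius `r`,
encoded as pairs `(x, s)`. -/
def innerEdges (S : Finset G) (r : ℕ) : Finset (G × G) :=
  {p ∈ wordBall S r ×ˢ S | p.1 * p.2 ∈ wordBall S r}

theorem mem_innerEdges {p : G × G} :
    p ∈ innerEdges S r ↔ (p.1 ∈ wordBall S r ∧ p.2 ∈ S) ∧ p.1 * p.2 ∈ wordBall S r := by
  classical
  rw [innerEdges, Finset.mem_filter, Finset.mem_product]

theorem innerEdges_subset : innerEdges S r ⊆ wordBall S r ×ˢ S :=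
  fun _ hp => Finset.mem_product.2 (mem_innerEdges.1 hp).1

theorem product_subset_innerEdges {t : ℕ} (h : t < r) : wordBall S t ×ˢ S ⊆ innerEdges S r := by
  intro p hp
  obtain ⟨hx, hs⟩ := Finset.mem_product.1 hp
  exact mem_innerEdges.2
    ⟨⟨wordBall_mono h.le hx, hs⟩, wordBall_mono h (mul_mem_wordBall hx hs)⟩

theorem sum_innerEdges_reverse (hS : IsSymmGenerating (S : Set G)) (F : G → G → ℝ) :
    ∑ p ∈ innerEdges S r, F (p.1 * p.2) p.1 = ∑ p ∈ innerEdges S r, F p.1 (p.1 * p.2) := by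
  have hmaps : ∀ p ∈ innerEdges S r, (p.1 * p.2, p.2⁻¹) ∈ innerEdges S r := fun p hp => by
    obtain ⟨⟨hx, hs⟩, hxs⟩ := mem_innerEdges.1 hp
    exact mem_innerEdges.2 ⟨⟨hxs, hS.inv_mem hs⟩, by simpa using hx⟩
  refine Finset.sum_nbij' (fun p => (p.1 * p.2, p.2⁻¹)) (fun p => (p.1 * p.2, p.2⁻¹))
    hmaps hmaps ?_ ?_ ?_ <;> simp

/-- A cutoff function equal to `r` on the ball of radius `r`, vanishing outside the ball of radius
`2 * r`, and `1`-Lipschitz. The subtraction is the truncated one of `ℕ`. -/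
def cutoff (S : Finset G) (r : ℕ) (x : G) : ℝ :=
  (min r (2 * r - wordLength S x) : ℕ)

theorem cutoff_eq_of_mem (hS : IsSymmGenerating (S : Set G)) {x : G} (hx : x ∈ wordBall S r) :
    cutoff S r x = r := by
  have := hS.mem_wordBall.1 hx
  rw [cutoff, min_eq_left (by omega)]

theorem cutoff_eq_zero_of_notMem (hS : IsSymmGenerating (S : Set G)) {x : G}
    (hx : x ∉ wordBall S (2 * r)) : cutoff S r x = 0 := by
  have := hS.mem_wordBall.not.1 hx
  rw [cutoff, Nat.sub_eq_zero_of_le (by omega), Nat.min_zero, Nat.cast_zero]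

theorem sq_cutoff_sub_cutoff_le_one (hS : IsSymmGenerating (S : Set G)) (r : ℕ) (x : G) {s : G}
    (hs : s ∈ S) : (cutoff S r x - cutoff S r (x * s)) ^ 2 ≤ 1 := by
  have hxs := hS.wordLength_mul_le x s
  have hx := hS.wordLength_mul_le (x * s) s⁻¹
  rw [mul_inv_cancel_right, hS.wordLength_inv] at hx
  have hs1 := wordLength_le_one (S := (S : Set G)) hs
  have hle : cutoff S r (x * s) ≤ cutoff S r x + 1 := by
    unfold cutoff
    norm_cast
    omega
  have hge : cutoff S r x ≤ cutoff S r (x * s) + 1 := by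
    unfold cutoff
    norm_cast
    omega
  rw [sq_le_one_iff_abs_le_one, abs_sub_le_iff]
  constructor <;> linarith

-- Testing harmonicity of `u` against `η ^ 2 * u` and summing by parts.
theorem IsHarmonic.sum_cutoff_sq_mul_sub_eq_zero (hS : IsSymmGenerating (S : Set G))
    (hu : IsHarmonic S u) :
    ∑ p ∈ innerEdges S (2 * r + 1), (cutoff S r p.1 ^ 2 * u p.1
      - cutoff S r (p.1 * p.2) ^ 2 * u (p.1 * p.2)) * (u p.1 - u (p.1 * p.2)) = 0 := by
  set η := cutoff S r
  have hone : ∑ p ∈ innerEdges S (2 * r + 1), η p.1 ^ 2 * u p.1 * (u p.1 - u (p.1 * p.2)) = 0 := by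
    rw [Finset.sum_subset innerEdges_subset, Finset.sum_product]
    · refine Finset.sum_eq_zero fun x _ => ?_
      rw [← neg_eq_zero, ← Finset.sum_neg_distrib]
      simp only [← mul_neg, neg_sub, ← Finset.mul_sum, hu x, mul_zero]
    · intro p hp hnot
      have hx : p.1 ∉ wordBall S (2 * r) := fun hx => hnot <|
        product_subset_innerEdges (Nat.lt_succ_self _)
          (Finset.mk_mem_product hx (Finset.mem_product.1 hp).2)
      simp [η, cutoff_eq_zero_of_notMem hS hx]
  have hother := sum_innerEdges_reverse (r := 2 * r + 1) hS
    fun x y => η x ^ 2 * u x * (u x - u y)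
  rw [hone] at hother
  rw [← add_zero 0]
  nth_rw 1 [← hone, ← hother, ← Finset.sum_add_distrib]
  exact Finset.sum_congr rfl fun p _ => by ring

theorem sum_innerEdges_sq_add_sq_le (hS : IsSymmGenerating (S : Set G)) (u : G → ℝ) (r : ℕ) :
    ∑ p ∈ innerEdges S r, (u p.1 ^ 2 + u (p.1 * p.2) ^ 2) ≤ 2 * (S.card * sqNorm S u r) := by
  rw [Finset.sum_add_distrib, sum_innerEdges_reverse hS fun x _ => u x ^ 2, ← two_mul]
  gcongr
  calc ∑ p ∈ innerEdges S r, u p.1 ^ 2 ≤ ∑ p ∈ wordBall S r ×ˢ S, u p.1 ^ 2 :=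
        Finset.sum_le_sum_of_subset_of_nonneg innerEdges_subset fun _ _ _ => sq_nonneg _
    _ = S.card * sqNorm S u r := by
        simp [Finset.sum_product, sqNorm, Finset.mul_sum]

theorem sq_mul_energy_le_sum_cutoff (hS : IsSymmGenerating (S : Set G)) (u : G → ℝ) (r : ℕ) :
    r ^ 2 * energy S u r ≤ ∑ p ∈ innerEdges S (2 * r + 1),
      (cutoff S r p.1 ^ 2 + cutoff S r (p.1 * p.2) ^ 2) * (u p.1 - u (p.1 * p.2)) ^ 2 := by
  calc r ^ 2 * energy S u r
      = ∑ p ∈ wordBall S r ×ˢ S, r ^ 2 * (u p.1 - u (p.1 * p.2)) ^ 2 := by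
        rw [energy, ← Finset.sum_product', Finset.mul_sum]
        simp only [sub_sq_comm (u (_ * _))]
    _ ≤ ∑ p ∈ wordBall S r ×ˢ S,
          (cutoff S r p.1 ^ 2 + cutoff S r (p.1 * p.2) ^ 2) * (u p.1 - u (p.1 * p.2)) ^ 2 := by
        refine Finset.sum_le_sum fun p hp => ?_
        rw [cutoff_eq_of_mem hS (Finset.mem_product.1 hp).1]
        gcongr
        exact le_add_of_nonneg_right (sq_nonneg _)
    _ ≤ _ := Finset.sum_le_sum_of_subset_of_nonneg
        (product_subset_innerEdges (by omega)) fun _ _ _ => by positivity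

theorem cutoff_product_rule (a b u v : ℝ) :
    (a ^ 2 + b ^ 2) * (u - v) ^ 2 / 4 - (a - b) ^ 2 * (u + v) ^ 2 / 2
      ≤ (a ^ 2 * u - b ^ 2 * v) * (u - v) := by
  nlinarith [sq_nonneg ((a + b) * (u - v) / 2 + (a - b) * (u + v)),
    mul_nonneg (sq_nonneg (a - b)) (sq_nonneg (u - v))]

/-- The Caccioppoli inequality, or reverse Poincaré inequality. -/
theorem IsHarmonic.sq_mul_energy_le (hS : IsSymmGenerating (S : Set G)) (hu : IsHarmonic S u)
    (r : ℕ) : r ^ 2 * energy S u r ≤ 8 * S.card * sqNorm S u (2 * r + 1) := by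
  set A := innerEdges S (2 * r + 1)
  set η := cutoff S r
  have hpointwise : ∀ p ∈ A,
      (η p.1 ^ 2 + η (p.1 * p.2) ^ 2) * (u p.1 - u (p.1 * p.2)) ^ 2
        ≤ 4 * ((η p.1 ^ 2 * u p.1 - η (p.1 * p.2) ^ 2 * u (p.1 * p.2)) * (u p.1 - u (p.1 * p.2)))
          + 4 * (u p.1 ^ 2 + u (p.1 * p.2) ^ 2) := fun p hp => by
    have hη := sq_cutoff_sub_cutoff_le_one hS r p.1 (mem_innerEdges.1 hp).1.2
    nlinarith [cutoff_product_rule (η p.1) (η (p.1 * p.2)) (u p.1) (u (p.1 * p.2)),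
      sq_nonneg (u p.1 - u (p.1 * p.2)),
      mul_le_mul_of_nonneg_right hη (sq_nonneg (u p.1 + u (p.1 * p.2)))]
  have hsum := Finset.sum_le_sum hpointwise
  rw [Finset.sum_add_distrib, ← Finset.mul_sum, ← Finset.mul_sum,
    hu.sum_cutoff_sq_mul_sub_eq_zero hS] at hsum
  linarith [sq_mul_energy_le_sum_cutoff hS u r, sum_innerEdges_sq_add_sq_le hS u (2 * r + 1)]

end Caccioppoli

section DeterminantComparison

open Matrix

variable {ι F : Type*} [Fintype ι] [DecidableEq ι] [AddCommGroup F] [Module ℝ F]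
  [FiniteDimensional ℝ F] {A A' : Matrix ι ι ℝ} {δ : ℝ}

theorem dotProduct_self_eq_sum_eigenvectorBasis (hA : A.IsHermitian) (x : ι → ℝ) :
    x ⬝ᵥ x = ∑ i, (hA.eigenvectorBasis i ⬝ᵥ x) ^ 2 := by
  have hparseval :=
    hA.eigenvectorBasis.sum_inner_mul_inner (WithLp.toLp 2 x) (WithLp.toLp 2 x)
  simp only [EuclideanSpace.inner_eq_star_dotProduct, star_trivial] at hparseval
  rw [← hparseval]
  refine Finset.sum_congr rfl fun i _ => ?_
  rw [dotProduct_comm x, sq]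

theorem dotProduct_mulVec_eq_sum_eigenvalues (hA : A.IsHermitian) (x : ι → ℝ) :
    x ⬝ᵥ A *ᵥ x = ∑ i, hA.eigenvalues i * (hA.eigenvectorBasis i ⬝ᵥ x) ^ 2 := by
  have heig (i : ι) : hA.eigenvectorBasis i ⬝ᵥ A *ᵥ x
      = hA.eigenvalues i * (hA.eigenvectorBasis i ⬝ᵥ x) := by
    rw [dotProduct_mulVec, ← mulVec_transpose, ← conjTranspose_eq_transpose_of_trivial, hA.eq,
      hA.mulVec_eigenvectorBasis, smul_dotProduct, smul_eq_mul]
  have hparseval :=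
    hA.eigenvectorBasis.sum_inner_mul_inner (WithLp.toLp 2 x) (WithLp.toLp 2 (A *ᵥ x))
  simp only [EuclideanSpace.inner_eq_star_dotProduct, star_trivial] at hparseval
  rw [dotProduct_comm, ← hparseval]
  refine Finset.sum_congr rfl fun i _ => ?_
  rw [dotProduct_comm (A *ᵥ x), heig]
  ring

theorem card_lt_eigenvalues_le_finrank (hA : A.IsHermitian) (l : (ι → ℝ) →ₗ[ℝ] F)
    (hl : ∀ x, l x = 0 → x ⬝ᵥ A *ᵥ x ≤ δ * (x ⬝ᵥ x)) :
    Fintype.card {i // δ < hA.eigenvalues i} ≤ Module.finrank ℝ F := by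
  by_contra! hlt
  let v (i : ι) : ι → ℝ := hA.eigenvectorBasis i
  let coords : (ι → ℝ) →ₗ[ℝ] ({i // ¬ δ < hA.eigenvalues i} → ℝ) :=
    LinearMap.pi fun i => dotProductBilin ℝ ℝ (v i)
  obtain ⟨x, hx, hx0⟩ := (Submodule.ne_bot_iff _).1 <|
    LinearMap.ker_ne_bot_of_finrank_lt (f := l.prod coords) <| by
      have := Fintype.card_subtype_compl fun i => δ < hA.eigenvalues i
      have := Fintype.card_subtype_le fun i => δ < hA.eigenvalues i
      simp only [Module.finrank_prod, Module.finrank_fintype_fun_eq_card]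
      omega
  obtain ⟨hlx, hcoords⟩ : l x = 0 ∧ coords x = 0 := by simpa using hx
  have hlow (i : ι) (hi : ¬ δ < hA.eigenvalues i) : v i ⬝ᵥ x = 0 := congrFun hcoords ⟨i, hi⟩
  have hquad := hl x hlx
  rw [dotProduct_mulVec_eq_sum_eigenvalues hA, dotProduct_self_eq_sum_eigenvectorBasis hA,
    Finset.mul_sum, ← sub_nonpos, ← Finset.sum_sub_distrib] at hquad
  have hterm (i : ι) : 0 ≤ hA.eigenvalues i * (v i ⬝ᵥ x) ^ 2 - δ * (v i ⬝ᵥ x) ^ 2 := by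
    by_cases hi : δ < hA.eigenvalues i
    · exact sub_nonneg.2 (mul_le_mul_of_nonneg_right hi.le (sq_nonneg _))
    · simp [hlow i hi]
  have hzero (i : ι) : v i ⬝ᵥ x = 0 := by
    by_cases hi : δ < hA.eigenvalues i
    · have h0 := (Finset.sum_eq_zero_iff_of_nonneg fun i _ => hterm i).1
        (hquad.antisymm (Finset.sum_nonneg fun i _ => hterm i)) i (Finset.mem_univ i)
      rw [← sub_mul] at h0
      exact pow_eq_zero_iff two_ne_zero |>.1
        ((mul_eq_zero.1 h0).resolve_left (sub_pos.2 hi).ne')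
    · exact hlow i hi
  refine hx0 (dotProduct_self_eq_zero.1 ?_)
  rw [dotProduct_self_eq_sum_eigenvectorBasis hA]
  exact Finset.sum_eq_zero fun i _ => by rw [show _ ⬝ᵥ x = 0 from hzero i, sq, zero_mul]

theorem det_le_pow_of_forall_ker (hA : A.PosSemidef) (hδ : 0 ≤ δ) (hδ1 : δ ≤ 1)
    (hA1 : ∀ x : ι → ℝ, x ⬝ᵥ A *ᵥ x ≤ x ⬝ᵥ x) (l : (ι → ℝ) →ₗ[ℝ] F)
    (hl : ∀ x, l x = 0 → x ⬝ᵥ A *ᵥ x ≤ δ * (x ⬝ᵥ x)) :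
    A.det ≤ δ ^ (Fintype.card ι - Module.finrank ℝ F) := by
  have hle1 (i : ι) : hA.1.eigenvalues i ≤ 1 := by
    have hv := hA.1.eigenvectorBasis.orthonormal.1 i
    rw [EuclideanSpace.norm_eq, Real.sqrt_eq_one] at hv
    have := hA1 (hA.1.eigenvectorBasis i)
    rw [hA.1.mulVec_eigenvectorBasis, dotProduct_smul] at this
    simp only [Real.norm_eq_abs, sq_abs] at hv
    simpa [dotProduct, ← sq, hv] using this
  calc A.det = ∏ i, hA.1.eigenvalues i := by simp [hA.1.det_eq_prod_eigenvalues]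
    _ ≤ ∏ i, if δ < hA.1.eigenvalues i then 1 else δ := by
        refine Finset.prod_le_prod (fun i _ => hA.eigenvalues_nonneg i) fun i _ => ?_
        split_ifs with hi
        exacts [hle1 i, not_lt.1 hi]
    _ = δ ^ (Fintype.card ι - Fintype.card {i // δ < hA.1.eigenvalues i}) := by
        rw [Finset.prod_ite, Finset.prod_const_one, one_mul, Finset.prod_const,
          ← Fintype.card_subtype, Fintype.card_subtype_compl]
    _ ≤ _ := pow_le_pow_of_le_one hδ hδ1
        (Nat.sub_le_sub_left (card_lt_eigenvalues_le_finrank hA.1 l hl) _)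

theorem det_le_pow_mul_det_of_forall_ker (hA : A.PosSemidef) (hA' : A'.PosDef) (hδ : 0 ≤ δ)
    (hδ1 : δ ≤ 1) (hle : ∀ x : ι → ℝ, x ⬝ᵥ A *ᵥ x ≤ x ⬝ᵥ A' *ᵥ x) (l : (ι → ℝ) →ₗ[ℝ] F)
    (hl : ∀ x, l x = 0 → x ⬝ᵥ A *ᵥ x ≤ δ * (x ⬝ᵥ A' *ᵥ x)) :
    A.det ≤ δ ^ (Fintype.card ι - Module.finrank ℝ F) * A'.det := by
  obtain ⟨B, hB⟩ : ∃ B : Matrix ι ι ℝ, A' = Bᵀ * B := by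
    open scoped MatrixOrder in
    simpa [star_eq_conjTranspose] using
      CStarAlgebra.nonneg_iff_eq_star_mul_self.mp hA'.posSemidef.nonneg
  have hdetA' : A'.det = B.det ^ 2 := by rw [hB, det_mul, det_transpose, sq]
  have hdetB : IsUnit B.det := isUnit_iff_ne_zero.2 fun h => hA'.det_pos.ne' (by simp [hdetA', h])
  set T := B⁻¹
  have hBT : B * T = 1 := B.mul_nonsing_inv hdetB
  have hform (M : Matrix ι ι ℝ) (x : ι → ℝ) :
      x ⬝ᵥ (Tᵀ * M * T) *ᵥ x = (T *ᵥ x) ⬝ᵥ M *ᵥ (T *ᵥ x) := by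
    rw [← mulVec_mulVec, ← mulVec_mulVec, dotProduct_mulVec, vecMul_transpose]
  have hone : Tᵀ * A' * T = 1 := by
    rw [hB, ← mul_assoc, ← transpose_mul, mul_assoc, hBT, transpose_one, one_mul]
  have hself (x : ι → ℝ) : x ⬝ᵥ x = (T *ᵥ x) ⬝ᵥ A' *ᵥ (T *ᵥ x) := by
    rw [← hform, hone, one_mulVec]
  have hpsd : (Tᵀ * A * T).PosSemidef := by
    simpa using hA.conjTranspose_mul_mul_same T
  have hdet : (Tᵀ * A * T).det * A'.det = A.det := by
    have hBT' : B.det * T.det = 1 := by rw [← det_mul, hBT, det_one]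
    rw [hdetA', det_mul, det_mul, det_transpose]
    linear_combination A.det * (B.det * T.det + 1) * hBT'
  rw [← hdet]
  have hpos := hA'.det_pos
  gcongr
  refine det_le_pow_of_forall_ker hpsd hδ hδ1 (fun x => ?_) (l ∘ₗ T.mulVecLin) fun x hx => ?_
  · rw [hform, hself]
    exact hle _
  · rw [hform, hself]
    exact hl _ hx

end DeterminantComparison

section Nets

variable {G : Type*} [Group G] {S : Finset G}

/-- The left translates `x • wordBall S σ`, `x ∈ X`, are disjoint because distinct points of `X`
are at distance more than `2 * σ`. -/
def IsWordSeparated (S : Finset G) (σ : ℕ) (X : Set G) : Prop :=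
  X.Pairwise fun x y => x⁻¹ * y ∉ wordBall S (2 * σ)

theorem IsWordSeparated.card_mul_card_le (hS : IsSymmGenerating (S : Set G)) {σ T : ℕ}
    {X : Finset G} (hX : IsWordSeparated S σ X) {z : G} (hz : ∀ x ∈ X, z⁻¹ * x ∈ wordBall S T) :
    X.card * (wordBall S σ).card ≤ (wordBall S (T + σ)).card := by
  rw [← Finset.card_product]
  refine Finset.card_le_card_of_injOn (fun p => z⁻¹ * p.1 * p.2) (fun p hp => ?_) ?_
  · obtain ⟨hx, hy⟩ := Finset.mem_product.1 hp
    exact mul_mem_wordBall_add (hz _ hx) hy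
  · rintro ⟨x, g⟩ hp ⟨y, h⟩ hq heq
    obtain ⟨hx, hg⟩ := Finset.mem_product.1 hp
    obtain ⟨hy, hh⟩ := Finset.mem_product.1 hq
    replace heq : x * g = y * h := by simpa [mul_assoc] using heq
    obtain rfl : x = y := hX.eq hx hy <| not_not.2 <| by
      rw [inv_mul_eq_iff_eq_mul.2 (show y = x * (g * h⁻¹) by rw [← mul_assoc, heq]; simp), two_mul]
      exact mul_mem_wordBall_add hg (hS.inv_mem_wordBall hh)
    rw [mul_left_cancel heq]

theorem exists_isWordSeparated_cover (hS : IsSymmGenerating (S : Set G)) (σ R : ℕ) :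
    ∃ X ⊆ wordBall S R, IsWordSeparated S σ X ∧
      ∀ z ∈ wordBall S R, ∃ x ∈ X, x⁻¹ * z ∈ wordBall S (2 * σ) := by
  classical
  obtain ⟨X, hmax⟩ := ((wordBall S R).powerset.filter fun X : Finset G =>
    IsWordSeparated S σ X).exists_maximal
      ⟨∅, Finset.mem_filter.2 ⟨Finset.empty_mem_powerset _, by simp [IsWordSeparated]⟩⟩
  obtain ⟨hXR, hX⟩ : X ⊆ wordBall S R ∧ IsWordSeparated S σ X := by simpa using hmax.prop
  refine ⟨X, hXR, hX, fun z hz => ?_⟩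
  by_contra! hfar
  have hinsert : IsWordSeparated S σ (insert z X : Finset G) := by
    rw [Finset.coe_insert]
    refine hX.insert fun x hx _ => ⟨fun h => hfar x hx ?_, hfar x hx⟩
    simpa using hS.inv_mem_wordBall h
  have hzX : z ∈ X := hmax.le_of_ge (y := insert z X)
    (by simpa [Finset.insert_subset_iff, hz, hXR] using hinsert)
    (Finset.subset_insert z X) (Finset.mem_insert_self z X)
  exact hfar z hzX (by simpa using one_mem_wordBall _)

open Classical in
theorem sum_translates_eq {X : Finset G} {R ρ : ℕ} (hX : X ⊆ wordBall S R) (w : G → ℝ) :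
    ∑ x ∈ X, ∑ y ∈ wordBall S ρ, w (x * y)
      = ∑ z ∈ wordBall S (R + ρ), (X.filter fun x => x⁻¹ * z ∈ wordBall S ρ).card * w z := by
  have hinner : ∀ x ∈ X, ∑ y ∈ wordBall S ρ, w (x * y)
      = ∑ z ∈ wordBall S (R + ρ), if x⁻¹ * z ∈ wordBall S ρ then w z else 0 := fun x hx => by
    rw [← Finset.sum_filter]
    refine Finset.sum_nbij' (x * ·) (x⁻¹ * ·) (fun y hy => ?_) (fun z hz => ?_) ?_ ?_ ?_
    · simpa [hy] using mul_mem_wordBall_add (hX hx) hy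
    · exact (Finset.mem_filter.1 hz).2
    all_goals simp
  rw [Finset.sum_congr rfl hinner, Finset.sum_comm]
  refine Finset.sum_congr rfl fun z _ => ?_
  rw [← Finset.sum_filter, Finset.sum_const, nsmul_eq_mul]

end Nets

section LocalPoincare

variable {G : Type*} [Group G] {S : Finset G} {X : Finset G} {R ρ : ℕ} {w : G → ℝ}

theorem sum_wordBall_le_sum_translates (hw : 0 ≤ w) (hX : X ⊆ wordBall S R)
    (hcover : ∀ z ∈ wordBall S R, ∃ x ∈ X, x⁻¹ * z ∈ wordBall S ρ) :
    ∑ z ∈ wordBall S R, w z ≤ ∑ x ∈ X, ∑ y ∈ wordBall S ρ, w (x * y) := by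
  classical
  rw [sum_translates_eq hX]
  refine (Finset.sum_le_sum fun z hz => ?_).trans (Finset.sum_le_sum_of_subset_of_nonneg
    (wordBall_mono (Nat.le_add_right R ρ)) fun z _ _ => mul_nonneg (Nat.cast_nonneg _) (hw z))
  obtain ⟨x, hx, hxz⟩ := hcover z hz
  refine le_mul_of_one_le_left (hw z) (Nat.one_le_cast.2 (Finset.card_pos.2 ⟨x, ?_⟩))
  exact Finset.mem_filter.2 ⟨hx, hxz⟩

open Classical in
theorem sum_translates_le (hw : 0 ≤ w) (hX : X ⊆ wordBall S R) {m : ℕ}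
    (hm : ∀ z, (X.filter fun x => x⁻¹ * z ∈ wordBall S ρ).card ≤ m) :
    ∑ x ∈ X, ∑ y ∈ wordBall S ρ, w (x * y) ≤ m * ∑ z ∈ wordBall S (R + ρ), w z := by
  rw [sum_translates_eq hX, Finset.mul_sum]
  exact Finset.sum_le_sum fun z _ => mul_le_mul_of_nonneg_right (Nat.cast_le.2 (hm z)) (hw z)

theorem IsWordSeparated.card_le_pow (hS : IsSymmGenerating (S : Set G)) {K : ℕ}
    (hK : IsDoubling S K) {σ T k : ℕ} (hX : IsWordSeparated S σ X) {z : G}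
    (hz : ∀ x ∈ X, z⁻¹ * x ∈ wordBall S T) (hT : T + σ ≤ 2 ^ k * σ) : X.card ≤ K ^ k :=
  Nat.le_of_mul_le_mul_right
    ((hX.card_mul_card_le hS hz).trans <|
      (Finset.card_le_card (wordBall_mono hT)).trans (hK.card_wordBall_two_pow_mul_le k σ))
    (card_wordBall_pos σ)

theorem sqNorm_le_energy_of_net (hS : IsSymmGenerating (S : Set G)) {K : ℕ} (hK : IsDoubling S K)
    {σ : ℕ} (hXR : X ⊆ wordBall S R) (hX : IsWordSeparated S σ X)
    (hcover : ∀ z ∈ wordBall S R, ∃ x ∈ X, x⁻¹ * z ∈ wordBall S (2 * σ)) (u : G → ℝ)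
    (h0 : ∀ x ∈ X, ∑ y ∈ wordBall S (2 * σ), u (x * y) = 0) :
    sqNorm S u R ≤ 2 * K ^ 4 * (2 * σ) ^ 2 * energy S u (R + 3 * (2 * σ)) := by
  classical
  have hmult (z : G) : (X.filter fun x => x⁻¹ * z ∈ wordBall S (3 * (2 * σ))).card ≤ K ^ 3 := by
    refine IsWordSeparated.card_le_pow hS hK (hX.mono ?_) (fun x hx => ?_)
      (show 3 * (2 * σ) + σ ≤ 2 ^ 3 * σ by omega) (z := z)
    · exact Finset.coe_subset.2 (Finset.filter_subset _ X)
    · simpa using hS.inv_mem_wordBall (Finset.mem_filter.1 hx).2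
  calc sqNorm S u R ≤ ∑ x ∈ X, sqNorm S (fun y => u (x * y)) (2 * σ) :=
        sum_wordBall_le_sum_translates (fun _ => sq_nonneg _) hXR hcover
    _ ≤ ∑ x ∈ X, 2 * K * (2 * σ : ℕ) ^ 2 * energy S (fun y => u (x * y)) (3 * (2 * σ)) :=
        Finset.sum_le_sum fun x hx => sqNorm_le_energy_of_sum_eq_zero hS hK _ _ (h0 x hx)
    _ = 2 * K * (2 * σ) ^ 2 * ∑ x ∈ X, energy S (fun y => u (x * y)) (3 * (2 * σ)) := by
        rw [Finset.mul_sum]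
        push_cast
        rfl
    _ ≤ 2 * K * (2 * σ) ^ 2 * ((K ^ 3 : ℕ) * energy S u (R + 3 * (2 * σ))) := by
        gcongr
        simp only [energy, ← mul_assoc _ (_ : G)]
        exact sum_translates_le (w := fun z => ∑ s ∈ S, (u (z * s) - u z) ^ 2)
          (fun _ => Finset.sum_nonneg fun _ _ => sq_nonneg _) hXR hmult
    _ = _ := by
        push_cast
        ring

theorem exists_pow_mul_sqNorm_le (hS : IsSymmGenerating (S : Set G)) {K : ℕ} (hK : IsDoubling S K)
    (a : ℕ) {σ : ℕ} (hσ : 1 ≤ σ) : ∃ X : Finset G, X.card ≤ K ^ (a + 2) ∧ ∀ u, IsHarmonic S u →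
      (∀ x ∈ X, ∑ y ∈ wordBall S (2 * σ), u (x * y) = 0) →
      4 ^ a * sqNorm S u (2 ^ a * (2 * σ))
        ≤ K ^ 4 * S.card * sqNorm S u (16 * (2 ^ a * (2 * σ))) := by
  set R := 2 ^ a * (2 * σ) with hR
  have hRσ : 2 * σ ≤ R := Nat.le_mul_of_pos_left _ (by positivity)
  obtain ⟨X, hXR, hX, hcover⟩ := exists_isWordSeparated_cover hS σ R
  refine ⟨X, hX.card_le_pow hS hK (z := 1) (T := R) (by simpa using fun x hx => hXR hx) ?_,
    fun u hu h0 => ?_⟩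
  · rw [pow_add, mul_assoc]
    lia
  have hRcast : (4 : ℝ) ^ a * (2 * σ) ^ 2 = R ^ 2 := by
    rw [hR, show (4 : ℝ) ^ a = 2 ^ a * 2 ^ a by rw [← mul_pow]; norm_num]
    push_cast
    ring
  calc 4 ^ a * sqNorm S u R
      ≤ 4 ^ a * (2 * K ^ 4 * (2 * σ) ^ 2 * energy S u (R + 3 * (2 * σ))) := by
        gcongr
        exact sqNorm_le_energy_of_net hS hK hXR hX hcover u h0
    _ ≤ 4 ^ a * (2 * K ^ 4 * (2 * σ) ^ 2 * energy S u (4 * R)) := by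
        gcongr
        exact energy_mono u (by omega)
    _ = K ^ 4 / 8 * ((4 * R : ℕ) ^ 2 * energy S u (4 * R)) := by
        push_cast
        linear_combination 2 * K ^ 4 * energy S u (4 * R) * hRcast
    _ ≤ K ^ 4 / 8 * (8 * S.card * sqNorm S u (2 * (4 * R) + 1)) := by
        exact mul_le_mul_of_nonneg_left (hu.sq_mul_energy_le hS (4 * R)) (by positivity)
    _ ≤ K ^ 4 / 8 * (8 * S.card * sqNorm S u (16 * R)) := by
        gcongr
        exact sqNorm_mono u (by omega)
    _ = K ^ 4 * S.card * sqNorm S u (16 * R) := by ring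

end LocalPoincare

section Kleiner

open Matrix

variable {G : Type*} [Group G] {S : Finset G} {r : ℕ}

/-- Restriction to a ball, with values in the Euclidean space where the squared norm is
`sqNorm`. -/
def restrictBall (S : Finset G) (r : ℕ) : (G → ℝ) →ₗ[ℝ] EuclideanSpace ℝ (wordBall S r) :=
  (WithLp.linearEquiv 2 ℝ (wordBall S r → ℝ)).symm.toLinearMap ∘ₗ
    LinearMap.funLeft ℝ ℝ Subtype.val

theorem restrictBall_eq_zero {u : G → ℝ} :
    restrictBall S r u = 0 ↔ ∀ x ∈ wordBall S r, u x = 0 := by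
  simp [restrictBall, funext_iff, LinearMap.funLeft_apply]

theorem inner_restrictBall (u v : G → ℝ) :
    inner ℝ (restrictBall S r u) (restrictBall S r v) = ∑ x ∈ wordBall S r, u x * v x := by
  rw [← Finset.sum_coe_sort, PiLp.inner_apply]
  exact Finset.sum_congr rfl fun x _ => mul_comm _ _

/-- The space of harmonic functions of at most linear growth. -/
def linearGrowthHarmonic (S : Finset G) : Submodule ℝ (G → ℝ) where
  carrier := {u | IsHarmonic S u ∧ ∃ L : ℝ, ∀ x, |u x| ≤ L * (wordLength (S : Set G) x + 1)}
  add_mem' := by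
    rintro u v ⟨hu, L, hL⟩ ⟨hv, M, hM⟩
    refine ⟨fun x => ?_, L + M, fun x => ?_⟩
    · simp only [Pi.add_apply, add_sub_add_comm, Finset.sum_add_distrib, hu x, hv x, add_zero]
    · rw [add_mul]
      exact (abs_add_le _ _).trans (add_le_add (hL x) (hM x))
  zero_mem' := ⟨fun x => by simp, 0, fun x => by simp⟩
  smul_mem' := by
    rintro a u ⟨hu, L, hL⟩
    refine ⟨fun x => ?_, |a| * L, fun x => ?_⟩
    · simp only [Pi.smul_apply, ← smul_sub, ← Finset.smul_sum, hu x, smul_zero]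
    · rw [Pi.smul_apply, smul_eq_mul, abs_mul, mul_assoc]
      exact mul_le_mul_of_nonneg_left (hL x) (abs_nonneg a)

variable {ι : Type*} {u : ι → G → ℝ}

/-- The Gram matrix of the restrictions of the functions `u i` to a ball. -/
def ballGram (S : Finset G) (u : ι → G → ℝ) (r : ℕ) : Matrix ι ι ℝ :=
  gram ℝ fun i => restrictBall S r (u i)

theorem dotProduct_ballGram_mulVec [Fintype ι] (u : ι → G → ℝ) (c : ι → ℝ) :
    c ⬝ᵥ ballGram S u r *ᵥ c = sqNorm S (∑ i, c i • u i) r := by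
  have hgram := star_dotProduct_gram_mulVec (𝕜 := ℝ) (fun i => restrictBall S r (u i)) c c
  rw [star_trivial] at hgram
  simp only [ballGram, hgram, ← map_smul, ← map_sum, inner_restrictBall, sqNorm, sq]

theorem exists_forall_posDef_ballGram [Finite ι] (hS : IsSymmGenerating (S : Set G))
    (hu : LinearIndependent ℝ u) : ∃ r₀, ∀ r ≥ r₀, (ballGram S u r).PosDef := by
  have := Fintype.ofFinite ι
  let ker (r : ℕ) := (restrictBall S r ∘ₗ Fintype.linearCombination ℝ u).ker
  have hanti : Antitone ker := fun r t hrt c hc => by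
    rw [LinearMap.mem_ker, LinearMap.comp_apply, restrictBall_eq_zero] at hc ⊢
    exact fun x hx => hc x (wordBall_mono hrt hx)
  obtain ⟨r₀, hr₀⟩ := IsArtinian.monotone_stabilizes
    ⟨fun r => OrderDual.toDual (ker r), hanti⟩
  have hstable {r t : ℕ} (hr : r₀ ≤ r) (ht : r₀ ≤ t) : ker r = ker t :=
    (hr₀ r hr).symm.trans (hr₀ t ht)
  refine ⟨r₀, fun r hr => posDef_gram_of_linearIndependent ?_⟩
  refine Fintype.linearIndependent_iff.2 fun c hc => Fintype.linearIndependent_iff.1 hu c ?_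
  have hcr : c ∈ ker r := by simpa [ker, Fintype.linearCombination_apply] using hc
  funext x
  rw [hstable hr (le_max_left r₀ (wordLength (S : Set G) x))] at hcr
  simpa [Fintype.linearCombination_apply] using
    restrictBall_eq_zero.1 hcr x (hS.mem_wordBall.2 (le_max_right _ _))

theorem exists_det_ballGram_le [Fintype ι] [DecidableEq ι] (hS : IsSymmGenerating (S : Set G))
    {d : ℕ} (hgrowth : HasGrowthAtMost S d) (hu : ∀ i, u i ∈ linearGrowthHarmonic S) :
    ∃ B ≥ (0 : ℝ), ∀ r, (ballGram S u r).det ≤ B * (((r : ℝ) + 1) ^ (d + 2)) ^ Fintype.card ι := by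
  obtain ⟨P, hP⟩ := hgrowth
  choose L hL using fun i => (hu i).2
  obtain ⟨M, hM⟩ := (Set.finite_range L).bddAbove
  have hLnn (i : ι) : 0 ≤ L i :=
    nonneg_of_mul_nonneg_left ((abs_nonneg _).trans (hL i 1)) (by positivity)
  have hbound (r : ℕ) (i : ι) {x : G} (hx : x ∈ wordBall S r) : |u i x| ≤ M * (r + 1) := by
    have hxr := hS.mem_wordBall.1 hx
    have hLM : L i ≤ M := hM ⟨i, rfl⟩
    have hMnn := (hLnn i).trans hLM
    exact (hL i x).trans (by gcongr)
  refine ⟨(Fintype.card ι).factorial * (P * M ^ 2) ^ Fintype.card ι, by positivity, fun r => ?_⟩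
  have hentry (i j : ι) : |ballGram S u r i j| ≤ P * M ^ 2 * ((r : ℝ) + 1) ^ (d + 2) := by
    calc |ballGram S u r i j| = |∑ x ∈ wordBall S r, u i x * u j x| := by
          rw [ballGram, gram_apply, inner_restrictBall]
      _ ≤ (wordBall S r).card • (M * (r + 1)) ^ 2 := by
          refine (Finset.abs_sum_le_sum_abs _ _).trans ?_
          refine Finset.sum_le_card_nsmul _ _ _ fun x hx => ?_
          rw [abs_mul, sq]
          exact mul_le_mul (hbound r i hx) (hbound r j hx) (abs_nonneg _)
            ((abs_nonneg _).trans (hbound r i hx))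
      _ ≤ (P * ((r : ℝ) + 1) ^ d) * (M * (r + 1)) ^ 2 := by
          rw [nsmul_eq_mul]
          gcongr
          exact_mod_cast hP r
      _ = P * M ^ 2 * ((r : ℝ) + 1) ^ (d + 2) := by ring
  calc (ballGram S u r).det ≤ |(ballGram S u r).det| := le_abs_self _
    _ ≤ (Fintype.card ι).factorial • (P * M ^ 2 * ((r : ℝ) + 1) ^ (d + 2)) ^ Fintype.card ι :=
        det_le (abv := AbsoluteValue.abs) hentry
    _ = _ := by
        rw [nsmul_eq_mul, mul_pow _ (_ ^ (d + 2)), mul_assoc]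

theorem det_ballGram_le [Fintype ι] [DecidableEq ι] (hS : IsSymmGenerating (S : Set G)) {K : ℕ}
    (hK : IsDoubling S K) (hu : ∀ i, u i ∈ linearGrowthHarmonic S) (a : ℕ) {σ : ℕ} (hσ : 1 ≤ σ)
    (hpos : (ballGram S u (16 * (2 ^ a * (2 * σ)))).PosDef)
    (ha : (K : ℝ) ^ 4 * S.card / 4 ^ a ≤ 1) :
    (ballGram S u (2 ^ a * (2 * σ))).det
      ≤ ((K : ℝ) ^ 4 * S.card / 4 ^ a) ^ (Fintype.card ι - K ^ (a + 2))
        * (ballGram S u (16 * (2 ^ a * (2 * σ)))).det := by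
  obtain ⟨X, hXcard, hX⟩ := exists_pow_mul_sqNorm_le hS hK a hσ
  have hdet_pos := hpos.det_pos
  have hpsd : (ballGram S u (2 ^ a * (2 * σ))).PosSemidef := posSemidef_gram ..
  let averages : (ι → ℝ) →ₗ[ℝ] (X → ℝ) := LinearMap.pi fun x =>
    ∑ y ∈ wordBall S (2 * σ), LinearMap.proj (x.1 * y) ∘ₗ Fintype.linearCombination ℝ u
  refine (det_le_pow_mul_det_of_forall_ker hpsd hpos (by positivity) ha
    (fun c => ?_) averages fun c hc => ?_).trans ?_
  · simp only [dotProduct_ballGram_mulVec]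
    exact sqNorm_mono _ (by omega)
  · simp only [dotProduct_ballGram_mulVec]
    rw [div_mul_eq_mul_div, le_div_iff₀ (by positivity), mul_comm]
    refine hX _ (Submodule.sum_smul_mem _ c fun i _ => hu i).1 fun x hx => ?_
    simpa [averages, Fintype.linearCombination_apply] using congrFun hc ⟨x, hx⟩
  · gcongr ?_ * _
    refine pow_le_pow_of_le_one (by positivity) ha ?_
    simpa using Nat.sub_le_sub_left hXcard _

theorem one_le_mul_of_forall_le_mul_succ {t : ℕ → ℝ} {q T B : ℝ} (hq : 0 ≤ q) (hT : 0 ≤ T)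
    (h0 : 0 < t 0) (hstep : ∀ j, t j ≤ q * t (j + 1)) (hbound : ∀ j, t j ≤ B * T ^ j) :
    1 ≤ q * T := by
  by_contra! hlt
  have hiter (j : ℕ) : t 0 ≤ q ^ j * t j := by
    induction j with
    | zero => simp
    | succ j ih =>
      rw [pow_succ, mul_assoc]
      exact ih.trans (mul_le_mul_of_nonneg_left (hstep j) (by positivity))
  have hdecay (j : ℕ) : t 0 ≤ B * (q * T) ^ j := by
    calc t 0 ≤ q ^ j * (B * T ^ j) :=
          (hiter j).trans (mul_le_mul_of_nonneg_left (hbound j) (by positivity))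
      _ = B * (q * T) ^ j := by rw [mul_pow]; ring
  have hlim := (tendsto_pow_atTop_nhds_zero_of_lt_one (by positivity) hlt).const_mul B
  exact h0.not_ge (by simpa using ge_of_tendsto' hlim hdecay)

theorem one_le_mul_of_linearIndependent_harmonic [Fintype ι] (hS : IsSymmGenerating (S : Set G))
    {d : ℕ} (hgrowth : HasGrowthAtMost S d) {K : ℕ} (hK : IsDoubling S K) {a : ℕ}
    (ha : (K : ℝ) ^ 4 * S.card / 4 ^ a ≤ 1) (hcard : Fintype.card ι = 2 * K ^ (a + 2))
    (hu : ∀ i, u i ∈ linearGrowthHarmonic S) (hli : LinearIndependent ℝ u) :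
    1 ≤ (K : ℝ) ^ 4 * S.card / 4 ^ a * (16 ^ (d + 2)) ^ 2 := by
  classical
  set δ : ℝ := K ^ 4 * S.card / 4 ^ a
  set T : ℝ := 16 ^ (d + 2)
  set N := K ^ (a + 2)
  have hN : N ≠ 0 := (pow_pos hK.one_le _).ne'
  obtain ⟨r₀, hpos⟩ := exists_forall_posDef_ballGram hS hli
  obtain ⟨B, hB0, hB⟩ := exists_det_ballGram_le hS hgrowth hu
  rw [hcard] at hB
  let R (j : ℕ) : ℕ := 2 ^ a * (2 * 16 ^ (r₀ + j))
  have hR (j : ℕ) : R (j + 1) = 16 * R j := by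
    simp only [R]
    ring
  have hposR (j : ℕ) : (ballGram S u (R j)).PosDef := by
    refine hpos _ ((Nat.le_add_right r₀ j).trans ?_)
    refine (Nat.lt_pow_self (show 1 < 16 by norm_num)).le.trans ?_
    exact (Nat.le_mul_of_pos_left _ two_pos).trans (Nat.le_mul_of_pos_left _ (by positivity))
  rw [← one_le_pow_iff_of_nonneg (by positivity) hN, mul_pow]
  refine one_le_mul_of_forall_le_mul_succ (t := fun j => (ballGram S u (R j)).det)
    (B := B * ((R 0 + 1 : ℝ) ^ (d + 2)) ^ (2 * N)) (by positivity) (by positivity)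
    (hposR 0).det_pos (fun j => ?_) fun j => ?_
  · have hdet : (ballGram S u (R j)).det
        ≤ δ ^ (Fintype.card ι - N) * (ballGram S u (16 * R j)).det :=
      det_ballGram_le hS hK hu a (Nat.one_le_pow _ _ (by norm_num)) (hR j ▸ hposR (j + 1)) ha
    rwa [hcard, two_mul, Nat.add_sub_cancel, ← hR] at hdet
  · have hRj : (R j : ℝ) + 1 ≤ (R 0 + 1) * 16 ^ j := by
      have h16 : (1 : ℝ) ≤ 16 ^ j := one_le_pow₀ (by norm_num)
      have : (R j : ℝ) = R 0 * 16 ^ j := by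
        simp only [R]
        push_cast
        ring
      linarith
    have hTj : ((16 : ℝ) ^ j) ^ (d + 2) = T ^ j := pow_right_comm ..
    calc (ballGram S u (R j)).det ≤ B * ((R j + 1 : ℝ) ^ (d + 2)) ^ (2 * N) := hB (R j)
      _ ≤ B * (((R 0 + 1) * 16 ^ j : ℝ) ^ (d + 2)) ^ (2 * N) := by gcongr
      _ = _ := by
          rw [mul_pow (_ : ℝ) (16 ^ j), hTj]
          generalize ((R 0 : ℝ) + 1) ^ (d + 2) = A
          ring_nf

theorem exists_forall_not_linearIndependent_harmonic (hS : IsSymmGenerating (S : Set G)) {d : ℕ}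
    (hgrowth : HasGrowthAtMost S d) {K : ℕ} (hK : IsDoubling S K) :
    ∃ N, ∀ u : Fin N → G → ℝ, (∀ i, u i ∈ linearGrowthHarmonic S) →
      ¬ LinearIndependent ℝ u := by
  obtain ⟨a, ha⟩ : ∃ a : ℕ, (K : ℝ) ^ 4 * S.card * (16 ^ (d + 2)) ^ 2 < 4 ^ a :=
    pow_unbounded_of_one_lt _ (by norm_num)
  have hlt : (K : ℝ) ^ 4 * S.card / 4 ^ a * (16 ^ (d + 2)) ^ 2 < 1 := by
    rwa [div_mul_eq_mul_div, div_lt_one (by positivity)]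
  have hle : (K : ℝ) ^ 4 * S.card / 4 ^ a ≤ 1 :=
    (le_mul_of_one_le_right (by positivity)
      (one_le_pow₀ (one_le_pow₀ (by norm_num)))).trans hlt.le
  exact ⟨2 * K ^ (a + 2), fun u hu hli => hlt.not_ge <|
    one_le_mul_of_linearIndependent_harmonic hS hgrowth hK hle (Fintype.card_fin _) hu hli⟩

theorem finiteDimensional_linearGrowthHarmonic (hS : IsSymmGenerating (S : Set G)) {d : ℕ}
    (hgrowth : HasGrowthAtMost S d) {K : ℕ} (hK : IsDoubling S K) :
    FiniteDimensional ℝ (linearGrowthHarmonic S) := by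
  obtain ⟨N, hN⟩ := exists_forall_not_linearIndependent_harmonic hS hgrowth hK
  refine Module.rank_lt_aleph0_iff.1 (lt_of_not_ge fun hinf => ?_)
  obtain ⟨v, hv⟩ := exists_linearIndependent_of_le_rank ((Cardinal.natCast_lt_aleph0).le.trans hinf)
  exact hN (fun i => v i) (fun i => (v i).2)
    (hv.map' (linearGrowthHarmonic S).subtype (Submodule.ker_subtype _))

end Kleiner

section OrthogonalRepresentation

variable {G H : Type*} [Group G] [NormedAddCommGroup H] [InnerProductSpace ℝ H]

/-- A real representation by linear isometries. -/
def IsOrthogonal (π : Representation ℝ G H) : Prop :=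
  ∀ g v, ‖π g v‖ = ‖v‖

theorem IsOrthogonal.continuous {π : Representation ℝ G H} (hπ : IsOrthogonal π) (g : G) :
    Continuous (π g) :=
  (LinearIsometry.mk (π g) (hπ g)).continuous

theorem IsOrthogonal.inner_map_map {π : Representation ℝ G H} (hπ : IsOrthogonal π) (g : G)
    (v w : H) : inner ℝ (π g v) (π g w) = inner ℝ v w :=
  (LinearIsometry.mk (π g) (hπ g)).inner_map_map v w

open UniformSpace in
theorem exists_isOrthogonal_of_isPosSemidef.{v} {V : Type v} [AddCommGroup V] [Module ℝ V]
    {B : LinearMap.BilinForm ℝ V} (hB : B.IsPosSemidef) (ρ : Representation ℝ G V)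
    (hρ : ∀ g v, B (ρ g v) (ρ g v) = B v v) :
    ∃ (H : Type v) (_ : NormedAddCommGroup H) (_ : InnerProductSpace ℝ H) (_ : CompleteSpace H)
      (π : Representation ℝ G H) (T : V →ₗ[ℝ] H),
      IsOrthogonal π ∧ (∀ g v, π g (T v) = T (ρ g v)) ∧ ∀ v, ‖T v‖ ^ 2 = B v v := by
  let core : PreInnerProductSpace.Core ℝ V :=
    { inner := fun v w => B v w
      conj_inner_symm := fun v w => by simpa using hB.isSymm.eq w v
      re_inner_nonneg := fun v => by simpa using hB.isNonneg.nonneg v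
      add_left := fun x y z => by simp
      smul_left := fun x y r => by simp }
  let : SeminormedAddCommGroup V := InnerProductSpace.Core.toSeminormedAddCommGroup (𝕜 := ℝ)
  let : InnerProductSpace ℝ V := InnerProductSpace.ofCore core
  have hnorm_sq (v : V) : ‖v‖ ^ 2 = B v v := (real_inner_self_eq_norm_sq v).symm
  have hnorm (g : G) (v : V) : ‖ρ g v‖ = ‖v‖ := by
    rw [← sq_eq_sq₀ (norm_nonneg _) (norm_nonneg _), hnorm_sq, hnorm_sq, hρ]
  let U (g : G) : V →L[ℝ] V := (LinearIsometry.mk (ρ g) (hnorm g)).toContinuousLinearMap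
  have hU (g : G) (v : V) : (U g).completion v = (ρ g v : Completion V) := by simp [U]
  have ext_dense {f₁ f₂ : Completion V →ₗ[ℝ] Completion V} (h₁ : Continuous f₁)
      (h₂ : Continuous f₂) (h : ∀ v : V, f₁ v = f₂ v) : f₁ = f₂ :=
    LinearMap.ext fun x => Completion.induction_on x (isClosed_eq h₁ h₂) h
  refine ⟨Completion V, inferInstance, inferInstance, inferInstance,
    { toFun := fun g => (U g).completion
      map_one' := ext_dense (by fun_prop) continuous_id fun v => by simp [hU]
      map_mul' := fun g h => ext_dense (by fun_prop)
        ((U g).completion.continuous.comp (U h).completion.continuous) fun v => by simp [hU] },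
    Completion.toComplₗᵢ.toLinearMap, fun g x => ?_, fun g v => hU g v,
    fun v => (congrArg (· ^ 2) (Completion.norm_coe v)).trans (hnorm_sq v)⟩
  change ‖(U g).completion x‖ = ‖x‖
  induction x using Completion.induction_on with
  | hp => exact isClosed_eq (by fun_prop) (by fun_prop)
  | ih v => simp [hU, hnorm]

end OrthogonalRepresentation

section InvariantMean

open Filter Topology
open scoped ENNReal

variable {α G : Type*} [Group G] {S : Finset G}

/-- The algebra `ℓ^∞(α)` of bounded real functions on `α`. -/
abbrev BoundedFunction (α : Type*) : Type _ :=
  lp (fun _ : α => ℝ) ∞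

theorem BoundedFunction.abs_le_norm (φ : BoundedFunction α) (x : α) : |φ x| ≤ ‖φ‖ :=
  lp.norm_apply_le_norm ENNReal.top_ne_zero φ x

/-- The right regular representation `(g • φ) x = φ (x * g)` on bounded functions. -/
def rightTranslation (G : Type*) [Group G] : Representation ℝ G (BoundedFunction G) where
  toFun g :=
    { toFun := fun φ => ⟨fun x => φ (x * g),
        memℓp_infty ⟨‖φ‖, Set.forall_mem_range.2 fun x => φ.abs_le_norm (x * g)⟩⟩
      map_add' := fun _ _ => rfl
      map_smul' := fun _ _ => rfl }
  map_one' := by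
    ext φ x
    exact congrArg φ (mul_one x)
  map_mul' g h := by
    ext φ x
    exact congrArg φ (mul_assoc x g h).symm

@[simp]
theorem rightTranslation_apply (g x : G) (φ : BoundedFunction G) :
    rightTranslation G g φ x = φ (x * g) :=
  rfl

/-- A right-invariant mean on `G`. -/
structure IsInvariantMean (m : BoundedFunction G →ₗ[ℝ] ℝ) : Prop where
  le_of_forall_le : ∀ (φ : BoundedFunction G) (t : ℝ), (∀ x, t ≤ φ x) → t ≤ m φ
  map_translate : ∀ g φ, m (rightTranslation G g φ) = m φ

/-- The average over a finite set, as a functional on bounded functions. -/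
def average (B : Finset α) : StrongDual ℝ (BoundedFunction α) :=
  LinearMap.mkContinuous
    { toFun := fun φ => (∑ x ∈ B, φ x) / B.card
      map_add' := fun φ ψ => by
        rw [← add_div, ← Finset.sum_add_distrib]
        rfl
      map_smul' := fun t φ => by simp [← Finset.mul_sum, mul_div_assoc] } 1 fun φ => by
    rw [one_mul, LinearMap.coe_mk, AddHom.coe_mk, norm_div, Real.norm_natCast]
    refine div_le_of_le_mul₀ (Nat.cast_nonneg _) (norm_nonneg _) ?_
    simpa [mul_comm] using norm_sum_le_of_le (f := φ) B fun x _ => φ.abs_le_norm x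

theorem average_apply (B : Finset α) (φ : BoundedFunction α) :
    average B φ = (∑ x ∈ B, φ x) / B.card :=
  rfl

theorem norm_average_le_one (B : Finset α) : ‖average B‖ ≤ 1 :=
  LinearMap.mkContinuous_norm_le _ zero_le_one _

theorem le_average {B : Finset α} (hB : B.Nonempty) {φ : BoundedFunction α} {t : ℝ}
    (h : ∀ x, t ≤ φ x) : t ≤ average B φ := by
  rw [average_apply, le_div_iff₀ (Nat.cast_pos.2 hB.card_pos), mul_comm, ← nsmul_eq_mul]
  exact Finset.card_nsmul_le_sum _ _ _ fun x _ => h x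

theorem abs_sum_sub_sum_le {B B' : Finset α} (hB : B ⊆ B') (φ : BoundedFunction α) :
    |∑ x ∈ B', φ x - ∑ x ∈ B, φ x| ≤ (B'.card - B.card) * ‖φ‖ := by
  classical
  rw [← Finset.sum_sdiff_eq_sub hB, ← Nat.cast_sub (Finset.card_le_card hB),
    ← Finset.card_sdiff_of_subset hB, ← nsmul_eq_mul]
  exact (Finset.abs_sum_le_sum_abs _ _).trans
    (Finset.sum_le_card_nsmul _ _ _ fun x _ => φ.abs_le_norm x)

theorem abs_average_rightTranslation_sub_le {B B' : Finset G} {s : G} (hB : B.Nonempty)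
    (hBB' : B ⊆ B') (hs : ∀ x ∈ B, x * s ∈ B') {ε : ℝ} (hcard : B'.card ≤ (1 + ε) * B.card)
    (φ : BoundedFunction G) :
    |average B (rightTranslation G s φ) - average B φ| ≤ 2 * ‖φ‖ * ε := by
  have hB0 : (0 : ℝ) < B.card := Nat.cast_pos.2 hB.card_pos
  have htranslate : |∑ x ∈ B', φ x - ∑ x ∈ B, φ (x * s)| ≤ (B'.card - B.card) * ‖φ‖ := by
    simpa using abs_sum_sub_sum_le (B := B.map (mulRightEmbedding s)) (B' := B')
      (fun x hx => by
        obtain ⟨y, hy, rfl⟩ := Finset.mem_map.1 hx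
        exact hs y hy) φ
  simp only [average_apply, rightTranslation_apply]
  rw [← sub_div, abs_div, abs_of_pos hB0, div_le_iff₀ hB0]
  calc |∑ x ∈ B, φ (x * s) - ∑ x ∈ B, φ x|
      ≤ |∑ x ∈ B, φ (x * s) - ∑ x ∈ B', φ x| + |∑ x ∈ B', φ x - ∑ x ∈ B, φ x| :=
        abs_sub_le _ _ _
    _ ≤ (B'.card - B.card) * ‖φ‖ + (B'.card - B.card) * ‖φ‖ := by
        rw [abs_sub_comm]
        exact add_le_add htranslate (abs_sum_sub_sum_le hBB' φ)
    _ = 2 * ‖φ‖ * (B'.card - B.card) := by ring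
    _ ≤ 2 * ‖φ‖ * (ε * B.card) := by
        gcongr
        linarith
    _ = 2 * ‖φ‖ * ε * B.card := by ring

theorem HasGrowthAtMost.exists_card_wordBall_succ_le {d : ℕ} (hgrowth : HasGrowthAtMost S d)
    {ε : ℝ} (hε : 0 < ε) :
    ∃ r, ((wordBall S (r + 1)).card : ℝ) ≤ (1 + ε) * (wordBall S r).card := by
  obtain ⟨P, hP⟩ := hgrowth
  by_contra! hcon
  have hexp (r : ℕ) : (1 + ε) ^ r ≤ (wordBall S r).card := by
    induction r with
    | zero => simpa using card_wordBall_pos (S := S) 0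
    | succ r ih =>
      rw [pow_succ, mul_comm]
      exact (mul_le_mul_of_nonneg_left ih (by positivity)).trans (hcon r).le
  have hbound (r : ℕ) : 1 ≤ P * (1 + ε) * (((r + 1 : ℕ) : ℝ) ^ d / (1 + ε) ^ (r + 1)) := by
    calc (1 : ℝ) ≤ P * ((r + 1 : ℕ) : ℝ) ^ d / (1 + ε) ^ r := by
          rw [one_le_div (by positivity)]
          exact (hexp r).trans (by exact_mod_cast hP r)
      _ = _ := by field
  have hlim := ((tendsto_pow_const_div_const_pow_of_one_lt d (lt_add_of_pos_right 1 hε)).comp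
    (tendsto_add_atTop_nat 1)).const_mul (P * (1 + ε))
  rw [mul_zero] at hlim
  exact not_lt_of_ge (ge_of_tendsto' hlim hbound) one_pos

theorem exists_tendsto_apply_of_norm_le {ι E : Type*} [NormedAddCommGroup E] [NormedSpace ℝ E]
    (l : Ultrafilter ι) {A : ι → StrongDual ℝ E} {C : ℝ} (hA : ∀ i, ‖A i‖ ≤ C) :
    ∃ m : E →ₗ[ℝ] ℝ, ∀ v, Tendsto (fun i => A i v) l (𝓝 (m v)) := by
  obtain ⟨m, -, hm⟩ := (WeakDual.isCompact_closedBall (0 : StrongDual ℝ E) C).ultrafilter_le_nhds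
    (l.map fun i => StrongDual.toWeakDual (A i)) (le_principal_iff.2 <|
      mem_map.2 <| univ_mem' fun i => by simpa using hA i)
  exact ⟨(WeakDual.toStrongDual m).toLinearMap,
    fun v => ((WeakDual.eval_continuous v).tendsto m).comp hm⟩

theorem exists_isInvariantMean (hS : IsSymmGenerating (S : Set G)) {d : ℕ}
    (hgrowth : HasGrowthAtMost S d) : ∃ m : BoundedFunction G →ₗ[ℝ] ℝ, IsInvariantMean m := by
  choose r hr using fun k : ℕ =>
    hgrowth.exists_card_wordBall_succ_le (Nat.one_div_pos_of_nat (α := ℝ) (n := k))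
  have hne (k : ℕ) : (wordBall S (r k)).Nonempty := ⟨1, one_mem_wordBall _⟩
  have hatTop : (hyperfilter ℕ : Filter ℕ) ≤ atTop :=
    hyperfilter_le_cofinite.trans_eq Nat.cofinite_eq_atTop
  obtain ⟨m, hm⟩ := exists_tendsto_apply_of_norm_le (hyperfilter ℕ)
    fun k => norm_average_le_one (wordBall S (r k))
  refine ⟨m, fun φ t ht => ge_of_tendsto' (hm φ) fun k => le_average (hne k) ht, fun g φ => ?_⟩
  have hgen (s : G) (hs : s ∈ S) (ψ : BoundedFunction G) :
      m (rightTranslation G s ψ) = m ψ := by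
    have hzero : Tendsto (fun k : ℕ => 2 * ‖ψ‖ * (1 / ((k : ℝ) + 1))) atTop (𝓝 0) := by
      simpa using (tendsto_one_div_add_atTop_nhds_zero_nat (𝕜 := ℝ)).const_mul (2 * ‖ψ‖)
    refine sub_eq_zero.1 (tendsto_nhds_unique ((hm _).sub (hm ψ)) ?_)
    exact (squeeze_zero_norm (fun k => abs_average_rightTranslation_sub_le (hne k)
      (wordBall_mono (Nat.le_succ _)) (fun x hx => mul_mem_wordBall hx hs) (hr k) ψ)
      hzero).mono_left hatTop
  obtain ⟨l, -, hlS, rfl⟩ := hS.exists_length_eq_wordLength g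
  induction l with
  | nil => simp
  | cons s l ih =>
    rw [List.prod_cons, map_mul, Module.End.mul_apply, hgen s (hlS s (by simp)),
      ih fun x hx => hlS x (List.mem_cons_of_mem s hx)]

end InvariantMean

section Cocycle

variable {G V : Type*} [Group G]

/-- `b` is a `1`-cocycle for `π`: the translation part of an affine action with linear part `π`. -/
def IsCocycle {k : Type*} [Field k] [AddCommGroup V] [Module k V] (π : Representation k G V)
    (b : G → V) : Prop :=
  ∀ g h, b (g * h) = b g + π g (b h)

/-- The function `b` grows at least linearly in the word length. -/
def GrowsLinearly [Norm V] (S : Set G) (b : G → V) : Prop :=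
  ∃ α > 0, ∃ β, ∀ g, α * wordLength S g - β ≤ ‖b g‖

section Algebra

variable {k : Type*} [Field k] [AddCommGroup V] [Module k V] {π : Representation k G V}
  {b c : G → V}

theorem IsCocycle.apply_one (hb : IsCocycle π b) : b 1 = 0 := by
  simpa using hb 1 1

theorem IsCocycle.apply_inv (hb : IsCocycle π b) (g : G) : π g (b g⁻¹) = -b g := by
  rw [eq_neg_iff_add_eq_zero, add_comm, ← hb, mul_inv_cancel, hb.apply_one]

theorem IsCocycle.sub (hb : IsCocycle π b) (hc : IsCocycle π c) : IsCocycle π (b - c) :=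
  fun g h => by
    simp only [Pi.sub_apply, hb g h, hc g h, map_sub]
    abel

theorem isCocycle_coboundary (π : Representation k G V) (v : V) :
    IsCocycle π fun g => π g v - v := fun g h => by
  simp

end Algebra

end Cocycle

section QuasiIsometryCocycle

open scoped ENNReal

variable {G : Type*} [Group G] {S : Finset G} {n : ℕ} {f : G → Fin n → ℤ} {c C : ℕ}

/-- The coordinates of the displacement `x ↦ f (x * g) - f x` of a quasi-isometry, which are
bounded functions. -/
def IsQuasiIsometry.displacement (hf : IsQuasiIsometry S f c C) (g : G) (i : Fin n) :
    BoundedFunction G :=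
  ⟨fun x => f (x * g) i - f x i, memℓp_infty ⟨c * wordLength S g + C,
    Set.forall_mem_range.2 fun x => by
      have hup : zDistNat (f (x * g)) (f x) ≤ c * wordLength S g + C := by
        simpa [zDistNat_comm] using hf.zDistNat_le x (x * g)
      rw [← Int.cast_sub, Real.norm_eq_abs, ← Int.cast_abs, Int.abs_eq_natAbs]
      exact_mod_cast (natAbs_sub_le_zDistNat _ _ i).trans hup⟩⟩

theorem IsQuasiIsometry.displacement_mul (hf : IsQuasiIsometry S f c C) (g h : G) (i : Fin n) :
    hf.displacement (g * h) i
      = hf.displacement g i + rightTranslation G g (hf.displacement h i) := by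
  ext x
  change (f (x * (g * h)) i - f x i : ℝ)
    = (f (x * g) i - f x i) + (f (x * g * h) i - f (x * g) i)
  rw [mul_assoc]
  ring

theorem IsQuasiIsometry.sq_le_sum_sq_displacement (hf : IsQuasiIsometry S f c C) (g x : G)
    (h0 : (0 : ℝ) ≤ wordLength S g / (c + 1) - C) :
    (((wordLength S g : ℝ) / (c + 1) - C) / (n + 1)) ^ 2
      ≤ ∑ i, hf.displacement g i x ^ 2 := by
  set D : ℝ := ((zDistNat (f x) (f (x * g)) : ℕ) : ℝ) with hDdef
  have hlow : (wordLength S g : ℝ) ≤ c * (D + C) := by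
    rw [hDdef]
    exact_mod_cast by simpa using hf.wordLength_le x (x * g)
  have hD : (wordLength S g : ℝ) / (c + 1) - C ≤ D := by
    have : (0 : ℝ) ≤ D + C := by positivity
    rw [sub_le_iff_le_add, div_le_iff₀ (by positivity)]
    linarith
  have hDsum : D = ∑ i, |hf.displacement g i x| := by
    rw [hDdef, ← zDist_eq_zDistNat, zDist]
    exact Finset.sum_congr rfl fun i _ => abs_sub_comm _ _
  have hcauchy : D ^ 2 ≤ n * ∑ i, hf.displacement g i x ^ 2 := by
    simpa [hDsum] using sq_sum_le_card_mul_sum_sq (s := Finset.univ)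
      (f := fun i => |hf.displacement g i x|)
  rw [div_pow, div_le_iff₀ (by positivity)]
  calc ((wordLength S g : ℝ) / (c + 1) - C) ^ 2 ≤ D ^ 2 := by gcongr
    _ ≤ n * ∑ i, hf.displacement g i x ^ 2 := hcauchy
    _ ≤ (∑ i, hf.displacement g i x ^ 2) * (n + 1) ^ 2 := by
        rw [mul_comm]
        gcongr
        nlinarith [n.cast_nonneg (α := ℝ)]

/-- The inner product `(φ, ψ) ↦ ∑ i, m (φ i * ψ i)` that a mean `m` induces on bounded
vector-valued functions. -/
def meanForm {α : Type*} (n : ℕ) (m : BoundedFunction α →ₗ[ℝ] ℝ) :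
    LinearMap.BilinForm ℝ (Fin n → BoundedFunction α) :=
  ∑ i, ((LinearMap.mul ℝ (BoundedFunction α)).compr₂ m).compl₁₂ (LinearMap.proj i)
    (LinearMap.proj i)

theorem meanForm_apply {α : Type*} (m : BoundedFunction α →ₗ[ℝ] ℝ)
    (φ ψ : Fin n → BoundedFunction α) :
    meanForm n m φ ψ = m (∑ i, φ i * ψ i) := by
  simp [meanForm, LinearMap.sum_apply]

theorem IsInvariantMean.le_meanForm_self {m : BoundedFunction G →ₗ[ℝ] ℝ} (hm : IsInvariantMean m)
    (φ : Fin n → BoundedFunction G) {t : ℝ} (h : ∀ x, t ≤ ∑ i, φ i x ^ 2) :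
    t ≤ meanForm n m φ φ := by
  rw [meanForm_apply]
  refine hm.le_of_forall_le _ t fun x => (h x).trans_eq ?_
  rw [lp.coeFn_sum, Finset.sum_apply]
  simp [sq]

theorem IsQuasiIsometry.exists_isCocycle.{w} {G : Type w} [Group G] {S : Finset G}
    {f : G → Fin n → ℤ} (hS : IsSymmGenerating (S : Set G)) (hf : IsQuasiIsometry S f c C) :
    ∃ (H : Type w) (_ : NormedAddCommGroup H) (_ : InnerProductSpace ℝ H) (_ : CompleteSpace H)
      (π : Representation ℝ G H) (b : G → H),
      IsOrthogonal π ∧ IsCocycle π b ∧ GrowsLinearly S b := by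
  obtain ⟨m, hm⟩ := exists_isInvariantMean hS (hf.hasGrowthAtMost hS)
  let ρ : Representation ℝ G (Fin n → BoundedFunction G) :=
    { toFun := fun g => (rightTranslation G g).compLeft (Fin n)
      map_one' := by simp; rfl
      map_mul' := fun g h => by simp; rfl }
  have hsemidef : (meanForm n m).IsPosSemidef :=
    ⟨⟨fun φ ψ => by simp [meanForm_apply, mul_comm]⟩,
      ⟨fun φ => hm.le_meanForm_self φ fun x => by positivity⟩⟩
  have hρ (g : G) (φ) : meanForm n m (ρ g φ) (ρ g φ) = meanForm n m φ φ := by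
    rw [meanForm_apply, meanForm_apply, ← hm.map_translate g (∑ i, φ i * φ i)]
    exact congrArg m (map_sum (rightTranslation G g) (fun i => φ i * φ i) _).symm
  obtain ⟨H, _, _, _, π, T, hπ, hT, hnorm⟩ := exists_isOrthogonal_of_isPosSemidef hsemidef ρ hρ
  refine ⟨H, _, _, ‹_›, π, fun g => T (hf.displacement g), hπ, fun g h => ?_,
    1 / (c + 1) / (n + 1), by positivity, C / (n + 1), fun g => ?_⟩
  · rw [hT, ← map_add]
    exact congrArg T (funext (hf.displacement_mul g h))
  · suffices ((wordLength S g : ℝ) / (c + 1) - C) / (n + 1) ≤ ‖T (hf.displacement g)‖ by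
      convert this using 1
      ring
    rcases le_or_gt ((wordLength S g : ℝ) / (c + 1) - C) 0 with hneg | hpos
    · exact (div_nonpos_of_nonpos_of_nonneg hneg (by positivity)).trans (norm_nonneg _)
    · rw [← sq_le_sq₀ (by positivity) (norm_nonneg _), hnorm]
      exact hm.le_meanForm_self _ fun x => hf.sq_le_sum_sq_displacement g x hpos.le

end QuasiIsometryCocycle

section HarmonicCocycle

variable {G H : Type*} [Group G] {S : Finset G} [NormedAddCommGroup H] [InnerProductSpace ℝ H]
  {π : Representation ℝ G H} {b : G → H}

theorem IsCocycle.norm_le_mul_wordLength (hS : IsSymmGenerating (S : Set G)) (hπ : IsOrthogonal π)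
    (hb : IsCocycle π b) {ε : ℝ} (hε : ∀ s ∈ S, ‖b s‖ ≤ ε) (g : G) :
    ‖b g‖ ≤ ε * wordLength (S : Set G) g := by
  obtain ⟨l, hlen, hlS, rfl⟩ := hS.exists_length_eq_wordLength g
  rw [← hlen]
  clear hlen
  induction l with
  | nil => simp [hb.apply_one]
  | cons s l ih =>
    rw [List.prod_cons, hb, List.length_cons]
    calc ‖b s + π s (b l.prod)‖ ≤ ‖b s‖ + ‖b l.prod‖ := by
          simpa only [hπ s] using norm_add_le (b s) (π s (b l.prod))
      _ ≤ ε + ε * l.length :=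
          add_le_add (hε s (hlS s (by simp))) (ih fun x hx => hlS x (List.mem_cons_of_mem s hx))
      _ = ε * (l.length + 1 : ℕ) := by push_cast; ring

theorem IsCocycle.sum_inner_coboundary (hS : IsSymmGenerating (S : Set G)) (hπ : IsOrthogonal π)
    (hb : IsCocycle π b) (v : H) :
    ∑ s ∈ S, inner ℝ (b s) (π s v - v) = -2 * inner ℝ (∑ s ∈ S, b s) v := by
  have hinner (s : G) : inner ℝ (b s) (π s v) = -inner ℝ (b s⁻¹) v := by
    rw [← hπ.inner_map_map s (b s⁻¹) v, hb.apply_inv, inner_neg_left, neg_neg]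
  have hinv : ∑ s ∈ S, inner ℝ (b s⁻¹) v = ∑ s ∈ S, inner ℝ (b s) v :=
    Finset.sum_nbij' (·⁻¹) (·⁻¹) (fun s hs => hS.inv_mem hs) (fun s hs => hS.inv_mem hs)
      (by simp) (by simp) (by simp)
  simp only [inner_sub_right, hinner, Finset.sum_sub_distrib, Finset.sum_neg_distrib, hinv,
    sum_inner]
  ring

/-- The value at the product of a word in `S` of the cocycle whose values on `S` are `x`. -/
def cocycleOfWord (π : Representation ℝ G H) (x : S → H) : List S → H
  | [] => 0
  | s :: l => x s + π s (cocycleOfWord π x l)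

theorem IsCocycle.cocycleOfWord_eq (hb : IsCocycle π b) (l : List S) :
    cocycleOfWord π (fun s : S => b s) l = b (l.map (↑)).prod := by
  induction l with
  | nil => exact hb.apply_one.symm
  | cons s l ih => rw [cocycleOfWord, ih, List.map_cons, List.prod_cons, hb]

theorem IsOrthogonal.continuous_cocycleOfWord (hπ : IsOrthogonal π) (l : List S) :
    Continuous fun x : PiLp 2 fun _ : S => H => cocycleOfWord π x l := by
  induction l with
  | nil => exact continuous_const
  | cons s l ih => exact (PiLp.continuous_apply 2 _ s).add ((hπ.continuous s).comp ih)

/-- The restriction to `S` of the coboundary of a vector. Its values lie in the Hilbert sum of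
copies of `H` indexed by `S`, where the harmonic cocycles are the orthogonal of all coboundaries. -/
def coboundaryOn (S : Finset G) (π : Representation ℝ G H) : H →ₗ[ℝ] PiLp 2 fun _ : S => H :=
  (WithLp.linearEquiv 2 ℝ (S → H)).symm.toLinearMap ∘ₗ LinearMap.pi fun s : S => π s - 1

@[simp]
theorem coboundaryOn_apply (v : H) (s : S) : coboundaryOn S π v s = π s v - v :=
  rfl

theorem exists_isCocycle_of_mem_closure_coboundaryOn (hS : IsSymmGenerating (S : Set G))
    (hπ : IsOrthogonal π) {x : PiLp 2 fun _ : S => H}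
    (hx : x ∈ (LinearMap.range (coboundaryOn S π)).topologicalClosure) :
    ∃ c, IsCocycle π c ∧ ∀ s : S, c s = x s := by
  have hword (g : G) : ∃ l : List S, (l.map (↑)).prod = g := by
    obtain ⟨l, -, hlS, hl⟩ := hS.exists_length_eq_wordLength g
    lift l to List S using hlS
    exact ⟨l, hl⟩
  choose w hw using hword
  have hcont (g : G) := hπ.continuous_cocycleOfWord (w g)
  -- The conditions on `x` are closed, and coboundaries satisfy them.
  have hclosed : IsClosed {x : PiLp 2 fun _ : S => H |
      IsCocycle π (fun g => cocycleOfWord π x (w g)) ∧ ∀ s : S, cocycleOfWord π x (w s) = x s} := by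
    simp only [IsCocycle, Set.ofPred_and, Set.ofPred_forall]
    exact (isClosed_iInter fun g => isClosed_iInter fun h => isClosed_eq (hcont _)
      ((hcont g).add ((hπ.continuous g).comp (hcont h)))).inter
      (isClosed_iInter fun s => isClosed_eq (hcont _) (PiLp.continuous_apply 2 _ s))
  refine ⟨_, closure_minimal ?_ hclosed hx⟩
  rintro _ ⟨v, rfl⟩
  have heval (g : G) : cocycleOfWord π (coboundaryOn S π v) (w g) = π g v - v :=
    ((isCocycle_coboundary π v).cocycleOfWord_eq (w g)).trans (by rw [hw])
  simp only [Set.mem_ofPred_eq, heval]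
  exact ⟨isCocycle_coboundary π v, fun s => rfl⟩

theorem IsCocycle.sum_eq_zero_of_mem_orthogonal (hS : IsSymmGenerating (S : Set G))
    (hπ : IsOrthogonal π) (hb : IsCocycle π b)
    (horth : WithLp.toLp 2 (fun s : S => b s) ∈ (LinearMap.range (coboundaryOn S π))ᗮ) :
    ∑ s ∈ S, b s = 0 := by
  refine inner_self_eq_zero (𝕜 := ℝ).1 ?_
  have hinner := (Submodule.mem_orthogonal' _ _).1 horth _ ⟨∑ s ∈ S, b s, rfl⟩
  simp only [PiLp.inner_apply, coboundaryOn_apply] at hinner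
  rw [Finset.sum_coe_sort S fun s => inner ℝ (b s) (π s (∑ s ∈ S, b s) - ∑ s ∈ S, b s),
    hb.sum_inner_coboundary hS hπ] at hinner
  linarith

theorem GrowsLinearly.sub (hS : IsSymmGenerating (S : Set G)) (hπ : IsOrthogonal π)
    (hgrow : GrowsLinearly (S : Set G) b) {c : G → H} (hc : IsCocycle π c)
    (hmem : WithLp.toLp 2 (fun s : S => c s) ∈
      (LinearMap.range (coboundaryOn S π)).topologicalClosure) :
    GrowsLinearly (S : Set G) (b - c) := by
  obtain ⟨α, hα, β, hβ⟩ := hgrow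
  obtain ⟨_, ⟨v, rfl⟩, hv⟩ := Metric.mem_closure_iff.1 hmem (α / 2) (half_pos hα)
  have hnear (g : G) : ‖c g - (π g v - v)‖ ≤ α / 2 * wordLength (S : Set G) g := by
    refine (hc.sub (isCocycle_coboundary π v)).norm_le_mul_wordLength hS hπ (fun s hs => ?_) g
    rw [dist_eq_norm] at hv
    exact (PiLp.norm_apply_le _ (⟨s, hs⟩ : S)).trans hv.le
  refine ⟨α / 2, half_pos hα, β + 2 * ‖v‖, fun g => ?_⟩
  have hb : b g = (b - c) g + (c g - (π g v - v)) + (π g v - v) := by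
    simp only [Pi.sub_apply]
    abel
  have hcob : ‖π g v - v‖ ≤ 2 * ‖v‖ := by
    simpa [hπ g, two_mul] using norm_sub_le (π g v) v
  linarith [hβ g, hnear g, hb ▸ norm_add₃_le (a := (b - c) g) (b := c g - (π g v - v))
    (c := π g v - v)]

theorem GrowsLinearly.exists_harmonic [CompleteSpace H] (hS : IsSymmGenerating (S : Set G))
    (hπ : IsOrthogonal π) (hb : IsCocycle π b) (hgrow : GrowsLinearly (S : Set G) b) :
    ∃ b', IsCocycle π b' ∧ ∑ s ∈ S, b' s = 0 ∧ GrowsLinearly (S : Set G) b' := by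
  set K := (LinearMap.range (coboundaryOn S π)).topologicalClosure
  have : CompleteSpace K := (Submodule.isClosed_topologicalClosure _).completeSpace_coe
  obtain ⟨y, hyK, z, hz, hyz⟩ :=
    K.exists_add_mem_mem_orthogonal (WithLp.toLp 2 fun s : S => b s)
  obtain ⟨c, hc, hcy⟩ := exists_isCocycle_of_mem_closure_coboundaryOn hS hπ hyK
  obtain rfl : y = WithLp.toLp 2 fun s : S => c s := PiLp.ext fun s => (hcy s).symm
  obtain rfl : z = WithLp.toLp 2 fun s : S => (b - c) s := eq_sub_of_add_eq' hyz.symm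
  exact ⟨b - c, hb.sub hc, (hb.sub hc).sum_eq_zero_of_mem_orthogonal hS hπ
    (Submodule.orthogonal_le (Submodule.le_topologicalClosure _) hz), hgrow.sub hS hπ hc hyK⟩

theorem IsCocycle.inner_mem_linearGrowthHarmonic (hS : IsSymmGenerating (S : Set G))
    (hπ : IsOrthogonal π) (hb : IsCocycle π b) (hsum : ∑ s ∈ S, b s = 0) (v : H) :
    (fun x => inner ℝ v (b x)) ∈ linearGrowthHarmonic S := by
  refine ⟨fun x => ?_, ‖v‖ * ∑ s ∈ S, ‖b s‖, fun x => ?_⟩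
  · simp only [hb x, inner_add_right, add_sub_cancel_left]
    rw [← inner_sum, ← map_sum, hsum, map_zero, inner_zero_right]
  · have hbx := hb.norm_le_mul_wordLength hS hπ (fun s hs => Finset.single_le_sum
      (f := fun s => ‖b s‖) (fun _ _ => norm_nonneg _) hs) x
    calc |inner ℝ v (b x)| ≤ ‖v‖ * ‖b x‖ := abs_real_inner_le_norm _ _
      _ ≤ ‖v‖ * ((∑ s ∈ S, ‖b s‖) * (wordLength (S : Set G) x + 1)) := by
        gcongr
        exact hbx.trans (by gcongr; linarith)
      _ = _ := (mul_assoc _ _ _).symm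

theorem IsCocycle.finiteDimensional_span (hS : IsSymmGenerating (S : Set G))
    (hπ : IsOrthogonal π) (hb : IsCocycle π b) (hsum : ∑ s ∈ S, b s = 0)
    [FiniteDimensional ℝ (linearGrowthHarmonic S)] :
    FiniteDimensional ℝ (Submodule.span ℝ (Set.range b)) := by
  let pairing : H →ₗ[ℝ] linearGrowthHarmonic S :=
    { toFun := fun v => ⟨_, hb.inner_mem_linearGrowthHarmonic hS hπ hsum v⟩
      map_add' := fun v w => Subtype.ext (funext fun x => inner_add_left v w (b x))
      map_smul' := fun t v => Subtype.ext (funext fun x => real_inner_smul_left v (b x) t) }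
  refine FiniteDimensional.of_injective (pairing ∘ₗ Submodule.subtype _)
    (LinearMap.ker_eq_bot.1 (LinearMap.ker_eq_bot'.2 fun v hv => ?_))
  have horth (g : G) : inner ℝ (v : H) (b g) = 0 := congrFun (congrArg Subtype.val hv) g
  have hspan : Submodule.span ℝ (Set.range b) ≤ LinearMap.ker (innerₛₗ ℝ (v : H)) :=
    Submodule.span_le.2 (Set.range_subset_iff.2 horth)
  exact Subtype.ext (inner_self_eq_zero.1 (hspan v.2))

theorem IsCocycle.span_le_comap (hb : IsCocycle π b) (g : G) :
    Submodule.span ℝ (Set.range b) ≤ (Submodule.span ℝ (Set.range b)).comap (π g) := by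
  refine Submodule.span_le.2 (Set.range_subset_iff.2 fun h => ?_)
  have hmem (x : G) : b x ∈ Submodule.span ℝ (Set.range b) := Submodule.subset_span ⟨x, rfl⟩
  simpa [hb g h] using sub_mem (hmem (g * h)) (hmem g)

theorem IsQuasiIsometry.exists_isCocycle_finiteDimensional.{w} {G : Type w} [Group G]
    {S : Finset G} {n : ℕ} {f : G → Fin n → ℤ} {c C : ℕ} (hS : IsSymmGenerating (S : Set G))
    (hf : IsQuasiIsometry S f c C) :
    ∃ (E : Type w) (_ : NormedAddCommGroup E) (_ : InnerProductSpace ℝ E)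
      (_ : FiniteDimensional ℝ E) (π : Representation ℝ G E) (b : G → E),
      IsOrthogonal π ∧ IsCocycle π b ∧ GrowsLinearly S b := by
  obtain ⟨H, _, _, _, π, b₀, hπ, hb₀, hgrow₀⟩ := hf.exists_isCocycle hS
  obtain ⟨b, hb, hsum, hgrow⟩ := hgrow₀.exists_harmonic hS hπ hb₀
  obtain ⟨K, hK⟩ := (hf.hasGrowthAtMost hS).exists_isDoubling (hf.hasGrowthAtLeast hS)
  have := finiteDimensional_linearGrowthHarmonic hS (hf.hasGrowthAtMost hS) hK
  exact ⟨Submodule.span ℝ (Set.range b), inferInstance, inferInstance,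
    hb.finiteDimensional_span hS hπ hsum, π.subrepresentation _ hb.span_le_comap,
    fun g => ⟨b g, Submodule.subset_span ⟨g, rfl⟩⟩, fun g v => hπ g v,
    fun g h => Subtype.ext (hb g h), hgrow⟩

end HarmonicCocycle

section NilpotentCohomology

variable {G k V : Type*} [Group G] [Field k] [AddCommGroup V] [Module k V]
  {π : Representation k G V} {b : G → V}

/-- A cocycle is a coboundary if the corresponding affine action fixes a point (here `-p`). -/
def IsCoboundary (π : Representation k G V) (b : G → V) : Prop :=
  ∃ p, ∀ g, b g = π g p - p

/-- The kernel of the affine action with linear part `π` and translation part `b`. -/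
def IsCocycle.actionKernel (hb : IsCocycle π b) : Subgroup G where
  carrier := {g | π g = 1 ∧ b g = 0}
  one_mem' := ⟨map_one π, hb.apply_one⟩
  mul_mem' := by
    rintro g h ⟨hg, hg'⟩ ⟨hh, hh'⟩
    exact ⟨by rw [map_mul, hg, hh, one_mul], by rw [hb, hg', hh', map_zero, add_zero]⟩
  inv_mem' := by
    rintro g ⟨hg, hg'⟩
    have hπ : π g⁻¹ = 1 := by simpa [hg] using (map_mul π g g⁻¹).symm
    exact ⟨hπ, by simpa [hg, hg'] using hb.apply_inv g⟩

theorem IsCocycle.mem_actionKernel (hb : IsCocycle π b) {g : G} :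
    g ∈ hb.actionKernel ↔ π g = 1 ∧ b g = 0 :=
  Iff.rfl

instance IsCocycle.normal_actionKernel (hb : IsCocycle π b) : hb.actionKernel.Normal where
  conj_mem := by
    intro g hg x
    obtain ⟨hg, hg'⟩ := hb.mem_actionKernel.1 hg
    refine ⟨by rw [map_mul, map_mul, hg, mul_one, ← map_mul, mul_inv_cancel, map_one], ?_⟩
    rw [hb, hb, hg', map_zero, add_zero, map_mul, hg, mul_one, hb.apply_inv, add_neg_cancel]

theorem IsCocycle.isCoboundary_of_quotient (hb : IsCocycle π b) {N : Subgroup G} [N.Normal]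
    (hN : N ≤ hb.actionKernel)
    (h : ∀ (π' : Representation k (G ⧸ N) V) (b' : G ⧸ N → V), IsCocycle π' b' →
      π'.invariants = π.invariants → IsCoboundary π' b') :
    IsCoboundary π b := by
  let π' : Representation k (G ⧸ N) V :=
    QuotientGroup.lift N π fun g hg => (hb.mem_actionKernel.1 (hN hg)).1
  let b' : G ⧸ N → V := fun q => Quotient.liftOn' q b fun g h hgh => by
    obtain ⟨-, hker⟩ := hb.mem_actionKernel.1 (hN (QuotientGroup.leftRel_apply.1 hgh))
    rw [← mul_inv_cancel_left g h, hb, hker, map_zero, add_zero]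
  obtain ⟨p, hp⟩ := h π' b' (fun q r => by
    induction q using QuotientGroup.induction_on
    induction r using QuotientGroup.induction_on
    exact hb _ _) (Submodule.ext fun v => QuotientGroup.mk_surjective.forall)
  exact ⟨p, fun g => hp g⟩

theorem IsCocycle.center_le_actionKernel (hb : IsCocycle π b) (hπ : π.invariants = ⊥)
    (htriv : ∀ z ∈ Subgroup.center G, π z = 1) : Subgroup.center G ≤ hb.actionKernel := by
  refine fun z hz => ⟨htriv z hz, (Submodule.eq_bot_iff _).1 hπ _ fun g => ?_⟩
  have hcomm := hb g z
  rw [Subgroup.mem_center_iff.1 hz g, hb, htriv z hz, Module.End.one_apply, add_comm] at hcomm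
  exact (add_left_cancel hcomm).symm

theorem IsCocycle.isCoboundary_of_mem_center (hb : IsCocycle π b) {z : G}
    (hz : z ∈ Subgroup.center G) (hπz : π z ≠ 1)
    (ih : ∀ W : Submodule k V, W ≠ ⊤ → (∀ g, W ≤ W.comap (π g)) →
      ∀ c, IsCocycle π c → (∀ g, c g ∈ W) → ∃ p ∈ W, ∀ g, c g = π g p - p) :
    IsCoboundary π b := by
  set T : V →ₗ[k] V := π z - 1
  have hcomm (g : G) (v : V) : T (π g v) = π g (T v) := by
    have := congrArg (fun x => π x v) (Subgroup.mem_center_iff.1 hz g)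
    simp only [map_mul, Module.End.mul_apply] at this
    simp [T, this]
  have hTb (g : G) : T (b g) = π g (b z) - b z := by
    have := congrArg b (Subgroup.mem_center_iff.1 hz g)
    rw [hb, hb] at this
    rw [LinearMap.sub_apply, Module.End.one_apply, sub_eq_sub_iff_add_eq_add, add_comm, ← this,
      add_comm]
  obtain ⟨p, hp⟩ : ∃ p, ∀ g, T (b g) = T (π g p - p) := by
    by_cases hT : LinearMap.range T = ⊤
    · obtain ⟨p, hp⟩ := LinearMap.range_eq_top.1 hT (b z)
      exact ⟨p, fun g => by rw [hTb, ← hp, map_sub, hcomm]⟩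
    · obtain ⟨_, ⟨p, rfl⟩, hp⟩ := ih _ hT (fun g => by
          rintro _ ⟨v, rfl⟩
          exact ⟨π g v, hcomm g v⟩) (fun g => T (b g))
        (fun g h => by simp only [hb g h, map_add, hcomm]) fun g => ⟨b g, rfl⟩
      exact ⟨p, fun g => by rw [hp, map_sub, hcomm]⟩
  have hker : LinearMap.ker T ≠ ⊤ := fun h => hπz (sub_eq_zero.1 (LinearMap.ker_eq_top.1 h))
  obtain ⟨q, -, hq⟩ := ih _ hker
    (fun g v hv => by rw [Submodule.mem_comap, LinearMap.mem_ker, hcomm, hv, map_zero])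
    _ (hb.sub (isCocycle_coboundary π p)) fun g => by simp [hp]
  refine ⟨p + q, fun g => ?_⟩
  rw [map_add, add_sub_add_comm, ← hq, Pi.sub_apply, add_sub_cancel]

theorem IsCocycle.isCoboundary_of_isNilpotent [FiniteDimensional k V] [Group.IsNilpotent G]
    (hb : IsCocycle π b) (hπ : π.invariants = ⊥) : IsCoboundary π b := by
  revert V
  refine Group.nilpotent_center_quotient_ind (P := fun G _ _ => ∀ {V : Type _} [AddCommGroup V]
    [Module k V] {π : Representation k G V} {b : G → V} [FiniteDimensional k V],
    IsCocycle π b → π.invariants = ⊥ → IsCoboundary π b) G ?_ ?_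
  · intro G _ _ V _ _ π b _ hb _
    refine ⟨0, fun g => ?_⟩
    rw [Subsingleton.elim g 1, hb.apply_one, map_zero, sub_zero]
  · intro G _ _ ihG V _ _ π b _ hb hπ
    induction hdim : Module.finrank k V using Nat.strong_induction_on generalizing V with
    | _ n ihV =>
      by_cases htriv : ∀ z ∈ Subgroup.center G, π z = 1
      · exact hb.isCoboundary_of_quotient (hb.center_le_actionKernel hπ htriv)
          fun π' b' hb' hinv => ihG hb' (hinv.trans hπ)
      · push Not at htriv
        obtain ⟨z, hz, hπz⟩ := htriv
        refine hb.isCoboundary_of_mem_center hz hπz fun W hW hinv c hc hcW => ?_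
        obtain ⟨p, hp⟩ := ihV _ (hdim ▸ Submodule.finrank_lt hW)
          (π := π.subrepresentation W hinv) (b := fun g => ⟨c g, hcW g⟩)
          (fun g h => Subtype.ext (hc g h))
          ((Submodule.eq_bot_iff _).2 fun w hw => Subtype.ext <|
            (Submodule.eq_bot_iff _).1 hπ _ fun g => congrArg Subtype.val (hw g)) rfl
        exact ⟨p, p.2, fun g => congrArg Subtype.val (hp g)⟩

end NilpotentCohomology

section IteratedCommutators

open scoped commutatorElement

variable {G : Type*} [Group G]

/-- The left-normed commutators of weight `n + 1` in elements of `X`. -/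
def iteratedCommutators (X : Set G) : ℕ → Set G
  | 0 => X
  | n + 1 => Set.image2 (⁅·, ·⁆) (iteratedCommutators X n) X

theorem commutatorElement_mem_of_mem_closure {N : Subgroup G} [N.Normal] {X : Set G} {x : G}
    (h : ∀ y ∈ X, ⁅x, y⁆ ∈ N) {y : G} (hy : y ∈ Subgroup.closure X) : ⁅x, y⁆ ∈ N := by
  induction hy using Subgroup.closure_induction with
  | mem y hy => exact h y hy
  | one => simp
  | mul y z _ _ hy hz =>
    rw [show ⁅x, y * z⁆ = ⁅x, y⁆ * (y * ⁅x, z⁆ * y⁻¹) by simp [commutatorElement_def, mul_assoc]]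
    exact mul_mem hy (Subgroup.Normal.conj_mem ‹_› _ hz y)
  | inv y _ hy =>
    rw [show ⁅x, y⁻¹⁆ = y⁻¹ * ⁅x, y⁆⁻¹ * y⁻¹⁻¹ by simp [commutatorElement_def, mul_assoc]]
    exact Subgroup.Normal.conj_mem ‹_› _ (inv_mem hy) y⁻¹

theorem isNilpotent_quotient_of_iteratedCommutators_subset {X : Set G}
    (hX : Subgroup.closure X = ⊤) {N : Subgroup G} [N.Normal] {n : ℕ}
    (hn : iteratedCommutators X n ⊆ N) : Group.IsNilpotent (G ⧸ N) := by
  have hseries (j : ℕ) : ∀ i, i + j = n → ∀ x ∈ iteratedCommutators X i,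
      (x : G ⧸ N) ∈ Subgroup.upperCentralSeries (G ⧸ N) j := by
    induction j with
    | zero =>
      rintro i rfl x hx
      exact (QuotientGroup.eq_one_iff x).2 (hn hx)
    | succ j ih =>
      refine fun i hi x hx => Subgroup.mem_upperCentralSeries_succ_iff.2 fun y => ?_
      obtain ⟨y, rfl⟩ := QuotientGroup.mk_surjective y
      refine commutatorElement_mem_of_mem_closure
        (N := (Subgroup.upperCentralSeries (G ⧸ N) j).comap (QuotientGroup.mk' N)) (X := X)
        (fun y hy => ih (i + 1) (by omega) _ ⟨x, hx, y, hy, rfl⟩) (hX ▸ Subgroup.mem_top y)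
  refine ⟨n, eq_top_iff.2 fun q _ => ?_⟩
  obtain ⟨q, rfl⟩ := QuotientGroup.mk_surjective q
  have hle : Subgroup.closure X ≤
      (Subgroup.upperCentralSeries (G ⧸ N) n).comap (QuotientGroup.mk' N) :=
    (Subgroup.closure_le _).2 (hseries n 0 (zero_add n))
  exact hle (hX ▸ Subgroup.mem_top q)

end IteratedCommutators

section MetricallyProper

variable {G E : Type*} [Group G] [NormedAddCommGroup E]

/-- `b` is metrically proper: its norm has finite sublevel sets. -/
def IsMetricallyProper (b : G → E) : Prop :=
  ∀ R : ℝ, {g | ‖b g‖ ≤ R}.Finite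

theorem GrowsLinearly.isMetricallyProper {S : Finset G} {b : G → E}
    (hS : IsSymmGenerating (S : Set G)) (hb : GrowsLinearly S b) : IsMetricallyProper b := by
  obtain ⟨α, hα, β, hlow⟩ := hb
  refine fun R => (wordBall S ⌈(R + β) / α⌉₊).finite_toSet.subset fun g hg =>
    hS.mem_wordBall.2 ?_
  have hlen : (wordLength S g : ℝ) ≤ (R + β) / α := by
    rw [le_div_iff₀ hα, mul_comm]
    linarith [hlow g, show ‖b g‖ ≤ R from hg]
  exact_mod_cast hlen.trans (Nat.le_ceil _)

end MetricallyProper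

section SmallRotations

open scoped commutatorElement
open Filter Topology

variable {G E : Type*} [Group G] [NormedAddCommGroup E] [InnerProductSpace ℝ E]
  [FiniteDimensional ℝ E] {π : Representation ℝ G E} {b : G → E}

/-- A finite-dimensional representation, with values in the normed algebra of operators. -/
def operatorHom (π : Representation ℝ G E) : G →* (E →L[ℝ] E) :=
  (MonoidHomClass.toMonoidHom (Module.End.toContinuousLinearMap (𝕜 := ℝ) E)).comp π

/-- The size of the rotational part of `g`: the operator norm of `π g - 1`. -/
def rotationNorm (π : Representation ℝ G E) (g : G) : ℝ :=
  ‖operatorHom π g - 1‖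

theorem norm_sub_le_rotationNorm_mul (π : Representation ℝ G E) (g : G)
    (v : E) : ‖π g v - v‖ ≤ rotationNorm π g * ‖v‖ :=
  (operatorHom π g - 1).le_opNorm v

theorem rotationNorm_eq_zero_iff {g : G} : rotationNorm π g = 0 ↔ π g = 1 := by
  rw [rotationNorm, norm_eq_zero, sub_eq_zero]
  exact map_eq_one_iff _ (Module.End.toContinuousLinearMap (𝕜 := ℝ) E).injective

theorem IsOrthogonal.norm_operatorHom_le (hπ : IsOrthogonal π) (g : G) :
    ‖operatorHom π g‖ ≤ 1 :=
  ContinuousLinearMap.opNorm_le_bound _ zero_le_one fun v =>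
    ((hπ g v).trans (one_mul _).symm).le

theorem IsOrthogonal.rotationNorm_mul_inv_le (hπ : IsOrthogonal π) (g h : G) :
    rotationNorm π (g * h⁻¹) ≤ ‖operatorHom π g - operatorHom π h‖ := by
  have hfactor : operatorHom π (g * h⁻¹) - 1
      = (operatorHom π g - operatorHom π h) * operatorHom π h⁻¹ := by
    rw [sub_mul, ← map_mul, ← map_mul, mul_inv_cancel, map_one]
  rw [rotationNorm, hfactor]
  exact (norm_mul_le _ _).trans
    (mul_le_of_le_one_right (norm_nonneg _) (hπ.norm_operatorHom_le _))

theorem IsOrthogonal.rotationNorm_commutatorElement_le (hπ : IsOrthogonal π) (x y : G) :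
    rotationNorm π ⁅x, y⁆ ≤ 2 * rotationNorm π x * rotationNorm π y := by
  set U := operatorHom π
  calc rotationNorm π ⁅x, y⁆
      = rotationNorm π (x * y * (y * x)⁻¹) := by
        rw [commutatorElement_def, mul_inv_rev, mul_assoc (x * y)]
    _ ≤ ‖U (x * y) - U (y * x)‖ := hπ.rotationNorm_mul_inv_le _ _
    _ = ‖(U x - 1) * (U y - 1) - (U y - 1) * (U x - 1)‖ := by
      rw [map_mul, map_mul]
      congr 1
      noncomm_ring
    _ ≤ ‖U x - 1‖ * ‖U y - 1‖ + ‖U y - 1‖ * ‖U x - 1‖ :=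
      (norm_sub_le _ _).trans (add_le_add (norm_mul_le _ _) (norm_mul_le _ _))
    _ = 2 * rotationNorm π x * rotationNorm π y := by
      rw [rotationNorm, rotationNorm]
      ring

theorem IsCocycle.norm_commutatorElement_le (hb : IsCocycle π b) (hπ : IsOrthogonal π) (x y : G) :
    ‖b ⁅x, y⁆‖ ≤ rotationNorm π x * ‖b y‖ + rotationNorm π y * ‖b x‖
      + rotationNorm π ⁅x, y⁆ * (‖b x‖ + ‖b y‖) := by
  have hyx : ‖b (y * x)‖ ≤ ‖b x‖ + ‖b y‖ := by
    rw [hb, add_comm ‖b x‖, ← hπ y (b x)]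
    exact norm_add_le _ _
  have hdecomp : b ⁅x, y⁆ =
      (π x (b y) - b y) - (π y (b x) - b x) - (π ⁅x, y⁆ (b (y * x)) - b (y * x)) := by
    have hxy : b x + π x (b y) = b ⁅x, y⁆ + π ⁅x, y⁆ (b (y * x)) := by
      rw [← hb, ← hb, commutatorElement_def]
      group
    rw [eq_sub_of_add_eq hxy.symm, hb y x]
    abel
  calc ‖b ⁅x, y⁆‖
      ≤ ‖π x (b y) - b y‖ + ‖π y (b x) - b x‖ + ‖π ⁅x, y⁆ (b (y * x)) - b (y * x)‖ := by
        rw [hdecomp]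
        exact (norm_sub_le _ _).trans (add_le_add_left (norm_sub_le _ _) _)
    _ ≤ rotationNorm π x * ‖b y‖ + rotationNorm π y * ‖b x‖
        + rotationNorm π ⁅x, y⁆ * ‖b (y * x)‖ := by
      gcongr <;> exact norm_sub_le_rotationNorm_mul π _ _
    _ ≤ _ := by
      gcongr
      exact norm_nonneg _

theorem IsCocycle.le_of_mem_iteratedCommutators (hb : IsCocycle π b) (hπ : IsOrthogonal π)
    {X : Set G} {L : ℝ} (hrot : ∀ x ∈ X, rotationNorm π x ≤ 1 / 8) (hL : ∀ x ∈ X, ‖b x‖ ≤ L)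
    (j : ℕ) : ∀ x ∈ iteratedCommutators X j,
      rotationNorm π x ≤ 1 / 8 * (1 / 2) ^ j ∧ ‖b x‖ ≤ L * (1 / 2) ^ j := by
  induction j with
  | zero => exact fun x hx => by simpa only [pow_zero, mul_one] using ⟨hrot x hx, hL x hx⟩
  | succ j ih =>
    rintro _ ⟨x, hx, y, hy, rfl⟩
    obtain ⟨hrx, hbx⟩ := ih x hx
    have hry := hrot y hy
    have hby := hL y hy
    have hr0 : ∀ g, 0 ≤ rotationNorm π g := fun g => norm_nonneg _
    have hL0 : 0 ≤ L := (norm_nonneg _).trans hby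
    rw [pow_succ]
    set q : ℝ := (1 / 2) ^ j
    have hq0 : 0 ≤ q := by positivity
    have hq1 : q ≤ 1 := pow_le_one₀ (by norm_num) (by norm_num)
    have hLq : L * q ≤ L := mul_le_of_le_one_right hL0 hq1
    have hrxy : rotationNorm π ⁅x, y⁆ ≤ 1 / 32 * q :=
      calc rotationNorm π ⁅x, y⁆ ≤ 2 * rotationNorm π x * rotationNorm π y :=
            hπ.rotationNorm_commutatorElement_le x y
        _ ≤ 2 * (1 / 8 * q) * (1 / 8) := by gcongr; exact hr0 y
        _ = 1 / 32 * q := by ring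
    refine ⟨by linarith, ?_⟩
    calc ‖b ⁅x, y⁆‖ ≤ rotationNorm π x * ‖b y‖ + rotationNorm π y * ‖b x‖
          + rotationNorm π ⁅x, y⁆ * (‖b x‖ + ‖b y‖) := hb.norm_commutatorElement_le hπ x y
      _ ≤ 1 / 8 * q * L + 1 / 8 * (L * q) + 1 / 32 * q * (L + L) := by
        gcongr
        exact hbx.trans hLq
      _ ≤ L * (q * (1 / 2)) := by linarith [mul_nonneg hL0 hq0]

theorem IsCocycle.exists_iteratedCommutators_subset (hb : IsCocycle π b) (hπ : IsOrthogonal π)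
    (hproper : IsMetricallyProper b) {X : Set G} {L : ℝ}
    (hrot : ∀ x ∈ X, rotationNorm π x ≤ 1 / 8) (hL : ∀ x ∈ X, ‖b x‖ ≤ L) :
    ∃ k, iteratedCommutators X k ⊆ hb.actionKernel := by
  have hdecay : Tendsto (fun k : ℕ => (1 / 8 + L) * (1 / 2 : ℝ) ^ k) atTop (𝓝 0) := by
    simpa using (tendsto_pow_atTop_nhds_zero_of_lt_one (r := (1 / 2 : ℝ))
      (by norm_num) (by norm_num)).const_mul (1 / 8 + L)
  obtain ⟨k, hk⟩ := ((eventually_all_finite (hproper L)).2 fun g _ =>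
    show ∀ᶠ k : ℕ in atTop, 0 < rotationNorm π g + ‖b g‖ →
      (1 / 8 + L) * (1 / 2 : ℝ) ^ k < rotationNorm π g + ‖b g‖ from
    eventually_imp_distrib_left.2 hdecay.eventually_lt_const).exists
  refine ⟨k, fun x hx => ?_⟩
  obtain ⟨hrx, hbx⟩ := hb.le_of_mem_iteratedCommutators hπ hrot hL k x hx
  have hL0 : 0 ≤ L := nonneg_of_mul_nonneg_left ((norm_nonneg _).trans hbx) (by positivity)
  have hxL : ‖b x‖ ≤ L :=
    hbx.trans (mul_le_of_le_one_right hL0 (pow_le_one₀ (by norm_num) (by norm_num)))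
  have hr0 : 0 ≤ rotationNorm π x := norm_nonneg _
  have hb0 : 0 ≤ ‖b x‖ := norm_nonneg _
  have hzero : ¬ 0 < rotationNorm π x + ‖b x‖ := fun hpos => by
    linarith [hk x hxL hpos, add_mul (1 / 8) L ((1 / 2 : ℝ) ^ k)]
  exact ⟨rotationNorm_eq_zero_iff.1 (by linarith), norm_eq_zero.1 (by linarith)⟩

end SmallRotations

section FiniteIndex

open scoped Pointwise

variable {G : Type*} [Group G]

theorem finiteIndex_of_exists_mul_inv_mem {S T : Set G} {H : Subgroup G}
    (hS : Submonoid.closure S = ⊤) (hT : T.Finite) (h1 : 1 ∈ T)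
    (h : ∀ t ∈ T, ∀ s ∈ S, ∃ t' ∈ T, t * s * t'⁻¹ ∈ H) : H.FiniteIndex := by
  have hcover (g : G) : ∃ t ∈ T, g * t⁻¹ ∈ H := by
    induction hS ▸ Submonoid.mem_top g using Submonoid.closure_induction_right with
    | one => exact ⟨1, h1, by simp⟩
    | mul_right g _ s hs ih =>
      obtain ⟨t, ht, hgt⟩ := ih
      obtain ⟨t', ht', hts⟩ := h t ht s hs
      exact ⟨t', ht', by simpa [mul_assoc] using H.mul_mem hgt hts⟩
  have := hT.to_subtype
  have : Finite (G ⧸ H) := by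
    refine Finite.of_surjective (fun t : T => ((t⁻¹ : G) : G ⧸ H)) fun q => ?_
    obtain ⟨g, rfl⟩ := QuotientGroup.mk_surjective q
    obtain ⟨t, ht, hgt⟩ := hcover g⁻¹
    exact ⟨⟨t, ht⟩, (QuotientGroup.eq.2 hgt).symm⟩
  exact Subgroup.finiteIndex_of_finite_quotient

variable {E : Type*} [NormedAddCommGroup E] [InnerProductSpace ℝ E] [FiniteDimensional ℝ E]
  {π : Representation ℝ G E}

theorem IsOrthogonal.exists_finite_net (hπ : IsOrthogonal π) {ε : ℝ} (hε : 0 < ε) :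
    ∃ T : Set G, T.Finite ∧ ∀ g, ∃ t ∈ T, rotationNorm π (g * t⁻¹) ≤ ε := by
  have hbounded : TotallyBounded (operatorHom π '' Set.univ) :=
    (isCompact_closedBall (0 : E →L[ℝ] E) 1).totallyBounded.subset <| by
      rintro _ ⟨g, -, rfl⟩
      simpa using hπ.norm_operatorHom_le g
  obtain ⟨T, -, hT, hcover⟩ := Set.exists_subset_image_finite_and.1
    (Metric.finite_approx_of_totallyBounded hbounded ε hε)
  refine ⟨T, hT, fun g => ?_⟩
  obtain ⟨_, ⟨t, ht, rfl⟩, hgt⟩ := Set.mem_iUnion₂.1 (hcover ⟨g, Set.mem_univ g, rfl⟩)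
  exact ⟨t, ht, (hπ.rotationNorm_mul_inv_le g t).trans (mem_ball_iff_norm.1 hgt).le⟩

theorem IsOrthogonal.exists_finiteIndex_closure {S : Set G} (hS : Submonoid.closure S = ⊤)
    (hSfin : S.Finite) (hπ : IsOrthogonal π) {ε : ℝ} (hε : 0 < ε) :
    ∃ X : Set G, X.Finite ∧ (∀ x ∈ X, rotationNorm π x ≤ ε) ∧
      (Subgroup.closure X).FiniteIndex := by
  obtain ⟨T, hT, hnet⟩ := hπ.exists_finite_net hε
  let W : Set G := Set.image2 (fun w t' => w * t'⁻¹) (insert 1 T * S) (insert 1 T)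
  have hT1 : (insert 1 T).Finite := hT.insert 1
  refine ⟨{x ∈ W | rotationNorm π x ≤ ε}, ((hT1.mul hSfin).image2 _ hT1).sep _,
    fun x hx => hx.2, finiteIndex_of_exists_mul_inv_mem hS hT1 (Set.mem_insert 1 T) ?_⟩
  intro t ht s hs
  obtain ⟨t', ht', hrot⟩ := hnet (t * s)
  exact ⟨t', Set.mem_insert_of_mem 1 ht', Subgroup.subset_closure
    ⟨⟨t * s, Set.mul_mem_mul ht hs, t', Set.mem_insert_of_mem 1 ht', rfl⟩, hrot⟩⟩

end FiniteIndex

section InvariantProjection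

variable {G E : Type*} [Group G] [NormedAddCommGroup E] [InnerProductSpace ℝ E]
  {π : Representation ℝ G E} {b : G → E}

theorem IsOrthogonal.orthogonal_invariants_le_comap (hπ : IsOrthogonal π) (g : G) :
    π.invariantsᗮ ≤ π.invariantsᗮ.comap (π g) := fun v hv u hu => by
  rw [← hu g, hπ.inner_map_map]
  exact hv u hu

theorem IsOrthogonal.starProjection_invariants_map [π.invariants.HasOrthogonalProjection]
    (hπ : IsOrthogonal π) (g : G) (v : E) :
    π.invariants.starProjection (π g v) = π.invariants.starProjection v := by
  have hmem := Submodule.starProjection_apply_mem π.invariants v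
  refine Submodule.eq_starProjection_of_mem_orthogonal' hmem
    (hπ.orthogonal_invariants_le_comap g (Submodule.sub_starProjection_mem_orthogonal v)) ?_
  rw [map_sub, hmem g, add_sub_cancel]

/-- The invariant component of a cocycle is a homomorphism. -/
def IsCocycle.invariantPart [π.invariants.HasOrthogonalProjection] (hb : IsCocycle π b)
    (hπ : IsOrthogonal π) : G →* Multiplicative E where
  toFun g := .ofAdd (π.invariants.starProjection (b g))
  map_one' := by rw [hb.apply_one, map_zero, ofAdd_zero]
  map_mul' g h := by rw [hb, map_add, hπ.starProjection_invariants_map, ofAdd_add]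

variable [FiniteDimensional ℝ E]

theorem IsCocycle.exists_sub_starProjection_eq (hb : IsCocycle π b) (hπ : IsOrthogonal π)
    [Group.IsNilpotent (G ⧸ hb.actionKernel)] :
    ∃ p, ∀ g, b g - π.invariants.starProjection (b g) = π g p - p := by
  have hmem (v : E) : v - π.invariants.starProjection v ∈ π.invariantsᗮ :=
    Submodule.sub_starProjection_mem_orthogonal v
  let π' := π.subrepresentation π.invariantsᗮ hπ.orthogonal_invariants_le_comap
  let b' : G → π.invariantsᗮ := fun g => ⟨b g - π.invariants.starProjection (b g), hmem _⟩
  have hb' : IsCocycle π' b' := fun g h => Subtype.ext <| by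
    have hfix : π g (π.invariants.starProjection (b h)) = π.invariants.starProjection (b h) :=
      Submodule.starProjection_apply_mem π.invariants (b h) g
    change b (g * h) - π.invariants.starProjection (b (g * h)) =
      b g - π.invariants.starProjection (b g)
        + π g (b h - π.invariants.starProjection (b h))
    rw [hb, map_add, hπ.starProjection_invariants_map, map_sub, hfix]
    abel
  have hker : hb.actionKernel ≤ hb'.actionKernel := fun g ⟨hg, hg'⟩ =>
    ⟨LinearMap.ext fun w => Subtype.ext (LinearMap.congr_fun hg w),
      Subtype.ext <| by simp [b', hg']⟩
  have hinv : π'.invariants = ⊥ := (Submodule.eq_bot_iff _).2 fun w hw => by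
    have hwinv : (w : E) ∈ π.invariants := fun g => congrArg Subtype.val (hw g)
    exact Subtype.ext (inner_self_eq_zero.1 (w.2 w hwinv))
  obtain ⟨p, hp⟩ := hb'.isCoboundary_of_quotient hker fun _ _ hc hc' =>
    hc.isCoboundary_of_isNilpotent (hc'.trans hinv)
  exact ⟨p, fun g => congrArg Subtype.val (hp g)⟩

theorem IsCocycle.finite_ker_invariantPart (hb : IsCocycle π b) (hπ : IsOrthogonal π)
    (hproper : IsMetricallyProper b) [Group.IsNilpotent (G ⧸ hb.actionKernel)] :
    Finite (hb.invariantPart hπ).ker := by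
  obtain ⟨p, hp⟩ := hb.exists_sub_starProjection_eq hπ
  refine ((hproper (‖p‖ + ‖p‖)).subset fun g hg => ?_).to_subtype
  have hzero : π.invariants.starProjection (b g) = 0 := hg
  have hbg : b g = π g p - p := by rw [← hp, hzero, sub_zero]
  calc ‖b g‖ ≤ ‖π g p‖ + ‖p‖ := hbg ▸ norm_sub_le _ _
    _ = ‖p‖ + ‖p‖ := by rw [hπ]

end InvariantProjection

theorem finite_commutatorSet_of_finite_ker {G A : Type*} [Group G] [CommGroup A] (τ : G →* A)
    [Finite τ.ker] : Finite (commutatorSet G) := by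
  refine ((τ.ker : Set G).toFinite.subset ?_).to_subtype
  rintro _ ⟨g, h, rfl⟩
  rw [SetLike.mem_coe, MonoidHom.mem_ker, map_commutatorElement,
    commutatorElement_eq_one_iff_mul_comm, mul_comm]

theorem IsQuasiIsometry.exists_finiteIndex_finite_commutatorSet {G : Type*} [Group G]
    {S : Finset G} {n : ℕ} {f : G → Fin n → ℤ} {c C : ℕ} (hS : IsSymmGenerating (S : Set G))
    (hf : IsQuasiIsometry S f c C) :
    ∃ H : Subgroup G, H.FiniteIndex ∧ Finite (commutatorSet H) := by
  obtain ⟨E, _, _, _, π, b, hπ, hb, hgrow⟩ := hf.exists_isCocycle_finiteDimensional hS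
  have hproper := hgrow.isMetricallyProper hS
  obtain ⟨X, hX, hrot, hindex⟩ := hπ.exists_finiteIndex_closure hS.submonoid_closure_eq_top
    S.finite_toSet (ε := 1 / 8) (by norm_num)
  obtain ⟨L, hL⟩ := (hX.image fun x => ‖b x‖).bddAbove
  set H := Subgroup.closure X
  have hbH : IsCocycle (π.comp H.subtype) fun h : H => b h := fun g h => hb g h
  have hπH : IsOrthogonal (π.comp H.subtype) := fun g => hπ g
  have hproperH : IsMetricallyProper fun h : H => b h := fun R =>
    (hproper R).preimage Subtype.val_injective.injOn
  obtain ⟨k, hk⟩ := hbH.exists_iteratedCommutators_subset hπH hproperH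
    (X := Subtype.val ⁻¹' X) (fun x hx => hrot x hx) fun x hx => hL ⟨x, hx, rfl⟩
  have := isNilpotent_quotient_of_iteratedCommutators_subset
    Subgroup.closure_closure_coe_preimage hk
  have := hbH.finite_ker_invariantPart hπH hproperH
  exact ⟨H, hindex, finite_commutatorSet_of_finite_ker (hbH.invariantPart hπH)⟩

section FiniteIndexEmbedding

variable {A B G : Type*} [Group A] [Group B] [Group G]

/-- `j` identifies `A` with a finite-index subgroup of `G`. -/
structure IsFiniteIndexEmbedding (j : A →* G) : Prop where
  injective : Function.Injective j
  finiteIndex_range : j.range.FiniteIndex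

namespace IsFiniteIndexEmbedding

theorem comp {j : B →* G} {k : A →* B} (hj : IsFiniteIndexEmbedding j)
    (hk : IsFiniteIndexEmbedding k) : IsFiniteIndexEmbedding (j.comp k) := by
  refine ⟨hj.injective.comp hk.injective, ⟨?_⟩⟩
  rw [MonoidHom.range_comp, Subgroup.index_map_of_injective _ hj.injective]
  exact mul_ne_zero hk.finiteIndex_range.index_ne_zero hj.finiteIndex_range.index_ne_zero

theorem subtype (H : Subgroup G) [hH : H.FiniteIndex] : IsFiniteIndexEmbedding H.subtype :=
  ⟨H.subtype_injective, H.range_subtype.symm ▸ hH⟩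

theorem of_mulEquiv (e : A ≃* G) : IsFiniteIndexEmbedding (e : A →* G) := by
  have hrange : (e : A →* G).range = ⊤ := MonoidHom.range_eq_top.2 e.surjective
  exact ⟨e.injective, hrange ▸ inferInstance⟩

theorem inl [Finite B] : IsFiniteIndexEmbedding (MonoidHom.inl A B) := by
  refine ⟨fun a b h => congrArg Prod.fst h, ?_⟩
  have hker : (MonoidHom.snd A B).ker ≤ (MonoidHom.inl A B).range := fun x hx =>
    ⟨x.1, Prod.ext rfl (MonoidHom.mem_ker.1 hx).symm⟩
  exact Subgroup.finiteIndex_of_le hker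

end IsFiniteIndexEmbedding

theorem exists_isFiniteIndexEmbedding_of_commGroup (A : Type*) [CommGroup A] [Group.FG A] :
    ∃ (m : ℕ) (j : Multiplicative (Fin m → ℤ) →* A), IsFiniteIndexEmbedding j := by
  obtain ⟨I, J, _, _, p, hp, k, ⟨e⟩⟩ := CommGroup.equiv_free_prod_prod_multiplicative_zmod A
  have (i : I) : NeZero (p i ^ k i) := ⟨pow_ne_zero _ (hp i).ne_zero⟩
  let e' : Multiplicative (Fin (Fintype.card J) → ℤ) ≃* (J → Multiplicative ℤ) :=
    (MulEquiv.piMultiplicative _).trans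
      (MulEquiv.arrowCongr (Fintype.equivFin J).symm (MulEquiv.refl _))
  exact ⟨_, _, (IsFiniteIndexEmbedding.of_mulEquiv e.symm).comp
    (IsFiniteIndexEmbedding.inl.comp (.of_mulEquiv e'))⟩

theorem exists_isFiniteIndexEmbedding_of_finite_commutatorSet (G : Type*) [Group G] [Group.FG G]
    [Finite (commutatorSet G)] :
    ∃ (m : ℕ) (j : Multiplicative (Fin m → ℤ) →* G), IsFiniteIndexEmbedding j := by
  let : CommGroup (Subgroup.center G) := { mul_comm := mul_comm' }
  obtain ⟨m, j, hj⟩ := exists_isFiniteIndexEmbedding_of_commGroup (Subgroup.center G)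
  exact ⟨m, _, (IsFiniteIndexEmbedding.subtype _).comp hj⟩

end FiniteIndexEmbedding

section LatticeGrowth

variable {G : Type*} [Group G] {S : Finset G} {m : ℕ} {j : Multiplicative (Fin m → ℤ) →* G}

theorem IsSymmGenerating.wordLength_zpow_le {S : Set G} (hS : IsSymmGenerating S) (g : G)
    (k : ℤ) : wordLength S (g ^ k) ≤ k.natAbs * wordLength S g := by
  have hpow (t : ℕ) : wordLength S (g ^ t) ≤ t * wordLength S g := by
    induction t with
    | zero => rw [pow_zero, wordLength_one, zero_mul]
    | succ t ih =>
      rw [pow_succ, add_one_mul]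
      exact (hS.wordLength_mul_le _ _).trans (by gcongr)
  obtain ⟨t, rfl | rfl⟩ := k.eq_nat_or_neg
  · simpa using hpow t
  · simpa [hS.wordLength_inv] using hpow t

theorem IsSymmGenerating.exists_wordLength_map_le (hS : IsSymmGenerating (S : Set G))
    (j : Multiplicative (Fin m → ℤ) →* G) :
    ∃ K : ℕ, ∀ r, ∀ x ∈ intBox 0 r, wordLength S (j (.ofAdd x)) ≤ K * r := by
  let len (x : Fin m → ℤ) : ℕ := wordLength S (j (.ofAdd x))
  have hzero : len 0 ≤ 0 := by
    simp only [len, ofAdd_zero, map_one, wordLength_one, le_refl]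
  have hadd (x y : Fin m → ℤ) : len (x + y) ≤ len x + len y := by
    simpa only [len, ofAdd_add, map_mul] using hS.wordLength_mul_le _ _
  refine ⟨∑ i, len (Pi.single i 1), fun r x hx => ?_⟩
  calc len x = len (∑ i, x i • Pi.single i 1) := by rw [← pi_eq_sum_univ']
    _ ≤ ∑ i, len (x i • Pi.single i 1) := Finset.le_sum_of_subadditive len hzero hadd _ _
    _ ≤ ∑ i, (x i).natAbs * len (Pi.single i 1) := Finset.sum_le_sum fun i _ => by
        simpa only [len, ofAdd_zsmul, map_zpow] using hS.wordLength_zpow_le _ (x i)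
    _ ≤ ∑ i, len (Pi.single i 1) * r := Finset.sum_le_sum fun i _ => by
        rw [mul_comm]
        gcongr
        simpa using mem_intBox.1 hx i
    _ = _ := (Finset.sum_mul ..).symm

theorem hasGrowthAtLeast_of_injective (hS : IsSymmGenerating (S : Set G))
    (hj : Function.Injective j) : HasGrowthAtLeast S m := by
  obtain ⟨K, hK⟩ := hS.exists_wordLength_map_le j
  refine hasGrowthAtLeast_of_affine_radius (Q := 1) (A := K) (B := 0) fun t => ?_
  calc (t + 1) ^ m ≤ (2 * t + 1) ^ m := by gcongr; omega
    _ = (intBox (0 : Fin m → ℤ) t).card := (card_intBox ..).symm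
    _ ≤ (wordBall S (K * t)).card := Finset.card_le_card_of_injOn (fun x => j (.ofAdd x))
        (fun x hx => hS.mem_wordBall.2 (hK t x hx)) (hj.comp Multiplicative.ofAdd.injective).injOn
    _ = _ := by rw [one_mul, add_zero]

theorem exists_finset_transversal (hj : j.range.FiniteIndex) :
    ∃ T : Finset G, 1 ∈ T ∧ ∀ g, ∃ x, ∃ t ∈ T, g = j (.ofAdd x) * t := by
  obtain ⟨T, hT, hone⟩ := j.range.exists_isComplement_right 1
  lift T to Finset G using Set.finite_coe_iff.1 (hT.finite_right_iff.2 hj)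
  refine ⟨T, hone, fun g => ?_⟩
  obtain ⟨⟨⟨_, x, rfl⟩, t⟩, hxt, -⟩ := hT.existsUnique g
  exact ⟨x.toAdd, t, t.2, hxt.symm⟩

theorem exists_forall_mem_wordBall_eq_mul (hj : j.range.FiniteIndex) :
    ∃ (T : Finset G) (M : ℕ), ∀ r, ∀ g ∈ wordBall S r,
      ∃ x ∈ intBox 0 (M * r), ∃ t ∈ T, g = j (.ofAdd x) * t := by
  obtain ⟨T, hone, hT⟩ := exists_finset_transversal hj
  choose x t ht hxt using hT
  let M := (T ×ˢ S).sup fun p => zDistNat (x (p.1 * p.2)) 0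
  refine ⟨T, M, fun r g hg => ?_⟩
  induction r generalizing g with
  | zero =>
    obtain rfl := mem_wordBall_zero.1 hg
    exact ⟨0, mem_intBox.2 fun i => by simp, 1, hone, by simp⟩
  | succ r ih =>
    obtain ⟨g', hg', hgg'⟩ := mem_wordBall_succ.1 hg
    obtain ⟨y, hy, u, hu, hyu⟩ := ih g' hg'
    rcases hgg' with rfl | ⟨s, hs, rfl⟩
    · refine ⟨y, mem_intBox.2 fun i => (mem_intBox.1 hy i).trans ?_, u, hu, hyu⟩
      gcongr
      exact r.le_succ
    · have hM : zDistNat (x (u * s)) 0 ≤ M :=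
        Finset.le_sup (f := fun p => zDistNat (x (p.1 * p.2)) 0) (Finset.mk_mem_product hu hs)
      refine ⟨y + x (u * s), mem_intBox.2 fun i => ?_, t (u * s), ht _, ?_⟩
      · have hyi := mem_intBox.1 hy i
        have hxi := (natAbs_sub_le_zDistNat (x (u * s)) 0 i).trans hM
        simp only [Pi.zero_apply, Pi.add_apply, sub_zero] at hyi hxi ⊢
        rw [mul_add_one]
        omega
      · rw [ofAdd_add, map_mul, mul_assoc, ← hxt, ← mul_assoc, ← hyu]

theorem hasGrowthAtMost_of_finiteIndex_range (hj : j.range.FiniteIndex) : HasGrowthAtMost S m := by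
  classical
  obtain ⟨T, M, hTM⟩ := exists_forall_mem_wordBall_eq_mul (S := S) hj
  refine ⟨(2 * M + 1) ^ m * T.card, fun r => ?_⟩
  have hsub : wordBall S r ⊆ (intBox 0 (M * r) ×ˢ T).image fun p => j (.ofAdd p.1) * p.2 :=
    fun g hg => by
      obtain ⟨x, hx, t, ht, rfl⟩ := hTM r g hg
      exact Finset.mem_image_of_mem _ (Finset.mk_mem_product hx ht)
  calc (wordBall S r).card ≤ (intBox (0 : Fin m → ℤ) (M * r) ×ˢ T).card :=
        (Finset.card_le_card hsub).trans Finset.card_image_le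
    _ = (2 * (M * r) + 1) ^ m * T.card := by rw [Finset.card_product, card_intBox]
    _ ≤ ((2 * M + 1) * (r + 1)) ^ m * T.card := by gcongr; nlinarith [Nat.zero_le M]
    _ = _ := by rw [mul_pow]; ring

end LatticeGrowth

theorem IsQuasiIsometry.exists_isFiniteIndexEmbedding {G : Type*} [Group G] {S : Finset G} {n : ℕ}
    {f : G → Fin n → ℤ} {c C : ℕ} (hS : IsSymmGenerating (S : Set G))
    (hf : IsQuasiIsometry S f c C) :
    ∃ j : Multiplicative (Fin n → ℤ) →* G, IsFiniteIndexEmbedding j := by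
  have : Group.FG G := Group.fg_iff.2 ⟨S, hS.closure_eq_top, S.finite_toSet⟩
  obtain ⟨H, _, _⟩ := hf.exists_finiteIndex_finite_commutatorSet hS
  obtain ⟨m, i, hi⟩ := exists_isFiniteIndexEmbedding_of_finite_commutatorSet H
  have hj := (IsFiniteIndexEmbedding.subtype H).comp hi
  obtain rfl : m = n := le_antisymm
    ((hasGrowthAtLeast_of_injective hS hj.injective).le_of_hasGrowthAtMost (hf.hasGrowthAtMost hS))
    ((hf.hasGrowthAtLeast hS).le_of_hasGrowthAtMost
      (hasGrowthAtMost_of_finiteIndex_range hj.finiteIndex_range))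
  exact ⟨_, hj⟩

/-- If a finitely generated group is quasi-isometric to `ℤⁿ`, then it has a finite index
subgroup isomorphic to `ℤⁿ`. -/
theorem qi_to_Zn_implies_virtually_Zn
    (Γ : Type*) [Group Γ] (S : Set Γ) (hSfin : S.Finite) (hSsymm : S⁻¹ = S)
    (hSgen : Subgroup.closure S = ⊤) (n : ℕ)
    -- a quasi-isometry `f : Γ → ℤⁿ` :
    (f : Γ → (Fin n → ℤ)) (c : ℝ) (hc : 1 ≤ c) (C : ℝ) (hC : 0 ≤ C)
    (hlower : ∀ x y : Γ, (1 / c) * wordDist S x y - C ≤ zDist (f x) (f y))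
    (hupper : ∀ x y : Γ, zDist (f x) (f y) ≤ c * wordDist S x y + C)
    (hdense : ∀ z : Fin n → ℤ, ∃ x : Γ, zDist (f x) z ≤ C) :
    ∃ Λ : Subgroup Γ, Λ.FiniteIndex ∧ Nonempty (Λ ≃* Multiplicative (Fin n → ℤ)) := by
  lift S to Finset Γ using hSfin
  have hS : IsSymmGenerating (S : Set Γ) := ⟨hSsymm, hSgen⟩
  have hf := isQuasiIsometry_of_real (zero_lt_one.trans_le hc) hlower hupper hdense
  obtain ⟨j, hj⟩ := hf.exists_isFiniteIndexEmbedding hS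
  exact ⟨j.range, hj.finiteIndex_range, ⟨(MonoidHom.ofInjective hj.injective).symm⟩⟩
end
end

section
/- Let r ≥ 3 and let T be a simple graph that is connected, has no cycles, and in which every vertex has degree r (a regular tree of degree r), equipped with the graph distance. Then T does not admit a quasi-isometric embedding into any Hilbert space. -/
open scoped BigOperators

noncomputable section

/-!
Suppose that from every vertex, in every direction, one can travel a distance `k` with squared
displacement at most `N` under `f`. Travelling from `v` to such a vertex `u`, at least two
directions at `u` lead further away from `v`; travelling `k` along each gives vertices `x`, `y`
at distance `2k` from `v` and from each other. The parallelogram law applied to the fork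
`v, u, x, y` shows that one of `x`, `y` has squared displacement at most `4N - ‖f x - f y‖² / 4`
from `v`. If `f` expands large distances by at least `δ`, then the ratio of the squared
displacement to the squared distance drops by `δ² / 4` at every doubling of the scale, and so
eventually becomes negative.
-/

section Branches

open SimpleGraph

variable {V : Type*} {T : SimpleGraph V} {u v p q x y : V}

/-- `InBranch T v p x` says that `p` is a neighbour of `v` and that some geodesic from `v` to `x`
starts with the edge `vp`. In a tree, this is the branch at `v` containing `p`. The condition is
encoded by distances, so it has this meaning only when `x` is reachable from `v`. -/
def InBranch (T : SimpleGraph V) (v p x : V) : Prop :=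
  T.Adj v p ∧ T.dist v x = T.dist p x + 1

theorem inBranch_self (h : T.Adj v p) : InBranch T v p p :=
  ⟨h, by rw [dist_self, dist_eq_one_iff_adj.mpr h]⟩

theorem InBranch.ne (h : InBranch T v p x) : v ≠ x := by
  rintro rfl
  have hdist := h.2
  rw [dist_self] at hdist
  omega

theorem InBranch.of_dist_eq_add (hT : T.Connected) (hu : InBranch T v p u)
    (hx : T.dist v x = T.dist v u + T.dist u x) : InBranch T v p x := by
  obtain ⟨hvp, hvu⟩ := hu
  have hvp_dist : T.dist v p = 1 := dist_eq_one_iff_adj.mpr hvp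
  have hv : T.dist v x ≤ T.dist v p + T.dist p x := hT.dist_triangle
  have hp : T.dist p x ≤ T.dist p u + T.dist u x := hT.dist_triangle
  exact ⟨hvp, by omega⟩

theorem InBranch.exists_isPath_cons (hx : InBranch T v p x) :
    ∃ w : T.Walk p x, (Walk.cons hx.1 w).IsPath ∧ (Walk.cons hx.1 w).length = T.dist v x := by
  have hreach : T.Reachable v x := .of_dist_ne_zero (by rw [hx.2]; exact Nat.succ_ne_zero _)
  obtain ⟨w, hw⟩ := (hx.1.symm.reachable.trans hreach).exists_walk_length_eq_dist
  have hlength : (Walk.cons hx.1 w).length = T.dist v x := by rw [Walk.length_cons, hw, hx.2]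
  exact ⟨w, Walk.isPath_of_length_eq_dist _ hlength, hlength⟩

theorem exists_inBranch (h : T.Reachable v x) (hne : v ≠ x) : ∃ p, InBranch T v p x := by
  obtain ⟨w, hw⟩ := h.exists_walk_length_eq_dist
  cases w with
  | nil => exact absurd rfl hne
  | @cons _ p _ hvp w =>
    have hpx : T.dist p x ≤ w.length := dist_le w
    have hvx : T.dist v x ≤ T.dist v p + T.dist p x := hvp.reachable.dist_triangle_left x
    rw [dist_eq_one_iff_adj.mpr hvp] at hvx
    rw [Walk.length_cons] at hw
    exact ⟨p, hvp, by omega⟩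

theorem length_eq_dist_of_isPath (hT : T.IsAcyclic) {w : T.Walk x y} (hw : w.IsPath) :
    w.length = T.dist x y := by
  obtain ⟨g, hg, hlength⟩ := w.reachable.exists_path_of_dist
  have hwg : w = g :=
    congrArg Subtype.val ((hT.subsingleton_path x y).elim ⟨w, hw⟩ ⟨g, hg⟩)
  rw [hwg, hlength]

theorem isPath_reverse_cons_append_cons (hT : T.IsAcyclic) {hp : T.Adj u p} {hq : T.Adj u q}
    {w₁ : T.Walk p x} {w₂ : T.Walk q y} (hw₁ : (Walk.cons hp w₁).IsPath)
    (hw₂ : (Walk.cons hq w₂).IsPath) (hpq : p ≠ q) :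
    ((Walk.cons hp w₁).reverse.append (Walk.cons hq w₂)).IsPath := by
  have hw₁_rev := hw₁.reverse
  rw [hT.isPath_iff_isChain] at hw₁_rev hw₂ ⊢
  rw [Walk.edges_append]
  exact hw₁_rev.append hw₂ (by simp [Walk.edges_reverse, hpq, hp.ne'])

theorem InBranch.dist_eq_add_of_ne (hT : T.IsAcyclic) (hx : InBranch T u p x)
    (hy : InBranch T u q y) (hpq : p ≠ q) : T.dist x y = T.dist u x + T.dist u y := by
  obtain ⟨w₁, hw₁, hlength₁⟩ := hx.exists_isPath_cons
  obtain ⟨w₂, hw₂, hlength₂⟩ := hy.exists_isPath_cons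
  rw [← length_eq_dist_of_isPath hT (isPath_reverse_cons_append_cons hT hw₁ hw₂ hpq),
    Walk.length_append, Walk.length_reverse, hlength₁, hlength₂]

end Branches

theorem nontrivial_sdiff_singleton_of_three_le_encard {α : Type*} {s : Set α}
    (hs : 3 ≤ s.encard) (a : α) : (s \ {a}).Nontrivial := by
  rw [← Set.one_lt_encard_iff_nontrivial]
  calc (1 : ℕ∞) < 3 - 1 := by decide
    _ ≤ s.encard - 1 := tsub_le_tsub_right hs 1
    _ ≤ (s \ {a}).encard := Set.encard_tsub_one_le_encard_sdiff_singleton s a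

theorem fork_inequality {E : Type*} [SeminormedAddCommGroup E] [InnerProductSpace ℝ E]
    (a b x y : E) :
    ‖x - a‖ ^ 2 + ‖y - a‖ ^ 2 ≤
      4 * ‖b - a‖ ^ 2 + 2 * (‖x - b‖ ^ 2 + ‖y - b‖ ^ 2) - ‖x - y‖ ^ 2 / 2 := by
  have parallelogram (z : E) :
      ‖(x - z) + (y - z)‖ ^ 2 + ‖x - y‖ ^ 2 = 2 * (‖x - z‖ ^ 2 + ‖y - z‖ ^ 2) := by
    simpa only [sub_sub_sub_cancel_right] using parallelogram_law_with_norm ℝ (x - z) (y - z)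
  have convexity :
      ‖(x - a) + (y - a)‖ ^ 2 ≤ 2 * (‖(x - b) + (y - b)‖ ^ 2 + 4 * ‖b - a‖ ^ 2) := by
    calc ‖(x - a) + (y - a)‖ ^ 2
        = ‖((x - b) + (y - b)) + ((b - a) + (b - a))‖ ^ 2 := by congr 2; abel
      _ ≤ (‖(x - b) + (y - b)‖ + (‖b - a‖ + ‖b - a‖)) ^ 2 := by
          gcongr
          exact norm_add_le_of_le le_rfl (norm_add_le _ _)
      _ ≤ 2 * (‖(x - b) + (y - b)‖ ^ 2 + (‖b - a‖ + ‖b - a‖) ^ 2) := add_sq_le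
      _ = 2 * (‖(x - b) + (y - b)‖ ^ 2 + 4 * ‖b - a‖ ^ 2) := by ring
  linarith [parallelogram a, parallelogram b]

section DirectedDisplacement

variable {V : Type*} {T : SimpleGraph V} {E : Type*} [SeminormedAddCommGroup E]
  {f : V → E} {k : ℕ} {N D L δ : ℝ}

/-- From every vertex, in the direction of each of its neighbours, there is a vertex at distance
exactly `k` whose squared displacement under `f` is at most `N`. This is the quantity that is
propagated from scale `k` to scale `2 * k`. -/
def DirectedDisplacementLE (T : SimpleGraph V) (f : V → E) (k : ℕ) (N : ℝ) : Prop :=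
  ∀ v p, T.Adj v p → ∃ x, InBranch T v p x ∧ T.dist v x = k ∧ ‖f x - f v‖ ^ 2 ≤ N

theorem directedDisplacementLE_one (hL : ∀ x y, T.Adj x y → ‖f x - f y‖ ≤ L) :
    DirectedDisplacementLE T f 1 (L ^ 2) := fun v p hvp =>
  ⟨p, inBranch_self hvp, SimpleGraph.dist_eq_one_iff_adj.mpr hvp,
    pow_le_pow_left₀ (norm_nonneg _) (hL p v hvp.symm) 2⟩

theorem DirectedDisplacementLE.nonneg {v p : V} (h : DirectedDisplacementLE T f k N)
    (hvp : T.Adj v p) : 0 ≤ N := by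
  obtain ⟨x, -, -, hx⟩ := h v p hvp
  exact (sq_nonneg _).trans hx

variable [InnerProductSpace ℝ E]

theorem DirectedDisplacementLE.double (hT : T.IsTree) (hdeg : ∀ v, 3 ≤ (T.neighborSet v).encard)
    (hD : ∀ x y, T.dist x y = 2 * k → D ≤ ‖f x - f y‖ ^ 2) (h : DirectedDisplacementLE T f k N) :
    DirectedDisplacementLE T f (2 * k) (4 * N - D / 4) := by
  intro v p hvp
  obtain ⟨u, hu, hvu, huN⟩ := h v p hvp
  obtain ⟨q₀, hv⟩ := exists_inBranch (hT.connected u v) hu.ne.symm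
  obtain ⟨q₁, ⟨hq₁, hne₁⟩, q₂, ⟨hq₂, hne₂⟩, hne⟩ :=
    nontrivial_sdiff_singleton_of_three_le_encard (hdeg u) q₀
  obtain ⟨x, hx, hux, hxN⟩ := h u q₁ hq₁
  obtain ⟨y, hy, huy, hyN⟩ := h u q₂ hq₂
  have hvx : T.dist v x = T.dist v u + T.dist u x := by
    rw [hv.dist_eq_add_of_ne hT.isAcyclic hx (Ne.symm hne₁), T.dist_comm (u := u)]
  have hvy : T.dist v y = T.dist v u + T.dist u y := by
    rw [hv.dist_eq_add_of_ne hT.isAcyclic hy (Ne.symm hne₂), T.dist_comm (u := u)]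
  have hxy : T.dist x y = 2 * k := by
    rw [hx.dist_eq_add_of_ne hT.isAcyclic hy hne, hux, huy, two_mul]
  have hsum : ‖f x - f v‖ ^ 2 + ‖f y - f v‖ ^ 2 ≤ 2 * (4 * N - D / 4) := by
    linarith [fork_inequality (f v) (f u) (f x) (f y), hD x y hxy]
  rcases le_total (‖f x - f v‖ ^ 2) (‖f y - f v‖ ^ 2) with hle | hle
  · exact ⟨x, hu.of_dist_eq_add hT.connected hvx, by omega, by linarith⟩
  · exact ⟨y, hu.of_dist_eq_add hT.connected hvy, by omega, by linarith⟩

theorem DirectedDisplacementLE.iterate_double (hT : T.IsTree)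
    (hdeg : ∀ v, 3 ≤ (T.neighborSet v).encard) (hδ : 0 ≤ δ)
    (hfar : ∀ x y, 2 * k ≤ T.dist x y → δ * T.dist x y ≤ ‖f x - f y‖)
    (h : DirectedDisplacementLE T f k N) (n : ℕ) :
    DirectedDisplacementLE T f (2 ^ n * k) (4 ^ n * (N - n * ((δ * k) ^ 2 / 4))) := by
  induction n with
  | zero => simpa using h
  | succ n ih =>
    have hscale : k ≤ 2 ^ n * k := Nat.le_mul_of_pos_left k (by positivity)
    have hD (x y : V) (hxy : T.dist x y = 2 * (2 ^ n * k)) :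
        4 ^ n * (4 * (δ * k) ^ 2) ≤ ‖f x - f y‖ ^ 2 := by
      calc (4 : ℝ) ^ n * (4 * (δ * k) ^ 2) = (δ * T.dist x y) ^ 2 := by
            rw [hxy, show (4 : ℝ) = 2 ^ 2 by norm_num, ← pow_mul, mul_comm 2 n, pow_mul]
            push_cast
            ring
        _ ≤ ‖f x - f y‖ ^ 2 := pow_le_pow_left₀ (by positivity) (hfar x y (by omega)) 2
    convert ih.double hT hdeg hD using 1
    · ring
    · push_cast
      ring

theorem exists_norm_sub_lt_mul_dist (hT : T.IsTree) (hdeg : ∀ v, 3 ≤ (T.neighborSet v).encard)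
    (hL : ∀ x y, T.Adj x y → ‖f x - f y‖ ≤ L) (hδ : 0 < δ) (R : ℕ) :
    ∃ x y, R ≤ T.dist x y ∧ ‖f x - f y‖ < δ * T.dist x y := by
  by_contra! hfar
  have hstart : DirectedDisplacementLE T f (2 ^ R) (4 ^ R * L ^ 2) := by
    simpa using (directedDisplacementLE_one hL).iterate_double hT hdeg le_rfl (by simp) R
  have hR : R < 2 ^ R := Nat.lt_two_pow_self
  obtain ⟨n, hn⟩ := exists_lt_nsmul
    (show 0 < (δ * (2 ^ R : ℕ)) ^ 2 / 4 by positivity) (4 ^ R * L ^ 2)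
  rw [nsmul_eq_mul] at hn
  obtain ⟨v⟩ := hT.connected.nonempty
  obtain ⟨p, hp, -⟩ := (nontrivial_sdiff_singleton_of_three_le_encard (hdeg v) v).nonempty
  have hnonneg := (hstart.iterate_double hT hdeg hδ.le
    (fun x y hxy => hfar x y (by omega)) n).nonneg hp
  exact hnonneg.not_gt (mul_neg_of_pos_of_neg (by positivity) (sub_neg.mpr hn))

end DirectedDisplacement

theorem regular_tree_no_qi_embedding_general {V : Type*} {T : SimpleGraph V} (hT : T.IsTree)
    (hdeg : ∀ v, 3 ≤ (T.neighborSet v).encard)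
    {E : Type*} [SeminormedAddCommGroup E] [InnerProductSpace ℝ E] :
    ¬ ∃ (f : V → E) (c C : ℝ), 0 < c ∧
        (∀ x y : V, (1 / c) * (T.dist x y : ℝ) - C ≤ ‖f x - f y‖) ∧
        (∀ x y : V, ‖f x - f y‖ ≤ c * (T.dist x y : ℝ) + C) := by
  rintro ⟨f, c, C, hc, hlower, hupper⟩
  have hL (x y : V) (hxy : T.Adj x y) : ‖f x - f y‖ ≤ c + C := by
    simpa [SimpleGraph.dist_eq_one_iff_adj.mpr hxy] using hupper x y
  obtain ⟨x, y, hfar, hlt⟩ := exists_norm_sub_lt_mul_dist hT hdeg hL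
    (show 0 < 1 / (2 * c) by positivity) ⌈2 * c * C⌉₊
  have hC : C ≤ 1 / (2 * c) * T.dist x y := by
    rw [one_div_mul_eq_div, le_div_iff₀' (by positivity)]
    exact Nat.ceil_le.mp hfar
  have hhalf : 1 / c * (T.dist x y : ℝ) = 2 * (1 / (2 * c) * T.dist x y) := by field_simp
  linarith [hlower x y]

/-- A regular tree of degree `r` (with its graph distance) admits no quasi-isometric
embedding into any Hilbert space (`r ≥ 3`). -/
theorem regular_tree_no_qi_embedding
    (r : ℕ) (hr : 3 ≤ r)
    (V : Type*) (T : SimpleGraph V) (hconn : T.Connected) (hacyclic : T.IsAcyclic)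
    (hreg : ∀ v : V, (T.neighborSet v).ncard = r)
    (H : Type*) [NormedAddCommGroup H] [InnerProductSpace ℝ H] [CompleteSpace H] :
    ¬ ∃ (f : V → H) (c : ℝ) (_ : 1 ≤ c) (C : ℝ) (_ : 0 ≤ C),
        (∀ x y : V, (1 / c) * (T.dist x y : ℝ) - C ≤ ‖f x - f y‖) ∧
        (∀ x y : V, ‖f x - f y‖ ≤ c * (T.dist x y : ℝ) + C) := by
  rintro ⟨f, c, hc, C, -, hlower, hupper⟩
  have hdeg (v : V) : 3 ≤ (T.neighborSet v).encard :=
    le_trans (by exact_mod_cast hr.trans_eq (hreg v).symm) (Set.ncard_le_encard _)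
  exact regular_tree_no_qi_embedding_general ⟨hconn, hacyclic⟩ hdeg
    ⟨f, c, C, zero_lt_one.trans_le hc, hlower, hupper⟩
end
end

section
/- Let n ≥ 0 and let G be a closed subgroup of the isometry group Isom(ℝⁿ) of the Euclidean space ℝⁿ (with its compact-open topology). The following are equivalent: (i) G is cocompact in Isom(ℝⁿ), i.e. the quotient Isom(ℝⁿ)/G is compact; (ii) the action of G on ℝⁿ is cocompact, i.e. there is a compact set L ⊆ ℝⁿ with G·L = ℝⁿ; (iii) G does not preserve any proper nonempty affine subspace of ℝⁿ (there is no affine subspace A ⊊ ℝⁿ, A ≠ ∅, with gA = A for all g ∈ G). -/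
open Filter Topology

noncomputable section

/-- A continuous map `f : ℝⁿ → ℝⁿ` "is" an element of `Isom(ℝⁿ)` lying in the subgroup
`G`. `C(ℝⁿ,ℝⁿ)` carries the compact-open topology, which induces the natural topology on
`Isom(ℝⁿ)`. -/
def ReprIn {n : ℕ}
    (G : Subgroup (EuclideanSpace ℝ (Fin n) ≃ᵢ EuclideanSpace ℝ (Fin n)))
    (f : C(EuclideanSpace ℝ (Fin n), EuclideanSpace ℝ (Fin n))) : Prop :=
  ∃ φ ∈ G, ∀ x, f x = φ x

/-!
Only the implication from (iii) to (ii) is deep. Call `u` a barrier direction if `⟪u, ·⟫` is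
bounded above on the orbit `G • 0`; these vectors form a convex cone invariant under the linear
parts of `G`. If the action is not cocompact, there are points `z`, arbitrarily far away, to which
no point of the orbit is much closer than the origin is, and any limit of the directions `z / ‖z‖`
is a nonzero barrier direction. Averaging gives a vector `w` in the relative interior of the cone
fixed by all linear parts, and then `φ ↦ ⟪w, φ 0⟫` is a homomorphism `G → ℝ` which is bounded
above, hence zero. So `-w` is a barrier direction too, which makes the cone a linear subspace `V`.
The orbit is bounded in the directions of `V`, so `G` acts on `E ⧸ Vᗮ ≃ V` with bounded orbits and
has a fixed point there: a proper affine subspace of `E` parallel to `Vᗮ` and preserved by `G`.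
-/

open Set

section FixedPoint

variable {E : Type*} [NormedAddCommGroup E] [NormedSpace ℝ E] [StrictConvexSpace ℝ E]

theorem exists_mem_forall_isometry_apply_eq {K : Set E} (hK : IsCompact K) (hconv : Convex ℝ K)
    (hne : K.Nonempty) :
    ∃ x ∈ K, ∀ T : E → E, Isometry T → T '' K = K → T x = x := by
  -- `x` is the Chebyshev centre of `K`: if `T x ≠ x`, then by strict convexity a smaller ball about
  -- the midpoint of `x` and `T x` would contain `K`.
  let r : E → ℝ := fun x => sSup (dist x '' K)
  have dist_le_r : ∀ x, ∀ s ∈ K, dist s x ≤ r x := fun x s hs =>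
    dist_comm x s ▸ le_csSup (hK.image (by fun_prop)).bddAbove ⟨s, hs, rfl⟩
  obtain ⟨x, hxK, hmin⟩ :=
    hK.exists_isMinOn hne (f := r) (hK.continuous_sSup continuous_dist).continuousOn
  refine ⟨x, hxK, fun T hT hTK => ?_⟩
  by_contra hTx
  have hTxK : T x ∈ K := hTK ▸ mem_image_of_mem T hxK
  obtain ⟨s, hs, hrs⟩ : ∃ s ∈ K, r (midpoint ℝ (T x) x) = dist (midpoint ℝ (T x) x) s :=
    hK.exists_sSup_image_eq hne (by fun_prop)
  obtain ⟨t, ht, rfl⟩ : ∃ t ∈ K, T t = s := by rwa [← hTK] at hs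
  have hmid : midpoint ℝ (T x) x ∈ Metric.ball (T t) (r x) := by
    rw [midpoint_eq_smul_add, smul_add]
    refine combo_mem_ball_of_ne ?_ ?_ hTx (by norm_num) (by norm_num) (by norm_num)
    · rw [Metric.mem_closedBall, hT.dist_eq, dist_comm]
      exact dist_le_r x t ht
    · rw [Metric.mem_closedBall, dist_comm]
      exact dist_le_r x (T t) hs
  rw [Metric.mem_ball, ← hrs] at hmid
  exact (isMinOn_iff.1 hmin _ (hconv.midpoint_mem hTxK hxK)).not_gt hmid

variable [ProperSpace E]

theorem exists_mem_closure_convexHull_forall_apply_eq {S : Set E} (hS : Bornology.IsBounded S)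
    (hne : S.Nonempty) :
    ∃ x ∈ closure (convexHull ℝ S), ∀ T : E ≃ᵢ E, T '' S = S → T x = x := by
  have hK : IsCompact (closure (convexHull ℝ S)) :=
    (isBounded_convexHull.2 hS).isCompact_closure
  obtain ⟨x, hx, hfix⟩ := exists_mem_forall_isometry_apply_eq hK (convex_convexHull ℝ S).closure
    hne.convexHull.closure
  refine ⟨x, hx, fun T hT => hfix T T.isometry ?_⟩
  have himage : T '' convexHull ℝ S = convexHull ℝ S := by
    simpa [hT] using T.toRealAffineIsometryEquiv.toAffineEquiv.toAffineMap.image_convexHull S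
  simpa [himage] using T.toHomeomorph.image_closure (convexHull ℝ S)

end FixedPoint

section Cocompactness

/-- The subgroup `G` is cocompact in the group of isometries of `X`: every isometry lies in `C * G`
for a fixed set `C` of isometries which is compact in the compact-open topology. -/
def IsCocompactSubgroup {X : Type*} [PseudoMetricSpace X] (G : Subgroup (X ≃ᵢ X)) : Prop :=
  ∃ C : Set C(X, X), IsCompact C ∧ (∀ f ∈ C, ∃ ψ : X ≃ᵢ X, ∀ x, f x = ψ x) ∧
    ∀ ψ : X ≃ᵢ X, ∃ f ∈ C, ∃ φ ∈ G, ∀ x, ψ x = f (φ x)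

/-- The action of `G` on `X` is cocompact: the translates of some compact set cover `X`. -/
def HasCocompactAction {X : Type*} [PseudoMetricSpace X] (G : Subgroup (X ≃ᵢ X)) : Prop :=
  ∃ L : Set X, IsCompact L ∧ ∀ x, ∃ φ ∈ G, ∃ y ∈ L, φ y = x

theorem isCompact_setOf_isometry_apply_mem {X Y : Type*} [PseudoMetricSpace X] [MetricSpace Y]
    [ProperSpace Y] (x₀ : X) {K : Set Y} (hK : IsCompact K) :
    IsCompact {f : C(X, Y) | Isometry f ∧ f x₀ ∈ K} := by
  refine ArzelaAscoli.isCompact_of_equicontinuous _ ?_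
    (LipschitzWith.uniformEquicontinuous _ 1 fun f => f.2.1.lipschitz).equicontinuous
  have himage : ContinuousMap.toFun '' {f : C(X, Y) | Isometry f ∧ f x₀ ∈ K} =
      {f | Isometry f ∧ f x₀ ∈ K} := by
    ext f
    exact ⟨by rintro ⟨f, hf, rfl⟩; exact hf, fun hf => ⟨⟨f, hf.1.continuous⟩, hf, rfl⟩⟩
  have hclosed : IsClosed {f : X → Y | Isometry f ∧ f x₀ ∈ K} := by
    have hisom : IsClosed {f : X → Y | Isometry f} := by
      simp only [isometry_iff_dist_eq, Set.ofPred_forall]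
      exact isClosed_iInter fun x => isClosed_iInter fun y =>
        isClosed_eq (by fun_prop) continuous_const
    exact hisom.inter (hK.isClosed.preimage (continuous_apply x₀))
  rw [himage]
  refine (isCompact_univ_pi fun x => hK.cthickening (r := dist x x₀)).of_isClosed_subset hclosed ?_
  rintro f ⟨hf, hfx₀⟩ x -
  exact Metric.mem_cthickening_of_dist_le _ _ _ _ hfx₀ (hf.dist_eq x x₀).le

theorem hasCocompactAction_of_isCocompactSubgroup {E : Type*} [SeminormedAddCommGroup E]
    [ProperSpace E] {G : Subgroup (E ≃ᵢ E)} (hG : IsCocompactSubgroup G) :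
    HasCocompactAction G := by
  obtain ⟨C, hC, hisom, hcover⟩ := hG
  obtain ⟨R, hR⟩ := (hC.image (f := fun f : C(E, E) => dist (f 0) 0) (by fun_prop)).bddAbove
  refine ⟨Metric.closedBall 0 R, isCompact_closedBall _ _, fun x => ?_⟩
  obtain ⟨f, hf, φ, hφ, hfφ⟩ := hcover (IsometryEquiv.subRight x)
  obtain ⟨ψ, hψ⟩ := hisom f hf
  refine ⟨φ⁻¹, inv_mem hφ, φ x, ?_, φ.symm_apply_apply x⟩
  calc dist (φ x) 0 = dist (f 0) (f (φ x)) := by rw [hψ, hψ, ψ.dist_eq, dist_comm]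
    _ = dist (f 0) 0 := by rw [← hfφ x, IsometryEquiv.subRight_apply, sub_self]
    _ ≤ R := hR ⟨f, hf, rfl⟩

theorem exists_isometryEquiv_coe_eq {E : Type*} [NormedAddCommGroup E] [NormedSpace ℝ E]
    [StrictConvexSpace ℝ E] [FiniteDimensional ℝ E] {f : E → E} (hf : Isometry f) :
    ∃ ψ : E ≃ᵢ E, ⇑ψ = f :=
  have : Inhabited E := ⟨0⟩
  ⟨(hf.affineIsometryOfStrictConvexSpace.toAffineIsometryEquiv rfl).toIsometryEquiv, rfl⟩

theorem isCocompactSubgroup_of_hasCocompactAction {E : Type*} [NormedAddCommGroup E]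
    [NormedSpace ℝ E] [StrictConvexSpace ℝ E] [FiniteDimensional ℝ E] {G : Subgroup (E ≃ᵢ E)}
    (hG : HasCocompactAction G) : IsCocompactSubgroup G := by
  have := FiniteDimensional.proper_real E
  obtain ⟨L, hL, hcover⟩ := hG
  obtain ⟨R, hR⟩ := (hL.image (f := fun y => dist 0 y) (by fun_prop)).bddAbove
  refine ⟨{f | Isometry f ∧ f 0 ∈ Metric.closedBall 0 R},
    isCompact_setOf_isometry_apply_mem 0 (isCompact_closedBall 0 R), fun f hf => ?_, fun ψ => ?_⟩
  · obtain ⟨ψ, hψ⟩ := exists_isometryEquiv_coe_eq hf.1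
    exact ⟨ψ, fun x => (congrFun hψ x).symm⟩
  · obtain ⟨φ, hφ, y, hy, hφy⟩ := hcover (ψ⁻¹ 0)
    have hψφy : (ψ * φ) y = 0 := by
      rw [IsometryEquiv.mul_apply, hφy, IsometryEquiv.apply_inv_self]
    refine ⟨⟨ψ * φ, (ψ * φ).continuous⟩, ⟨(ψ * φ).isometry, ?_⟩, φ⁻¹, inv_mem hφ, fun x => ?_⟩
    · calc dist ((ψ * φ) 0) 0 = dist 0 y := by rw [← (ψ * φ).dist_eq 0 y, hψφy]
        _ ≤ R := hR ⟨y, hy, rfl⟩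
    · exact congrArg ψ (φ.apply_symm_apply x).symm

end Cocompactness

section Orbit

/-- The orbit of `x` under a group of isometries of `X`, written out because `X ≃ᵢ X` has no
`MulAction` instance on `X`. -/
def isometryOrbit {X : Type*} [PseudoMetricSpace X] (G : Subgroup (X ≃ᵢ X)) (x : X) : Set X :=
  range fun φ : G => (φ : X ≃ᵢ X) x

theorem image_range_eq_of_apply_mul {Γ X : Type*} [Group Γ] {o : Γ → X} {T : X → X} {g : Γ}
    (h : ∀ γ, T (o γ) = o (g * γ)) : T '' range o = range o := by
  rw [← range_comp, funext h (f := T ∘ o)]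
  exact (mul_left_surjective g).range_comp o

theorem image_isometryOrbit {X : Type*} [PseudoMetricSpace X] {G : Subgroup (X ≃ᵢ X)} {φ : X ≃ᵢ X}
    (hφ : φ ∈ G) (x : X) : φ '' isometryOrbit G x = isometryOrbit G x :=
  image_range_eq_of_apply_mul (g := (⟨φ, hφ⟩ : G)) fun _ => rfl

theorem exists_le_dist_forall_isometryOrbit_dist_le_add_one {X : Type*} [PseudoMetricSpace X]
    [ProperSpace X] {G : Subgroup (X ≃ᵢ X)} (hG : ¬ HasCocompactAction G) (x₀ : X) (R : ℝ) :
    ∃ z, R ≤ dist z x₀ ∧ ∀ s ∈ isometryOrbit G x₀, dist z x₀ ≤ dist z s + 1 := by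
  obtain ⟨x, hx⟩ : ∃ x, ∀ φ ∈ G, R ≤ dist (φ x) x₀ := by
    by_contra! h
    refine hG ⟨Metric.closedBall x₀ R, isCompact_closedBall _ _, fun x => ?_⟩
    obtain ⟨φ, hφ, hlt⟩ := h x
    exact ⟨φ⁻¹, inv_mem hφ, φ x, hlt.le, φ.symm_apply_apply x⟩
  let r : ℝ := ⨅ φ : G, dist (φ.1 x) x₀
  have hr : BddBelow (range fun φ : G => dist (φ.1 x) x₀) :=
    ⟨0, forall_mem_range.2 fun _ => dist_nonneg⟩
  obtain ⟨φ, hφ⟩ := exists_lt_of_ciInf_lt (lt_add_one r)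
  refine ⟨φ.1 x, hx φ φ.2, forall_mem_range.2 fun ψ => hφ.le.trans ?_⟩
  gcongr
  calc r ≤ dist ((ψ⁻¹ * φ : G).1 x) x₀ := ciInf_le hr (ψ⁻¹ * φ)
    _ = dist (φ.1 x) (ψ.1 x₀) := by
      rw [← ψ.1.dist_eq]
      exact congrArg (dist · _) (ψ.1.apply_symm_apply _)

end Orbit

section InvariantAffineSubspace

/-- Some affine subspace of `E`, neither empty nor everything, is mapped onto itself by each
element of `G`. -/
def PreservesProperAffineSubspace {E : Type*} [NormedAddCommGroup E] [NormedSpace ℝ E]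
    (G : Subgroup (E ≃ᵢ E)) : Prop :=
  ∃ A : AffineSubspace ℝ E, A ≠ ⊥ ∧ A ≠ ⊤ ∧ ∀ φ ∈ G, (fun x => φ x) '' (A : Set E) = A

variable {E : Type*} [NormedAddCommGroup E] [InnerProductSpace ℝ E]

theorem eq_top_of_forall_infDist_le {A : AffineSubspace ℝ E} [A.direction.HasOrthogonalProjection]
    (hA : (A : Set E).Nonempty) {M : ℝ} (hM : ∀ x, Metric.infDist x (A : Set E) ≤ M) : A = ⊤ := by
  obtain ⟨a, ha⟩ := hA
  by_contra htop
  have hdir : A.directionᗮ ≠ ⊥ := by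
    rwa [Ne, Submodule.orthogonal_eq_bot_iff,
      AffineSubspace.direction_eq_top_iff_of_nonempty ⟨a, ha⟩]
  have : Nonempty A := ⟨a, ha⟩
  have := Submodule.nontrivial_iff_ne_bot.2 hdir
  obtain ⟨w, hw⟩ := NormedSpace.exists_lt_norm ℝ A.directionᗮ M
  refine hw.not_ge ?_
  calc ‖w‖ = dist ((w : E) +ᵥ a) (EuclideanGeometry.orthogonalProjection A ((w : E) +ᵥ a)) := by
        rw [EuclideanGeometry.orthogonalProjection_vadd_eq_self ha w.2]
        simp
    _ = Metric.infDist ((w : E) +ᵥ a) A :=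
        EuclideanGeometry.dist_orthogonalProjection_eq_infDist _ _
    _ ≤ M := hM _

theorem not_preservesProperAffineSubspace_of_hasCocompactAction [FiniteDimensional ℝ E]
    {G : Subgroup (E ≃ᵢ E)} (hG : HasCocompactAction G) : ¬ PreservesProperAffineSubspace G := by
  rintro ⟨A, hbot, htop, hGA⟩
  obtain ⟨L, hL, hcover⟩ := hG
  obtain ⟨M, hM⟩ := (hL.image (Metric.continuous_infDist_pt (A : Set E))).bddAbove
  refine htop (eq_top_of_forall_infDist_le ((AffineSubspace.nonempty_iff_ne_bot A).2 hbot)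
    (M := M) fun x => ?_)
  obtain ⟨φ, hφ, y, hy, rfl⟩ := hcover x
  calc Metric.infDist (φ y) (A : Set E) = Metric.infDist (φ y) (φ '' A) := by
        rw [show φ '' (A : Set E) = A from hGA φ hφ]
    _ = Metric.infDist y (A : Set E) := Metric.infDist_image φ.isometry
    _ ≤ M := hM ⟨y, hy, rfl⟩

end InvariantAffineSubspace

section LinearPart

variable {E : Type*} [NormedAddCommGroup E] [NormedSpace ℝ E]

/-- The linear part `U` of an isometry `x ↦ U x + v` of a real normed space. -/
def linearPart : (E ≃ᵢ E) →* (E ≃ₗᵢ[ℝ] E) where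
  toFun φ := φ.toRealLinearIsometryEquiv
  map_one' := by ext x; simp
  map_mul' φ ψ := by
    ext x
    have := φ.toRealLinearIsometryEquiv.map_sub (ψ x) (ψ 0)
    simp_all

theorem linearPart_sub (φ : E ≃ᵢ E) (x y : E) : linearPart φ (x - y) = φ x - φ y := by
  rw [map_sub]
  simp [linearPart]

theorem apply_eq_linearPart_add (φ : E ≃ᵢ E) (x : E) : φ x = linearPart φ x + φ 0 := by
  simpa using (eq_add_of_sub_eq (linearPart_sub φ x 0).symm)

end LinearPart

section InvariantCone

open scoped Pointwise

theorem exists_mem_interior_forall_apply_eq {E : Type*} [NormedAddCommGroup E] [NormedSpace ℝ E]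
    [StrictConvexSpace ℝ E] [ProperSpace E] {Γ : Type*} [Group Γ] (ρ : Γ →* E ≃ₗᵢ[ℝ] E)
    {D : Set E} (hD : Convex ℝ D) (hinv : ∀ γ, ∀ d ∈ D, ρ γ d ∈ D)
    (hint : (interior D).Nonempty) :
    ∃ w ∈ interior D, ∀ γ, ρ γ w = w := by
  obtain ⟨p, hp⟩ := hint
  obtain ⟨ε, hε, hball⟩ := Metric.isOpen_iff.1 isOpen_interior p hp
  let S : Set E := range fun γ => ρ γ p
  have hbdd : Bornology.IsBounded S :=
    isBounded_iff_forall_norm_le.2 ⟨‖p‖, forall_mem_range.2 fun γ => ((ρ γ).norm_map p).le⟩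
  obtain ⟨w, hw, hfix⟩ := exists_mem_closure_convexHull_forall_apply_eq hbdd (range_nonempty _)
  refine ⟨w, ?_, fun γ => hfix (ρ γ).toIsometryEquiv <|
    image_range_eq_of_apply_mul (g := γ) fun γ' => by simp⟩
  -- `D` contains the `ε`-balls about the orbit of `p`, hence those about its convex hull.
  have hSD : S + Metric.ball 0 ε ⊆ D := by
    rintro _ ⟨_, ⟨γ, rfl⟩, v, hv, rfl⟩
    have hpv : p + (ρ γ).symm v ∈ Metric.ball p ε := by
      simpa [Metric.mem_ball, dist_eq_norm] using hv
    simpa using hinv γ _ (interior_subset (hball hpv))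
  refine interior_maximal ?_ Metric.isOpen_thickening
    (Metric.closure_subset_thickening hε _ hw)
  calc Metric.thickening ε (convexHull ℝ S) = convexHull ℝ S + Metric.ball 0 ε :=
        (add_ball_zero _ _).symm
    _ = convexHull ℝ (S + Metric.ball 0 ε) := by
        rw [convexHull_add, (convex_ball (0 : E) ε).convexHull_eq]
    _ ⊆ D := convexHull_min hSD hD

variable {E : Type*} [NormedAddCommGroup E] [InnerProductSpace ℝ E]

theorem starProjection_linearIsometryEquiv_apply {V : Submodule ℝ E} [FiniteDimensional ℝ V]
    (f : E ≃ₗᵢ[ℝ] E) (hf : ∀ v ∈ V, f v ∈ V) (x : E) :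
    V.starProjection (f x) = f (V.starProjection x) := by
  have hmap : V.map f.toLinearEquiv.toLinearMap = V :=
    Submodule.eq_of_le_of_finrank_eq (Submodule.map_le_iff_le_comap.2 hf)
      (f.toLinearEquiv.finrank_map_eq V)
  have := Submodule.starProjection_map_apply f V (f x)
  simpa [hmap] using this

variable [FiniteDimensional ℝ E]

theorem interior_preimage_starProjection_span_nonempty {B : Set E} (hB : Convex ℝ B)
    (h0 : 0 ∈ B) :
    (interior ((Submodule.span ℝ B).starProjection ⁻¹' B)).Nonempty := by
  set V := Submodule.span ℝ B
  have h0D : (0 : E) ∈ V.starProjection ⁻¹' B := by simpa using h0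
  have hBD : B ⊆ V.starProjection ⁻¹' B := fun b hb => by
    rwa [mem_preimage, Submodule.starProjection_eq_self_iff.2 (Submodule.subset_span hb)]
  have hVD : (Vᗮ : Set E) ⊆ V.starProjection ⁻¹' B := fun v hv => by
    rwa [mem_preimage, (Submodule.starProjection_apply_eq_zero_iff V).2 hv]
  have hspan : Submodule.span ℝ (V.starProjection ⁻¹' B) = ⊤ := by
    rw [eq_top_iff, ← Submodule.sup_orthogonal_of_hasOrthogonalProjection (K := V)]
    exact sup_le (Submodule.span_mono hBD) (hVD.trans Submodule.subset_span)
  have hconv : Convex ℝ (V.starProjection ⁻¹' B) :=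
    hB.linear_preimage V.starProjection.toLinearMap
  rw [hconv.interior_nonempty_iff_affineSpan_eq_top, ← insert_eq_of_mem h0D]
  apply AffineSubspace.coe_injective
  simp [affineSpan_insert_zero, hspan]

theorem neg_mem_of_forall_fixed_neg_mem {Γ : Type*} [Group Γ] (ρ : Γ →* E ≃ₗᵢ[ℝ] E)
    {B : PointedCone ℝ E} (hinv : ∀ γ, ∀ u ∈ B, ρ γ u ∈ B)
    (hfix : ∀ w ∈ B, (∀ γ, ρ γ w = w) → -w ∈ B) {u : E} (hu : u ∈ B) : -u ∈ B := by
  -- A fixed vector `w` in the relative interior of `B` has `-w ∈ B`. Since also `w - t • u ∈ B` for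
  -- some `t > 0`, adding up gives `-u ∈ B`.
  let V := Submodule.span ℝ (B : Set E)
  have hV (γ : Γ) : V ≤ V.comap (ρ γ).toLinearEquiv.toLinearMap :=
    Submodule.span_le.2 fun u hu => Submodule.subset_span (hinv γ u hu)
  obtain ⟨w, hw, hwfix⟩ := exists_mem_interior_forall_apply_eq ρ
    (D := V.starProjection ⁻¹' B) (B.convex.linear_preimage V.starProjection.toLinearMap)
    (fun γ d hd => by
      rw [mem_preimage, starProjection_linearIsometryEquiv_apply _ (hV γ)]
      exact hinv γ _ hd)
    (interior_preimage_starProjection_span_nonempty B.convex B.zero_mem)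
  have hnegw : -V.starProjection w ∈ B := by
    refine hfix _ (interior_subset hw : w ∈ V.starProjection ⁻¹' B) fun γ => ?_
    rw [← starProjection_linearIsometryEquiv_apply _ (hV γ), hwfix]
  have hlim : Tendsto (fun t : ℝ => w + t • -u) (𝓝[>] 0) (𝓝 w) := by
    have : Continuous fun t : ℝ => w + t • -u := by fun_prop
    simpa using (this.tendsto 0).mono_left nhdsWithin_le_nhds
  obtain ⟨t, hDt, ht⟩ := ((hlim.eventually (mem_interior_iff_mem_nhds.1 hw)).and
    self_mem_nhdsWithin).exists
  have ht : 0 < t := ht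
  have huV : V.starProjection u = u :=
    Submodule.starProjection_eq_self_iff.2 (Submodule.subset_span hu)
  have hwt : V.starProjection w + t • -u ∈ B := by simpa [huV] using hDt
  have := B.smul_mem (inv_nonneg.2 ht.le) (B.add_mem hwt hnegw)
  simpa [smul_smul, ht.ne'] using this

end InvariantCone

section BarrierCone

variable {E : Type*} [NormedAddCommGroup E] [InnerProductSpace ℝ E]

/-- The barrier cone of `S`: the vectors `u` such that `⟪u, ·⟫` is bounded above on `S`. -/
def barrierCone (S : Set E) : PointedCone ℝ E where
  carrier := {u | ∃ M, ∀ s ∈ S, inner ℝ u s ≤ M}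
  add_mem' := by
    rintro u v ⟨M, hM⟩ ⟨N, hN⟩
    refine ⟨M + N, fun s hs => ?_⟩
    rw [inner_add_left]
    exact add_le_add (hM s hs) (hN s hs)
  zero_mem' := ⟨0, fun s _ => (inner_zero_left s).le⟩
  smul_mem' := by
    rintro ⟨c, hc⟩ u ⟨M, hM⟩
    refine ⟨c * M, fun s hs => ?_⟩
    rw [Nonneg.mk_smul, real_inner_smul_left]
    exact mul_le_mul_of_nonneg_left (hM s hs) hc

theorem linearPart_mem_barrierCone {S : Set E} {φ : E ≃ᵢ E} (hS : S ⊆ φ '' S) {u : E}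
    (hu : u ∈ barrierCone S) : linearPart φ u ∈ barrierCone S := by
  obtain ⟨M, hM⟩ := hu
  refine ⟨M + inner ℝ (linearPart φ u) (φ 0), fun _ hφs => ?_⟩
  obtain ⟨s, hs, rfl⟩ := hS hφs
  rw [apply_eq_linearPart_add φ s, inner_add_right, (linearPart φ).inner_map_map]
  gcongr
  exact hM s hs

theorem neg_mem_barrierCone_of_forall_linearPart_eq {G : Subgroup (E ≃ᵢ E)} {w : E}
    (hw : w ∈ barrierCone (isometryOrbit G 0)) (hfix : ∀ φ ∈ G, linearPart φ w = w) :
    -w ∈ barrierCone (isometryOrbit G 0) := by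
  -- `φ ↦ ⟪w, φ 0⟫` is a homomorphism `G → ℝ`, so an upper bound also bounds its negative.
  obtain ⟨M, hM⟩ := hw
  refine ⟨M, forall_mem_range.2 fun φ => ?_⟩
  have hinv : φ.1⁻¹ 0 = -linearPart φ.1⁻¹ (φ.1 0) := by
    simpa using (linearPart_sub φ.1⁻¹ 0 (φ.1 0)).symm
  calc inner ℝ (-w) (φ.1 0)
      = -inner ℝ (linearPart φ.1⁻¹ w) (linearPart φ.1⁻¹ (φ.1 0)) := by
        rw [(linearPart _).inner_map_map, inner_neg_left]
    _ = inner ℝ w (φ.1⁻¹ 0) := by rw [hfix _ (inv_mem φ.2), hinv, inner_neg_right]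
    _ ≤ M := hM _ ⟨φ⁻¹, rfl⟩

theorem exists_ne_zero_mem_barrierCone [FiniteDimensional ℝ E] {S : Set E}
    (hS : ∀ R : ℝ, ∃ z, R ≤ ‖z‖ ∧ ∀ s ∈ S, ‖z‖ ≤ ‖z - s‖ + 1) : ∃ u ∈ barrierCone S, u ≠ 0 := by
  choose z hz hzS using fun k : ℕ => hS (k + 1)
  have hpos (k : ℕ) : 0 < ‖z k‖ := k.cast_add_one_pos.trans_le (hz k)
  obtain ⟨u, hu, σ, hσ, hlim⟩ := (isCompact_sphere (0 : E) 1).tendsto_subseq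
    (x := fun k => ‖z k‖⁻¹ • z k) fun k => by simp [norm_smul, (hpos k).ne']
  refine ⟨u, ⟨1, fun s hs => ?_⟩, ne_zero_of_mem_unit_sphere ⟨u, hu⟩⟩
  have hbound (k : ℕ) : inner ℝ (‖z k‖⁻¹ • z k) s ≤ 1 + ‖s‖ ^ 2 * (1 / ((k : ℝ) + 1)) := by
    have hsq : (‖z k‖ - 1) ^ 2 ≤ ‖z k‖ ^ 2 - 2 * inner ℝ (z k) s + ‖s‖ ^ 2 := by
      rw [← norm_sub_sq_real]
      have hnonneg : 0 ≤ ‖z k‖ - 1 := by linarith [hz k, k.cast_nonneg (α := ℝ)]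
      exact pow_le_pow_left₀ hnonneg (sub_le_iff_le_add.2 (hzS k s hs)) 2
    calc inner ℝ (‖z k‖⁻¹ • z k) s = ‖z k‖⁻¹ * inner ℝ (z k) s := real_inner_smul_left ..
      _ ≤ ‖z k‖⁻¹ * (‖z k‖ + ‖s‖ ^ 2) := by gcongr; linarith [sq_nonneg ‖s‖]
      _ = 1 + ‖s‖ ^ 2 * (1 / ‖z k‖) := by have := (hpos k).ne'; field_simp
      _ ≤ 1 + ‖s‖ ^ 2 * (1 / ((k : ℝ) + 1)) := by gcongr; exact hz k
  refine le_of_tendsto_of_tendsto' (hlim.inner tendsto_const_nhds) ?_ fun k => hbound (σ k)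
  have hlim_bound : Tendsto (fun k : ℕ => 1 + ‖s‖ ^ 2 * (1 / ((k : ℝ) + 1))) atTop (𝓝 1) := by
    simpa using (tendsto_one_div_add_atTop_nhds_zero_nat.const_mul (‖s‖ ^ 2)).const_add 1
  exact hlim_bound.comp hσ.tendsto_atTop

end BarrierCone

section LinealityProjection

variable {E : Type*} [NormedAddCommGroup E] [InnerProductSpace ℝ E]

theorem isBounded_image_starProjection {S : Set E} {V : Submodule ℝ E} [CompleteSpace V]
    (hV : ∀ v ∈ V, v ∈ barrierCone S) : Bornology.IsBounded (V.starProjection '' S) := by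
  let ℓ (s : S) : V →L[ℝ] ℝ := innerSL ℝ (V.orthogonalProjectionOnto (s : E))
  have hℓ (v : V) : ∃ M, ∀ s, ‖ℓ s v‖ ≤ M := by
    obtain ⟨M, hM⟩ := hV v v.2
    obtain ⟨N, hN⟩ := hV (-v) (V.neg_mem v.2)
    refine ⟨max M N, fun s => ?_⟩
    have hneg : -inner ℝ (v : E) s ≤ N := by simpa only [inner_neg_left] using hN s s.2
    calc ‖ℓ s v‖ = |inner ℝ (v : E) s| := by
          rw [innerSL_apply_apply, real_inner_comm,
            Submodule.inner_orthogonalProjectionOnto_eq_of_mem_left, Real.norm_eq_abs]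
      _ ≤ max M N := abs_le'.2 ⟨(hM s s.2).trans (le_max_left M N), hneg.trans (le_max_right M N)⟩
  obtain ⟨C, hC⟩ := banach_steinhaus hℓ
  refine isBounded_iff_forall_norm_le.2 ⟨C, forall_mem_image.2 fun s hs => ?_⟩
  simpa [ℓ] using hC ⟨s, hs⟩

variable {G : Subgroup (E ≃ᵢ E)} {V : Submodule ℝ E}

theorem exists_forall_starProjection_apply_eq [FiniteDimensional ℝ E]
    (hV : ∀ φ ∈ G, ∀ v ∈ V, linearPart φ v ∈ V) {x₀ : E}
    (hbdd : Bornology.IsBounded (V.starProjection '' isometryOrbit G x₀)) :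
    ∃ x, ∀ φ ∈ G, V.starProjection (φ x) = V.starProjection x := by
  have := FiniteDimensional.proper_real E
  let P := V.starProjection
  obtain ⟨x, -, hx⟩ := exists_mem_closure_convexHull_forall_apply_eq hbdd
    ((range_nonempty _).image _)
  refine ⟨x, fun φ hφ => ?_⟩
  -- `T` is the action of `φ` on `V ≃ E ⧸ Vᗮ`, extended to an isometry of `E`.
  let T : E ≃ᵢ E := φ.trans (IsometryEquiv.addRight (P (φ 0) - φ 0))
  have hT (y : E) : T y = linearPart φ y + P (φ 0) := by
    simp [T, apply_eq_linearPart_add φ y]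
  have hTP (y : E) : T (P y) = P (φ y) := by
    rw [hT, apply_eq_linearPart_add φ y, map_add,
      starProjection_linearIsometryEquiv_apply _ (hV φ hφ)]
  have hTx : T x = x := hx T <| by
    rw [isometryOrbit, ← range_comp]
    exact image_range_eq_of_apply_mul (g := (⟨φ, hφ⟩ : G)) fun ψ => hTP _
  have hPidem : P (P (φ 0)) = P (φ 0) :=
    Submodule.starProjection_eq_self_iff.2 (Submodule.starProjection_apply_mem V _)
  calc P (φ x) = P (T x) := by rw [hT, apply_eq_linearPart_add φ x, map_add, map_add, hPidem]
    _ = P x := by rw [hTx]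

theorem preservesProperAffineSubspace_of_forall_starProjection_apply_eq [FiniteDimensional ℝ V]
    (hV₀ : V ≠ ⊥) (hV : ∀ φ ∈ G, ∀ v ∈ V, linearPart φ v ∈ V) {x : E}
    (hx : ∀ φ ∈ G, V.starProjection (φ x) = V.starProjection x) :
    PreservesProperAffineSubspace G := by
  let A := AffineSubspace.mk' x Vᗮ
  have mem_A (y : E) : y ∈ A ↔ V.starProjection y = V.starProjection x := by
    rw [AffineSubspace.mem_mk', vsub_eq_sub, ← Submodule.starProjection_apply_eq_zero_iff, map_sub,
      sub_eq_zero]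
  have hmaps : ∀ φ ∈ G, MapsTo φ A A := fun φ hφ y hy => by
    have hsub : V.starProjection (φ y - φ x) = 0 := by
      rw [← linearPart_sub, starProjection_linearIsometryEquiv_apply _ (hV φ hφ), map_sub,
        (mem_A y).1 hy, sub_self, map_zero]
    rw [map_sub, hx φ hφ, sub_eq_zero] at hsub
    exact (mem_A _).2 hsub
  refine ⟨A, (AffineSubspace.nonempty_iff_ne_bot A).1 ⟨x, AffineSubspace.self_mem_mk' x _⟩,
    fun htop => hV₀ ?_, fun φ hφ => (hmaps φ hφ).image_subset.antisymm fun y hy =>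
      ⟨φ⁻¹ y, hmaps _ (inv_mem hφ) hy, φ.apply_symm_apply y⟩⟩
  have := congrArg AffineSubspace.direction htop
  rwa [AffineSubspace.direction_mk', AffineSubspace.direction_top,
    Submodule.orthogonal_eq_top_iff] at this

end LinealityProjection

section Equivalence

variable {E : Type*} [NormedAddCommGroup E] [InnerProductSpace ℝ E] {G : Subgroup (E ≃ᵢ E)}

theorem linearPart_mem_barrierCone_isometryOrbit {φ : E ≃ᵢ E} (hφ : φ ∈ G) {u : E}
    (hu : u ∈ barrierCone (isometryOrbit G 0)) :
    linearPart φ u ∈ barrierCone (isometryOrbit G 0) :=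
  linearPart_mem_barrierCone (image_isometryOrbit hφ 0).ge hu

variable [FiniteDimensional ℝ E]

theorem neg_mem_barrierCone_isometryOrbit {u : E} (hu : u ∈ barrierCone (isometryOrbit G 0)) :
    -u ∈ barrierCone (isometryOrbit G 0) :=
  neg_mem_of_forall_fixed_neg_mem (linearPart.comp G.subtype)
    (fun φ _ => linearPart_mem_barrierCone_isometryOrbit φ.2)
    (fun _ hw hfix => neg_mem_barrierCone_of_forall_linearPart_eq hw
      fun φ hφ => hfix ⟨φ, hφ⟩) hu

theorem exists_ne_zero_mem_barrierCone_isometryOrbit (hG : ¬ HasCocompactAction G) :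
    ∃ u ∈ barrierCone (isometryOrbit G 0), u ≠ 0 :=
  have := FiniteDimensional.proper_real E
  exists_ne_zero_mem_barrierCone fun R => by
    simpa only [dist_eq_norm, sub_zero] using
      exists_le_dist_forall_isometryOrbit_dist_le_add_one hG 0 R

theorem preservesProperAffineSubspace_of_not_hasCocompactAction (hG : ¬ HasCocompactAction G) :
    PreservesProperAffineSubspace G := by
  let V : Submodule ℝ E := (barrierCone (isometryOrbit G 0)).lineal
  have mem_V {v : E} : v ∈ V ↔ v ∈ barrierCone (isometryOrbit G 0) :=
    PointedCone.mem_lineal.trans (and_iff_left_of_imp neg_mem_barrierCone_isometryOrbit)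
  have hV : ∀ φ ∈ G, ∀ v ∈ V, linearPart φ v ∈ V := fun φ hφ v hv =>
    mem_V.2 (linearPart_mem_barrierCone_isometryOrbit hφ (mem_V.1 hv))
  have hV₀ : V ≠ ⊥ := by
    obtain ⟨u, hu, hu₀⟩ := exists_ne_zero_mem_barrierCone_isometryOrbit hG
    exact (Submodule.ne_bot_iff V).2 ⟨u, mem_V.2 hu, hu₀⟩
  obtain ⟨x, hx⟩ := exists_forall_starProjection_apply_eq hV
    (isBounded_image_starProjection fun v => mem_V.1)
  exact preservesProperAffineSubspace_of_forall_starProjection_apply_eq hV₀ hV hx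

theorem closed_subgroup_isom_euclidean_tfae_general (G : Subgroup (E ≃ᵢ E)) :
    [IsCocompactSubgroup G, HasCocompactAction G, ¬ PreservesProperAffineSubspace G].TFAE := by
  have := FiniteDimensional.proper_real E
  tfae_have 1 → 2 := hasCocompactAction_of_isCocompactSubgroup
  tfae_have 2 → 1 := isCocompactSubgroup_of_hasCocompactAction
  tfae_have 2 → 3 := not_preservesProperAffineSubspace_of_hasCocompactAction
  tfae_have 3 → 2 := not_imp_comm.1 preservesProperAffineSubspace_of_not_hasCocompactAction
  tfae_finish

end Equivalence

/-- For a closed subgroup `G` of `Isom(ℝⁿ)`, the following are equivalent: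
(i) `G` is cocompact in `Isom(ℝⁿ)`;
(ii) the action of `G` on `ℝⁿ` is cocompact;
(iii) `G` preserves no proper nonempty affine subspace of `ℝⁿ`. -/
theorem closed_subgroup_isom_euclidean_tfae
    (n : ℕ) (G : Subgroup (EuclideanSpace ℝ (Fin n) ≃ᵢ EuclideanSpace ℝ (Fin n)))
    (hGclosed : IsClosed {f : C(EuclideanSpace ℝ (Fin n), EuclideanSpace ℝ (Fin n)) |
      ReprIn G f}) :
    -- (i) ↔ (ii) :
    ((∃ C : Set C(EuclideanSpace ℝ (Fin n), EuclideanSpace ℝ (Fin n)),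
        IsCompact C ∧
        (∀ f ∈ C, ∃ ψ : EuclideanSpace ℝ (Fin n) ≃ᵢ EuclideanSpace ℝ (Fin n),
          ∀ x, f x = ψ x) ∧
        (∀ ψ : EuclideanSpace ℝ (Fin n) ≃ᵢ EuclideanSpace ℝ (Fin n),
          ∃ f ∈ C, ∃ φ ∈ G, ∀ x, ψ x = f (φ x))) ↔
      (∃ L : Set (EuclideanSpace ℝ (Fin n)), IsCompact L ∧
        ∀ x : EuclideanSpace ℝ (Fin n), ∃ φ ∈ G, ∃ y ∈ L, φ y = x)) ∧
    -- (ii) ↔ (iii) :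
    ((∃ L : Set (EuclideanSpace ℝ (Fin n)), IsCompact L ∧
        ∀ x : EuclideanSpace ℝ (Fin n), ∃ φ ∈ G, ∃ y ∈ L, φ y = x) ↔
      ¬ ∃ A : AffineSubspace ℝ (EuclideanSpace ℝ (Fin n)),
          A ≠ ⊥ ∧ A ≠ ⊤ ∧ ∀ φ ∈ G, (fun x => φ x) '' (A : Set (EuclideanSpace ℝ (Fin n))) = A) :=
  have h := closed_subgroup_isom_euclidean_tfae_general G
  ⟨h.out 0 1, h.out 1 2⟩
end
end
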